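/- arXiv:math/0406353 — 4 statements merged into one kernel-verified Lean document; each statement's English description precedes it below -/
import Mathlib

section
/- There exists a universal constant c > 0 such that for every real ε with 0 < ε < 1 and every finite metric space (X,d) with n ≥ 1 points, there exists a subset Y ⊆ X with |Y| ≥ n^(c·ε/log(2/ε)) together with an ultrametric ρ on Y satisfying d(x,y) ≤ ρ(x,y) ≤ (2+ε)·d(x,y) for all x,y ∈ Y. -/
/-- `ρ` is an ultrametric on the subset `Y` of `X`. -/
def IsUltrametricOn {X : Type} (Y : Set X) (ρ : X → X → ℝ) : Prop :=
  (∀ x ∈ Y, ρ x x = 0) ∧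
  (∀ x ∈ Y, ∀ y ∈ Y, x ≠ y → 0 < ρ x y) ∧
  (∀ x ∈ Y, ∀ y ∈ Y, ρ x y = ρ y x) ∧
  (∀ x ∈ Y, ∀ y ∈ Y, ∀ z ∈ Y, ρ x z ≤ max (ρ x y) (ρ y z))

/-!
Fix radii `r i` decreasing geometrically to `0`. A set of diameter at most `2 * r i` is split by
repeatedly keeping the points in the ball of radius `r (i + M)` about some centre, discarding the
rest of the concentric ball of radius `r (i + 1)`, and continuing outside it. The kept clusters are
`r (i + 1) - r (i + M)` apart, so giving distinct clusters the distance `2 * r i` costs a factor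
close to `2` when `r (i + 1) / r i` is close to `1` and `M` is large. Averaging over the centres,
each point `x` of weight `w x` contributes `|B(x, r (i + M))| / |B(x, r (i + 1))| * w x` to the kept
weight. The number of points surviving all the scales `j, j + M, j + 2 * M, …` is therefore at least
the sum over `x` of a product of such ratios. For each `x`, multiplying these products over the `M`
phases `j` telescopes to at least `|X| ^ (1 - M)`, so by AM-GM some phase leaves at least
`|X| ^ (1 / M)` points.
-/

open Filter Finset Topology

section Products

lemma prod_range_prod_range_add_mul {α : Type*} [CommMonoid α] (f : ℕ → α) (M m : ℕ) :
    ∏ j ∈ range M, ∏ k ∈ range m, f (j + k * M) = ∏ i ∈ range (m * M), f i := by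
  induction m with
  | zero => simp
  | succ m ih =>
    simp_rw [prod_range_succ _ m, prod_mul_distrib, ih, Nat.succ_mul, prod_range_add, add_comm]

lemma one_le_prod_shift_div_mul_pow {g : ℕ → ℝ} {B : ℝ} (one_le : ∀ i, 1 ≤ g i)
    (le_bound : ∀ i, g i ≤ B) (K n : ℕ) :
    1 ≤ (∏ i ∈ range n, g (i + K) / g i) * B ^ K := by
  have g_nonneg (i : ℕ) : 0 ≤ g i := zero_le_one.trans (one_le i)
  have prod_ne_zero : ∏ i ∈ range n, g i ≠ 0 :=
    prod_ne_zero_iff.2 fun i _ ↦ (one_pos.trans_le (one_le i)).ne'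
  have telescope : (∏ i ∈ range n, g (i + K)) * ∏ i ∈ range K, g i =
      (∏ i ∈ range n, g i) * ∏ i ∈ range K, g (n + i) := by
    rw [← prod_range_add, add_comm n K, prod_range_add, mul_comm]
    simp_rw [add_comm K]
  have first_le : ∏ i ∈ range K, g i ≤ B ^ K := by
    simpa using prod_le_prod (fun i _ ↦ g_nonneg i) fun i (_ : i ∈ range K) ↦ le_bound i
  have one_le_last : 1 ≤ ∏ i ∈ range K, g (n + i) := by
    simpa using prod_le_prod (fun _ _ ↦ zero_le_one) fun i (_ : i ∈ range K) ↦ one_le (n + i)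
  calc 1 ≤ ∏ i ∈ range K, g (n + i) := one_le_last
    _ = (∏ i ∈ range n, g (i + K) / g i) * ∏ i ∈ range K, g i := by
        rw [prod_div_distrib, div_mul_eq_mul_div, telescope, mul_div_cancel_left₀ _ prod_ne_zero]
    _ ≤ (∏ i ∈ range n, g (i + K) / g i) * B ^ K := by
        gcongr
        exact prod_nonneg fun i _ ↦ div_nonneg (g_nonneg _) (g_nonneg _)

lemma mul_inv_pow_rpow_inv_add_one {a : ℝ} (ha : 0 < a) (K : ℕ) :
    a * (a ^ K)⁻¹ ^ (K + 1 : ℝ)⁻¹ = a ^ (1 / (K + 1) : ℝ) := by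
  have exponent : (1 / (K + 1) : ℝ) = 1 + -K * (K + 1 : ℝ)⁻¹ := by
    field_simp
    ring
  rw [exponent, Real.rpow_add ha, Real.rpow_one, Real.rpow_mul ha.le, Real.rpow_neg ha.le,
    Real.rpow_natCast]

lemma exists_card_mul_rpow_le_sum {ι α : Type*} [Fintype α] {s : Finset ι} (hs : s.Nonempty)
    {f : ι → α → ℝ} (f_nonneg : ∀ j ∈ s, ∀ x, 0 ≤ f j x) {a : ℝ} (ha : 0 ≤ a)
    (le_prod : ∀ x, a ≤ ∏ j ∈ s, f j x) :
    ∃ j ∈ s, Fintype.card α * a ^ (#s : ℝ)⁻¹ ≤ ∑ x, f j x := by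
  have card_pos : (0 : ℝ) < #s := by exact_mod_cast hs.card_pos
  have am_gm (x : α) : #s * a ^ (#s : ℝ)⁻¹ ≤ ∑ j ∈ s, f j x := by
    have h := Real.geom_mean_le_arith_mean s 1 (f · x) (by simp) (by simpa using hs)
      fun j hj ↦ f_nonneg j hj x
    simp only [Pi.one_apply, Real.rpow_one, one_mul, sum_const, nsmul_eq_mul, mul_one] at h
    rw [← le_div_iff₀' card_pos]
    exact (Real.rpow_le_rpow ha (le_prod x) (by positivity)).trans h
  refine exists_le_of_sum_le hs ?_
  calc ∑ _j ∈ s, Fintype.card α * a ^ (#s : ℝ)⁻¹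
      = ∑ _x : α, #s * a ^ (#s : ℝ)⁻¹ := by
        simp only [sum_const, nsmul_eq_mul, card_univ]; ring
    _ ≤ ∑ x, ∑ j ∈ s, f j x := sum_le_sum fun x _ ↦ am_gm x
    _ = ∑ j ∈ s, ∑ x, f j x := sum_comm

end Products

section PseudoMetric

open scoped Classical in
/-- The function equal to `ρ₁` on `A`, to `ρ₂` on the complement of `A`, and to `L` between a point
of `A` and a point outside. It combines ultrametrics on two separated sets. -/
noncomputable def glueWithConst {X : Type*} (A : Set X) (ρ₁ ρ₂ : X → X → ℝ) (L : ℝ) (x y : X) : ℝ :=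
  if x ∈ A then if y ∈ A then ρ₁ x y else L else if y ∈ A then L else ρ₂ x y

variable {X : Type*} [PseudoMetricSpace X]

lemma eventually_forall_dist_le_imp_dist_eq_zero [Finite X] {ι : Type*} {l : Filter ι} {u : ι → ℝ}
    (hu : Tendsto u l (𝓝 0)) : ∀ᶠ i in l, ∀ x y : X, dist x y ≤ u i → dist x y = 0 := by
  simp only [eventually_all]
  intro x y
  rcases (dist_nonneg : 0 ≤ dist x y).eq_or_lt with h | h
  · simp [← h]
  · filter_upwards [hu.eventually_lt_const h] with i hi hle using absurd hle hi.not_ge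

/-- `ρ` is `D`-equivalent to the distance on `Y` and satisfies there the axioms of an ultrametric.
The bounds `dist_le` and `le_mul_dist` make `ρ` vanish exactly where the distance does. -/
structure IsUltrametricApprox (Y : Set X) (ρ : X → X → ℝ) (D : ℝ) : Prop where
  symm : ∀ x ∈ Y, ∀ y ∈ Y, ρ x y = ρ y x
  le_max : ∀ x ∈ Y, ∀ y ∈ Y, ∀ z ∈ Y, ρ x z ≤ max (ρ x y) (ρ y z)
  dist_le : ∀ x ∈ Y, ∀ y ∈ Y, dist x y ≤ ρ x y
  le_mul_dist : ∀ x ∈ Y, ∀ y ∈ Y, ρ x y ≤ D * dist x y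

namespace IsUltrametricApprox

variable {Y Y₁ Y₂ : Set X} {ρ ρ₁ ρ₂ : X → X → ℝ} {D L : ℝ}

lemma self_eq_zero (h : IsUltrametricApprox Y ρ D) {x : X} (hx : x ∈ Y) : ρ x x = 0 :=
  le_antisymm (by simpa using h.le_mul_dist x hx x hx) (by simpa using h.dist_le x hx x hx)

lemma of_dist_eq_zero (h : ∀ x ∈ Y, ∀ y ∈ Y, dist x y = 0) :
    IsUltrametricApprox Y (fun _ _ ↦ 0) D where
  symm := by simp
  le_max := by simp
  dist_le x hx y hy := (h x hx y hy).le
  le_mul_dist x hx y hy := by simp [h x hx y hy]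

lemma min_const (h : IsUltrametricApprox Y ρ D) (hL : ∀ x ∈ Y, ∀ y ∈ Y, dist x y ≤ L) :
    IsUltrametricApprox Y (fun x y ↦ min (ρ x y) L) D where
  symm x hx y hy := by rw [h.symm x hx y hy]
  le_max x hx y hy z hz := by
    rw [← min_max_distrib_right]
    exact min_le_min_right L (h.le_max x hx y hy z hz)
  dist_le x hx y hy := le_min (h.dist_le x hx y hy) (hL x hx y hy)
  le_mul_dist x hx y hy := (min_le_left _ _).trans (h.le_mul_dist x hx y hy)

lemma union_glueWithConst (h₁ : IsUltrametricApprox Y₁ ρ₁ D) (h₂ : IsUltrametricApprox Y₂ ρ₂ D)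
    (disj : Disjoint Y₁ Y₂) (le₁ : ∀ x ∈ Y₁, ∀ y ∈ Y₁, ρ₁ x y ≤ L)
    (le₂ : ∀ x ∈ Y₂, ∀ y ∈ Y₂, ρ₂ x y ≤ L)
    (cross : ∀ x ∈ Y₁, ∀ y ∈ Y₂, dist x y ≤ L ∧ L ≤ D * dist x y) :
    IsUltrametricApprox (Y₁ ∪ Y₂) (glueWithConst Y₁ ρ₁ ρ₂ L) D := by
  have not_mem : ∀ x ∈ Y₂, x ∉ Y₁ := fun x hx₂ hx₁ ↦ disj.notMem_of_mem_left hx₁ hx₂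
  obtain ⟨symm₁, max₁, dist_le₁, le_mul₁⟩ := h₁
  obtain ⟨symm₂, max₂, dist_le₂, le_mul₂⟩ := h₂
  -- A triangle meeting both parts has two sides of length `L`, the largest value attained.
  constructor <;> grind [glueWithConst, dist_comm]

lemma exists_union (h₁ : IsUltrametricApprox Y₁ ρ₁ D) (h₂ : IsUltrametricApprox Y₂ ρ₂ D)
    (disj : Disjoint Y₁ Y₂) (hL : ∀ x ∈ Y₁ ∪ Y₂, ∀ y ∈ Y₁ ∪ Y₂, dist x y ≤ L)
    (cross : ∀ x ∈ Y₁, ∀ y ∈ Y₂, L ≤ D * dist x y) :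
    ∃ ρ, IsUltrametricApprox (Y₁ ∪ Y₂) ρ D :=
  ⟨_, (h₁.min_const fun x hx y hy ↦ hL x (.inl hx) y (.inl hy)).union_glueWithConst
    (h₂.min_const fun x hx y hy ↦ hL x (.inr hx) y (.inr hy)) disj
    (fun _ _ _ _ ↦ min_le_right _ _) (fun _ _ _ _ ↦ min_le_right _ _)
    fun x hx y hy ↦ ⟨hL x (.inl hx) y (.inr hy), cross x hx y hy⟩⟩

end IsUltrametricApprox

/-- Every finite set `S` of diameter at most `L` contains at least `∑ x ∈ S, w x` points on which
the distance is `D`-equivalent to an ultrametric. This is the property propagated from each scale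
to the next larger one. -/
def IsRamseyWeight (D L : ℝ) (w : X → ℝ) : Prop :=
  ∀ S : Finset X, (∀ x ∈ S, ∀ y ∈ S, dist x y ≤ L) →
    ∃ Y ⊆ S, ∃ ρ, IsUltrametricApprox (Y : Set X) ρ D ∧ ∑ x ∈ S, w x ≤ #Y

lemma isRamseyWeight_one {D L : ℝ} (h : ∀ x y : X, dist x y ≤ L → dist x y = 0) :
    IsRamseyWeight D L (1 : X → ℝ) := fun S hS ↦
  ⟨S, subset_rfl, _, .of_dist_eq_zero fun x hx y hy ↦ h x y (hS x hx y hy), by simp⟩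

variable [Fintype X]

/-- The number of points in the closed ball of radius `r` about `x`. -/
noncomputable def ballCard (r : ℝ) (x : X) : ℕ := #{y | dist x y ≤ r}

lemma ballCard_pos {r : ℝ} (hr : 0 ≤ r) (x : X) : 0 < ballCard r x :=
  card_pos.mpr ⟨x, by simpa using hr⟩

lemma ballCard_le_card (r : ℝ) (x : X) : ballCard r x ≤ Fintype.card X :=
  card_le_univ _

lemma sum_sum_dist_le_eq_sum_ballCard_mul {S C : Finset X} {r : ℝ}
    (hC : ∀ x ∈ S, ∀ c, dist x c ≤ r → c ∈ C) (f : X → ℝ) :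
    ∑ c ∈ C, ∑ x ∈ S with dist x c ≤ r, f x = ∑ x ∈ S, ballCard r x * f x := by
  rw [sum_comm' (s' := fun x ↦ ({c | dist x c ≤ r} : Finset X)) (t' := S) (by grind)]
  simp [ballCard]

lemma exists_center {S : Finset X} (hS : S.Nonempty) {r R : ℝ} (hR : 0 ≤ R) (hrR : r ≤ R)
    (w : X → ℝ) :
    ∃ c, (∃ x ∈ S, dist x c ≤ R) ∧
      ∑ x ∈ S with dist x c ≤ R, (ballCard r x / ballCard R x : ℝ) * w x ≤
        ∑ x ∈ S with dist x c ≤ r, w x := by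
  let C : Finset X := {c | ∃ x ∈ S, dist x c ≤ R}
  have hC : C.Nonempty := hS.imp fun x hx ↦ by simpa [C] using ⟨x, hx, by simpa using hR⟩
  suffices ∃ c ∈ C, _ by simpa [C] using this
  refine exists_le_of_sum_le hC (le_of_eq ?_)
  rw [sum_sum_dist_le_eq_sum_ballCard_mul (by grind),
    sum_sum_dist_le_eq_sum_ballCard_mul (by grind)]
  refine sum_congr rfl fun x _ ↦ ?_
  have : (ballCard R x : ℝ) ≠ 0 := by exact_mod_cast (ballCard_pos hR x).ne'
  field_simp

lemma IsRamseyWeight.ballCard_div_mul {D L r R : ℝ} {w : X → ℝ} (hw : IsRamseyWeight D (2 * r) w)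
    (hD : 0 ≤ D) (hR : 0 ≤ R) (hrR : r ≤ R) (hL : L ≤ D * (R - r)) :
    IsRamseyWeight D L fun x ↦ (ballCard r x / ballCard R x : ℝ) * w x := by
  classical
  intro S
  induction S using Finset.strongInduction with
  | H S ih =>
  intro diam_le
  rcases S.eq_empty_or_nonempty with rfl | hne
  · exact ⟨∅, subset_rfl, 0, .of_dist_eq_zero (by simp), by simp⟩
  obtain ⟨c, ⟨x₀, hx₀, hx₀c⟩, hc⟩ := exists_center hne hR hrR w
  obtain ⟨Y₁, hY₁, ρ₁, approx₁, card₁⟩ := hw {x ∈ S | dist x c ≤ r} fun x hx y hy ↦ by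
    linarith [dist_triangle_right x y c, (mem_filter.1 hx).2, (mem_filter.1 hy).2]
  obtain ⟨Y₂, hY₂, ρ₂, approx₂, card₂⟩ := ih {x ∈ S | ¬ dist x c ≤ R}
    (filter_ssubset.2 ⟨x₀, hx₀, not_not.2 hx₀c⟩) (by grind)
  have near : ∀ x ∈ Y₁, x ∈ S ∧ dist x c ≤ r := fun x hx ↦ mem_filter.1 (hY₁ hx)
  have far : ∀ x ∈ Y₂, x ∈ S ∧ ¬ dist x c ≤ R := fun x hx ↦ mem_filter.1 (hY₂ hx)
  have disj : Disjoint Y₁ Y₂ :=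
    disjoint_left.2 fun x h₁ h₂ ↦ (far x h₂).2 ((near x h₁).2.trans hrR)
  have separated : ∀ x ∈ Y₁, ∀ y ∈ Y₂, L ≤ D * dist x y := fun x hx y hy ↦ hL.trans <| by
    gcongr
    linarith [dist_triangle_left y c x, (near x hx).2, (far y hy).2]
  obtain ⟨ρ, approx⟩ := approx₁.exists_union approx₂ (disjoint_coe.2 disj)
    (by grind) separated
  refine ⟨Y₁ ∪ Y₂, by grind, ρ, by simpa using approx, ?_⟩
  rw [card_union_of_disjoint disj, ← sum_filter_add_sum_filter_not S (dist · c ≤ R), Nat.cast_add]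
  exact add_le_add (hc.trans card₁) card₂

lemma isRamseyWeight_prod_ballCard_div {D : ℝ} (hD : 0 ≤ D) {s t : ℕ → ℝ} (ht : ∀ k, 0 ≤ t k)
    (hst : ∀ k, s (k + 1) ≤ t k) (hsep : ∀ k, 2 * s k ≤ D * (t k - s (k + 1))) {m : ℕ}
    (hm : ∀ x y : X, dist x y ≤ 2 * s m → dist x y = 0) :
    IsRamseyWeight D (2 * s 0) fun x : X ↦
      ∏ k ∈ range m, (ballCard (s (k + 1)) x / ballCard (t k) x : ℝ) := by
  induction m generalizing s t with
  | zero => simpa [Pi.one_def] using isRamseyWeight_one hm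
  | succ m ih =>
    simp_rw [prod_range_succ', mul_comm _ ((ballCard _ _ : ℝ) / _)]
    exact (ih (s := fun k ↦ s (k + 1)) (t := fun k ↦ t (k + 1)) (fun k ↦ ht _) (fun k ↦ hst _)
      (fun k ↦ hsep _) hm).ballCard_div_mul hD (ht 0) (hst 0) (hsep 0)

lemma exists_rpow_card_le_sum_prod_ballCard_div [Nonempty X] {r : ℕ → ℝ} (hr : ∀ i, 0 ≤ r i)
    (K m : ℕ) :
    ∃ j ≤ K, (Fintype.card X : ℝ) ^ (1 / (K + 1) : ℝ) ≤ ∑ x : X, ∏ k ∈ range m,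
      (ballCard (r (j + (k + 1) * (K + 1))) x / ballCard (r (j + k * (K + 1) + 1)) x : ℝ) := by
  have card_pos : (0 : ℝ) < Fintype.card X := by exact_mod_cast Fintype.card_pos
  let f (i : ℕ) (x : X) : ℝ := ballCard (r (i + K + 1)) x / ballCard (r (i + 1)) x
  have le_prod (x : X) : ((Fintype.card X : ℝ) ^ K)⁻¹ ≤
      ∏ j ∈ range (K + 1), ∏ k ∈ range m, f (j + k * (K + 1)) x := by
    rw [prod_range_prod_range_add_mul (f · x), inv_le_iff_one_le_mul₀ (by positivity)]
    exact one_le_prod_shift_div_mul_pow (g := fun i ↦ ballCard (r (i + 1)) x)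
      (fun i ↦ by exact_mod_cast ballCard_pos (hr _) x)
      (fun i ↦ by exact_mod_cast ballCard_le_card _ x) K _
  obtain ⟨j, hj, hsum⟩ := exists_card_mul_rpow_le_sum nonempty_range_add_one
    (fun j _ x ↦ prod_nonneg fun k _ ↦ by positivity) (by positivity) le_prod
  refine ⟨j, by grind, ?_⟩
  rw [card_range, Nat.cast_add_one, mul_inv_pow_rpow_inv_add_one card_pos] at hsum
  simpa only [f, add_one_mul, add_assoc] using hsum

theorem exists_isUltrametricApprox_of_radii [Nonempty X] {D : ℝ} (hD : 0 ≤ D) {r : ℕ → ℝ}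
    (hanti : Antitone r) (hlim : Tendsto r atTop (𝓝 0)) {K : ℕ}
    (hsep : ∀ i, 2 * r i ≤ D * (r (i + 1) - r (i + (K + 1))))
    (hdiam : ∀ x y : X, dist x y ≤ 2 * r K) :
    ∃ (Y : Finset X) (ρ : X → X → ℝ), IsUltrametricApprox (Y : Set X) ρ D ∧
      (Fintype.card X : ℝ) ^ (1 / (K + 1) : ℝ) ≤ #Y := by
  have hr : ∀ i, 0 ≤ r i := hanti.le_of_tendsto hlim
  obtain ⟨m, hm⟩ : ∃ m, ∀ x y : X, dist x y ≤ 2 * r m → dist x y = 0 :=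
    (eventually_forall_dist_le_imp_dist_eq_zero (by simpa using hlim.const_mul 2)).exists
  obtain ⟨j, hj, hsum⟩ := exists_rpow_card_le_sum_prod_ballCard_div (X := X) hr K m
  have weight := isRamseyWeight_prod_ballCard_div (X := X) hD (s := fun k ↦ r (j + k * (K + 1)))
    (t := fun k ↦ r (j + k * (K + 1) + 1)) (m := m) (fun k ↦ hr _) (fun k ↦ hanti (by grind))
    (fun k ↦ by convert hsep (j + k * (K + 1)) using 4; ring)
    (fun x y h ↦ hm x y (h.trans (by gcongr; exact hanti (by grind))))
  obtain ⟨Y, -, ρ, approx, card_le⟩ := weight univ fun x _ y _ ↦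
    (hdiam x y).trans (by gcongr; exact hanti (by simpa using hj))
  exact ⟨Y, ρ, approx, hsum.trans card_le⟩

theorem exists_isUltrametricApprox_of_ratio [Nonempty X] {D l : ℝ} (hl₀ : 0 < l) (hl₁ : l < 1)
    {K : ℕ} (hsep : 2 ≤ D * (l - l ^ (K + 1))) :
    ∃ (Y : Finset X) (ρ : X → X → ℝ), IsUltrametricApprox (Y : Set X) ρ D ∧
      (Fintype.card X : ℝ) ^ (1 / (K + 1) : ℝ) ≤ #Y := by
  have gap_nonneg : 0 ≤ l - l ^ (K + 1) :=
    sub_nonneg.2 (pow_le_of_le_one hl₀.le hl₁.le K.succ_ne_zero)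
  have hD : 0 ≤ D := (pos_of_mul_pos_left (two_pos.trans_le hsep) gap_nonneg).le
  set A : ℝ := Metric.diam (Set.univ : Set X) / l ^ K
  have hA : 0 ≤ A := div_nonneg Metric.diam_nonneg (by positivity)
  have hAK : A * l ^ K = Metric.diam (Set.univ : Set X) := div_mul_cancel₀ _ (by positivity)
  refine exists_isUltrametricApprox_of_radii hD (r := fun i ↦ A * l ^ i) ?_ ?_ (fun i ↦ ?_) ?_
  · exact fun i j hij ↦ mul_le_mul_of_nonneg_left (pow_le_pow_of_le_one hl₀.le hl₁.le hij) hA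
  · simpa using (tendsto_pow_atTop_nhds_zero_of_lt_one hl₀.le hl₁).const_mul A
  · calc 2 * (A * l ^ i) ≤ D * (l - l ^ (K + 1)) * (A * l ^ i) := by gcongr
      _ = D * (A * l ^ (i + 1) - A * l ^ (i + (K + 1))) := by ring
  · intro x y
    have := Metric.dist_le_diam_of_mem Set.finite_univ.isBounded (Set.mem_univ x) (Set.mem_univ y)
    rw [hAK]
    linarith [dist_nonneg (x := x) (y := y)]

end PseudoMetric

lemma IsUltrametricApprox.isUltrametricOn {X : Type} [MetricSpace X] {Y : Set X} {ρ : X → X → ℝ}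
    {D : ℝ} (h : IsUltrametricApprox Y ρ D) : IsUltrametricOn Y ρ :=
  ⟨fun _ hx ↦ h.self_eq_zero hx,
    fun x hx y hy hne ↦ (dist_pos.2 hne).trans_le (h.dist_le x hx y hy), h.symm, h.le_max⟩

section Parameters

lemma exists_one_sub_pow_succ_le {δ : ℝ} (hδ₀ : 0 < δ) (hδ₁ : δ < 1) :
    ∃ K : ℕ, (1 - δ) ^ (K + 1) ≤ δ ∧ (K + 1 : ℝ) ≤ Real.log δ⁻¹ / δ + 1 := by
  set q := Real.log δ⁻¹ / δ
  have hq : 0 ≤ q := div_nonneg (Real.log_nonneg (one_le_inv₀ hδ₀ |>.2 hδ₁.le)) hδ₀.le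
  refine ⟨⌊q⌋₊, ?_, by gcongr; exact Nat.floor_le hq⟩
  calc (1 - δ) ^ (⌊q⌋₊ + 1) ≤ Real.exp (-δ) ^ (⌊q⌋₊ + 1) :=
        pow_le_pow_left₀ (by linarith) (Real.one_sub_le_exp_neg δ) _
    _ = Real.exp (-((⌊q⌋₊ + 1 : ℝ) * δ)) := by
        rw [← Real.exp_nat_mul]; push_cast; ring_nf
    _ ≤ Real.exp (-(q * δ)) := by gcongr; exact (Nat.lt_floor_add_one q).le
    _ = δ := by
        rw [div_mul_cancel₀ _ hδ₀.ne', Real.log_inv, neg_neg, Real.exp_log hδ₀]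

lemma log_inv_div_eight_le {ε : ℝ} (h₀ : 0 < ε) (h₁ : ε < 1) :
    Real.log (ε / 8)⁻¹ / (ε / 8) + 1 ≤ 26 * Real.log (2 / ε) / ε := by
  have log_two : 1 / 2 < Real.log 2 := by linarith [Real.log_two_gt_d9]
  have log_ε : Real.log ε ≤ 0 := Real.log_nonpos h₀.le h₁.le
  have log_two_div : Real.log (2 / ε) = Real.log 2 - Real.log ε :=
    Real.log_div two_ne_zero h₀.ne'
  have log_inv : Real.log (ε / 8)⁻¹ = 3 * Real.log 2 - Real.log ε := by
    rw [inv_div, Real.log_div (by simp) h₀.ne', show (8 : ℝ) = 2 ^ 3 by norm_num, Real.log_pow]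
    norm_num
  rw [le_div_iff₀ h₀, log_inv, log_two_div]
  field_simp
  linarith

lemma exists_ratio_parameter {ε : ℝ} (h₀ : 0 < ε) (h₁ : ε < 1) :
    ∃ K : ℕ, 2 ≤ (2 + ε) * ((1 - ε / 8) - (1 - ε / 8) ^ (K + 1)) ∧
      1 / 26 * ε / Real.log (2 / ε) ≤ 1 / (K + 1) := by
  obtain ⟨K, pow_le, K_le⟩ := exists_one_sub_pow_succ_le (δ := ε / 8) (by linarith) (by linarith)
  refine ⟨K, ?_, ?_⟩
  · calc (2 : ℝ) ≤ (2 + ε) * (1 - ε / 8 - ε / 8) := by nlinarith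
      _ ≤ (2 + ε) * ((1 - ε / 8) - (1 - ε / 8) ^ (K + 1)) := by gcongr
  · calc 1 / 26 * ε / Real.log (2 / ε) = 1 / (26 * Real.log (2 / ε) / ε) := by field_simp
      _ ≤ 1 / (K + 1) :=
        one_div_le_one_div_of_le (by positivity) (K_le.trans (log_inv_div_eight_le h₀ h₁))

end Parameters

theorem metric_ramsey_two_plus_eps_general {ε : ℝ} (h₀ : 0 < ε) (h₁ : ε < 1) (X : Type*)
    [PseudoMetricSpace X] [Fintype X] [Nonempty X] :
    ∃ (Y : Finset X) (ρ : X → X → ℝ), IsUltrametricApprox (Y : Set X) ρ (2 + ε) ∧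
      (Fintype.card X : ℝ) ^ (1 / 26 * ε / Real.log (2 / ε)) ≤ #Y := by
  obtain ⟨K, hsep, exponent_le⟩ := exists_ratio_parameter h₀ h₁
  obtain ⟨Y, ρ, approx, card_le⟩ :=
    exists_isUltrametricApprox_of_ratio (X := X) (by linarith) (by linarith) hsep
  refine ⟨Y, ρ, approx, le_trans ?_ card_le⟩
  exact Real.rpow_le_rpow_of_exponent_le (by exact_mod_cast Fintype.card_pos) exponent_le

/-- Metric Ramsey theorem for distortions arbitrarily close to 2: every `n`-point
metric space contains a subset of size at least `n^(c·ε/log(2/ε))` which is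
`(2+ε)`-equivalent to an ultrametric. -/
theorem metric_ramsey_two_plus_eps :
    ∃ c : ℝ, 0 < c ∧
      ∀ (ε : ℝ), 0 < ε → ε < 1 →
        ∀ (X : Type) [MetricSpace X] [Fintype X], 1 ≤ Fintype.card X →
          ∃ (Y : Finset X) (ρ : X → X → ℝ),
            (Fintype.card X : ℝ) ^ (c * ε / Real.log (2 / ε)) ≤ (Y.card : ℝ) ∧
            IsUltrametricOn (↑Y) ρ ∧
            ∀ x ∈ Y, ∀ y ∈ Y,
              dist x y ≤ ρ x y ∧ ρ x y ≤ (2 + ε) * dist x y := by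
  refine ⟨1 / 26, by norm_num, fun ε h₀ h₁ X _ _ hX ↦ ?_⟩
  have : Nonempty X := Fintype.card_pos_iff.1 hX
  obtain ⟨Y, ρ, approx, card_le⟩ := metric_ramsey_two_plus_eps_general h₀ h₁ X
  exact ⟨Y, ρ, card_le, approx.isUltrametricOn, fun x hx y hy ↦
    ⟨approx.dist_le x hx y hy, approx.le_mul_dist x hx y hy⟩⟩
end

section
/- There exist universal constants c, C > 0 such that for every real α > 2 and every integer n ≥ 1, there exists a metric space X on n points with the property that every subset Y ⊆ X admitting an α-embedding into ℓ₂ satisfies |Y| ≤ C·n^(1 − c/α). -/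
/-- `d` is a metric on `X`. -/
def IsMetricOn {X : Type} (d : X → X → ℝ) : Prop :=
  (∀ x, d x x = 0) ∧ (∀ x y, x ≠ y → 0 < d x y) ∧
  (∀ x y, d x y = d y x) ∧ (∀ x y z, d x z ≤ d x y + d y z)

/-!
The `N = 2 ^ k` points are the vectors of `𝔽₂ ^ k` with the word metric of `8 * k` random
generators: the Cayley graph is an expander, while a ball of radius `k / 24` has at most `√N`
points.

Let `Y` be much larger than `N ^ (1 - c / α)` and let `t ≈ k / (96 * α)`. The kernel of the
`t`-step lazy walk, restricted to a subset `Z ⊆ Y` of maximal average degree, has minimal degree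
at least half its average degree. It also has a spectral gap, because the nontrivial eigenvalues
of the walk are at most `(3 / 4) ^ t`, which is small compared with the density of `Y`. The
resulting Poincaré inequality shows that an `α`-embedding of `Y` with scale `σ` maps typical pairs
in `Z` to distance `≲ α * σ * t`, whereas by the ball bound typical pairs are at word distance at
least `k / 24`, hence are mapped to distance at least `σ * k / 24`.
-/

open Finset

namespace MetricRamsey

/-- The vector space `𝔽₂ ^ ι`, which carries the Cayley graphs used as metric spaces. -/
abbrev BinaryCube (ι : Type*) : Type _ := ι → ZMod 2

section Walsh

variable {ι : Type*} [Fintype ι]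

/-- The Walsh character `x ↦ (-1) ^ (u ⬝ᵥ x)`. These are all the characters of `𝔽₂ ^ ι`, and being
real-valued they act on functions with values in a real Hilbert space. -/
noncomputable def walsh (u : BinaryCube ι) : AddChar (BinaryCube ι) ℝ :=
  (AddChar.zmodChar 2 (neg_one_sq (R := ℝ))).compAddMonoidHom
    (AddMonoidHom.mk' (u ⬝ᵥ ·) (dotProduct_add u))

lemma walsh_apply (u x : BinaryCube ι) : walsh u x = (-1) ^ (u ⬝ᵥ x).val :=
  rfl

lemma walsh_comm (u x : BinaryCube ι) : walsh u x = walsh x u := by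
  rw [walsh_apply, walsh_apply, dotProduct_comm]

lemma walsh_zero : walsh (0 : BinaryCube ι) = 0 := by
  ext x
  simp [walsh_apply]

lemma walsh_eq_one_or_neg_one (u x : BinaryCube ι) : walsh u x = 1 ∨ walsh u x = -1 :=
  neg_one_pow_eq_or ℝ _

lemma walsh_sub (u x y : BinaryCube ι) : walsh u (x - y) = walsh u x * walsh u y := by
  rw [ZModModule.sub_eq_add, AddChar.map_add_eq_mul]

lemma walsh_ne_zero {u : BinaryCube ι} (hu : u ≠ 0) : walsh u ≠ 0 := by
  classical
  obtain ⟨i, hi⟩ := Function.ne_iff.mp hu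
  have hone : u i = 1 := Fin.eq_one_of_ne_zero _ hi
  refine AddChar.ne_zero_iff.mpr ⟨Pi.single i 1, ?_⟩
  norm_num [walsh_apply, hone, ZMod.val_one]

variable [DecidableEq ι]

lemma sum_walsh_eq_zero {u : BinaryCube ι} (hu : u ≠ 0) : ∑ x, walsh u x = 0 :=
  AddChar.sum_eq_zero_iff_ne_zero.mpr (walsh_ne_zero hu)

lemma card_binaryCube : Fintype.card (BinaryCube ι) = 2 ^ Fintype.card ι := by
  rw [Fintype.card_fun, ZMod.card]

lemma sum_walsh_apply (x : BinaryCube ι) :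
    ∑ u, walsh u x = if x = 0 then (2 : ℝ) ^ Fintype.card ι else 0 := by
  simp_rw [walsh_comm _ x]
  split_ifs with hx
  · simp [hx, walsh_zero]
  · exact sum_walsh_eq_zero hx

variable {H : Type*} [NormedAddCommGroup H] [InnerProductSpace ℝ H]

lemma sum_multiplier_mul_inner (a : BinaryCube ι → ℝ) (Z : Finset (BinaryCube ι))
    (g : BinaryCube ι → H) :
    ∑ x ∈ Z, ∑ y ∈ Z, (∑ u, a u * walsh u (x - y)) * inner ℝ (g x) (g y) =
      ∑ u, a u * ‖∑ x ∈ Z, walsh u x • g x‖ ^ 2 := by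
  have norm_sq (u : BinaryCube ι) : ‖∑ x ∈ Z, walsh u x • g x‖ ^ 2 =
      ∑ x ∈ Z, ∑ y ∈ Z, walsh u (x - y) * inner ℝ (g x) (g y) := by
    simp only [← real_inner_self_eq_norm_sq, inner_sum, sum_inner, real_inner_smul_left,
      real_inner_smul_right, walsh_sub, mul_assoc]
    rw [sum_comm]
    simp only [mul_left_comm]
  simp_rw [norm_sq, sum_mul, mul_sum, mul_assoc]
  exact (sum_congr rfl fun x _ => sum_comm).trans sum_comm

lemma sum_norm_sum_walsh_smul_sq (Z : Finset (BinaryCube ι)) (g : BinaryCube ι → H) :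
    ∑ u, ‖∑ x ∈ Z, walsh u x • g x‖ ^ 2 = 2 ^ Fintype.card ι * ∑ x ∈ Z, ‖g x‖ ^ 2 := by
  have := sum_multiplier_mul_inner 1 Z g
  simp only [Pi.one_apply, one_mul, sum_walsh_apply, sub_eq_zero] at this
  rw [← this, mul_sum]
  refine sum_congr rfl fun x hx => ?_
  simp [hx]

end Walsh

section Walk

variable {ι κ : Type*} [Fintype ι] [Fintype κ]

/-- The distribution at time `t` of the walk on `𝔽₂ ^ ι` started at `0` that at each step stays put
with probability `1 / 2` and otherwise adds a uniformly chosen generator `s i`. Laziness makes the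
eigenvalues nonnegative. -/
noncomputable def lazyWalk (s : κ → BinaryCube ι) : ℕ → BinaryCube ι → ℝ
  | 0, v => if v = 0 then 1 else 0
  | t + 1, v => (∑ i, (lazyWalk s t v + lazyWalk s t (v - s i)) / 2) / Fintype.card κ

/-- The eigenvalue of one step of `lazyWalk s` at the character `walsh u`. -/
noncomputable def lazyWalkEigenvalue (s : κ → BinaryCube ι) (u : BinaryCube ι) : ℝ :=
  (∑ i, (1 + walsh u (s i)) / 2) / Fintype.card κ

lemma lazyWalk_nonneg (s : κ → BinaryCube ι) (t : ℕ) (v : BinaryCube ι) : 0 ≤ lazyWalk s t v := by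
  induction t generalizing v with
  | zero => unfold lazyWalk; positivity
  | succ t ih =>
    exact div_nonneg (sum_nonneg fun i _ => div_nonneg (add_nonneg (ih _) (ih _)) zero_le_two)
      (Nat.cast_nonneg _)

lemma lazyWalk_neg (s : κ → BinaryCube ι) (t : ℕ) (v : BinaryCube ι) :
    lazyWalk s t (-v) = lazyWalk s t v := by
  rw [ZModModule.neg_eq_self]

lemma lazyWalkEigenvalue_nonneg (s : κ → BinaryCube ι) (u : BinaryCube ι) :
    0 ≤ lazyWalkEigenvalue s u := by
  refine div_nonneg (sum_nonneg fun i _ => ?_) (Nat.cast_nonneg _)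
  rcases walsh_eq_one_or_neg_one u (s i) with h | h <;> norm_num [h]

lemma lazyWalkEigenvalue_zero [Nonempty κ] (s : κ → BinaryCube ι) :
    lazyWalkEigenvalue s 0 = 1 := by
  simp [lazyWalkEigenvalue, walsh_zero, one_add_one_eq_two]

lemma lazyWalk_eq_sum_walsh [DecidableEq ι] (s : κ → BinaryCube ι) (t : ℕ) (v : BinaryCube ι) :
    lazyWalk s t v =
      ∑ u, lazyWalkEigenvalue s u ^ t / 2 ^ Fintype.card ι * walsh u v := by
  induction t generalizing v with
  | zero =>
    simp only [lazyWalk, pow_zero, ← mul_sum, sum_walsh_apply]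
    split_ifs <;> simp
  | succ t ih =>
    have step (i : κ) : (lazyWalk s t v + lazyWalk s t (v - s i)) / 2 =
        ∑ u, lazyWalkEigenvalue s u ^ t / 2 ^ Fintype.card ι * walsh u v *
          ((1 + walsh u (s i)) / 2) := by
      rw [ih, ih, ← sum_add_distrib, sum_div]
      refine sum_congr rfl fun u _ => ?_
      rw [walsh_sub]
      ring
    simp only [lazyWalk, step]
    rw [sum_comm, sum_div]
    refine sum_congr rfl fun u _ => ?_
    rw [← mul_sum, pow_succ, mul_div_assoc, ← lazyWalkEigenvalue]
    ring

variable {H : Type*} [NormedAddCommGroup H] [InnerProductSpace ℝ H]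

lemma sum_lazyWalk_mul_inner [DecidableEq ι] (s : κ → BinaryCube ι) (t : ℕ)
    (Z : Finset (BinaryCube ι)) (g : BinaryCube ι → H) :
    ∑ x ∈ Z, ∑ y ∈ Z, lazyWalk s t (x - y) * inner ℝ (g x) (g y) =
      (∑ u, lazyWalkEigenvalue s u ^ t * ‖∑ x ∈ Z, walsh u x • g x‖ ^ 2) / 2 ^ Fintype.card ι := by
  simp_rw [lazyWalk_eq_sum_walsh, sum_multiplier_mul_inner, sum_div, div_mul_eq_mul_div]

lemma norm_sum_sq_div_le_sum_lazyWalk_mul_inner [Nonempty κ] (s : κ → BinaryCube ι) (t : ℕ)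
    (Z : Finset (BinaryCube ι)) (g : BinaryCube ι → H) :
    ‖∑ x ∈ Z, g x‖ ^ 2 / 2 ^ Fintype.card ι ≤
      ∑ x ∈ Z, ∑ y ∈ Z, lazyWalk s t (x - y) * inner ℝ (g x) (g y) := by
  classical
  rw [sum_lazyWalk_mul_inner]
  gcongr
  have zero_term := single_le_sum
    (f := fun u => lazyWalkEigenvalue s u ^ t * ‖∑ x ∈ Z, walsh u x • g x‖ ^ 2)
    (fun u _ => mul_nonneg (pow_nonneg (lazyWalkEigenvalue_nonneg s u) t) (sq_nonneg _))
    (mem_univ 0)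
  simpa [lazyWalkEigenvalue_zero, walsh_zero] using zero_term

lemma sum_lazyWalk_mul_inner_le [Nonempty κ] {s : κ → BinaryCube ι} {q : ℝ} (hq : 0 ≤ q)
    (hs : ∀ u ≠ 0, lazyWalkEigenvalue s u ≤ q) (t : ℕ) (Z : Finset (BinaryCube ι))
    (g : BinaryCube ι → H) :
    ∑ x ∈ Z, ∑ y ∈ Z, lazyWalk s t (x - y) * inner ℝ (g x) (g y) ≤
      ‖∑ x ∈ Z, g x‖ ^ 2 / 2 ^ Fintype.card ι + q ^ t * ∑ x ∈ Z, ‖g x‖ ^ 2 := by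
  classical
  set F : BinaryCube ι → ℝ := fun u => ‖∑ x ∈ Z, walsh u x • g x‖ ^ 2 with hF
  have F_zero : F 0 = ‖∑ x ∈ Z, g x‖ ^ 2 := by simp [hF, walsh_zero]
  have parseval : ∑ x ∈ Z, ‖g x‖ ^ 2 = (∑ u, F u) / 2 ^ Fintype.card ι := by
    rw [sum_norm_sum_walsh_smul_sq, mul_div_cancel_left₀ _ (by positivity)]
  rw [sum_lazyWalk_mul_inner, parseval, ← mul_div_assoc, ← add_div, ← F_zero]
  gcongr
  calc ∑ u, lazyWalkEigenvalue s u ^ t * F u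
      = F 0 + ∑ u ∈ univ.erase 0, lazyWalkEigenvalue s u ^ t * F u := by
        rw [← add_sum_erase _ _ (mem_univ 0), lazyWalkEigenvalue_zero, one_pow, one_mul]
    _ ≤ F 0 + ∑ u ∈ univ.erase 0, q ^ t * F u := by
        gcongr with u hu
        · exact lazyWalkEigenvalue_nonneg s u
        · exact hs u (ne_of_mem_erase hu)
    _ ≤ F 0 + q ^ t * ∑ u, F u := by
        rw [mul_sum]
        gcongr
        exact erase_subset _ _

end Walk

section WeightedGraph

variable {X : Type*} {K : X → X → ℝ}

/-- The average degree of the subgraph induced on `Z` by the weighted graph with edge weights `K`;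
it is `0` for empty `Z`. -/
noncomputable def averageDegree (K : X → X → ℝ) (Z : Finset X) : ℝ :=
  (∑ x ∈ Z, ∑ y ∈ Z, K x y) / #Z

lemma averageDegree_mul_card (K : X → X → ℝ) (Z : Finset X) :
    averageDegree K Z * #Z = ∑ x ∈ Z, ∑ y ∈ Z, K x y := by
  rcases Z.eq_empty_or_nonempty with rfl | hZ
  · simp
  · exact div_mul_cancel₀ _ (by exact_mod_cast hZ.card_ne_zero)

lemma sum_sum_eq_sum_sum_erase_add [DecidableEq X] (hsymm : ∀ x y, K x y = K y x)
    {Z : Finset X} {x : X} (hx : x ∈ Z) :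
    ∑ a ∈ Z, ∑ b ∈ Z, K a b =
      ∑ a ∈ Z.erase x, ∑ b ∈ Z.erase x, K a b + 2 * ∑ b ∈ Z, K x b - K x x := by
  have row (a : X) : ∑ b ∈ Z, K a b = K x a + ∑ b ∈ Z.erase x, K a b := by
    rw [← add_sum_erase Z _ hx, hsymm a x]
  rw [← add_sum_erase Z _ hx, sum_congr rfl fun a (_ : a ∈ Z.erase x) => row a, sum_add_distrib]
  linarith [row x]

lemma averageDegree_le_two_mul_sum [DecidableEq X] (hsymm : ∀ x y, K x y = K y x)
    {Z : Finset X} {x : X} (hx : x ∈ Z) (hxx : 0 ≤ K x x)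
    (herase : averageDegree K (Z.erase x) ≤ averageDegree K Z) :
    averageDegree K Z ≤ 2 * ∑ y ∈ Z, K x y := by
  have card_erase : (#(Z.erase x) : ℝ) = #Z - 1 := by
    rw [card_erase_of_mem hx, Nat.cast_sub (card_pos.mpr ⟨x, hx⟩), Nat.cast_one]
  have mass_erase : ∑ a ∈ Z.erase x, ∑ b ∈ Z.erase x, K a b ≤ averageDegree K Z * (#Z - 1) := by
    rw [← averageDegree_mul_card, ← card_erase]
    gcongr
  linarith [averageDegree_mul_card K Z, sum_sum_eq_sum_sum_erase_add hsymm hx]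

/-- Maximizing the average degree forces the minimal degree to be at least half of it, as otherwise
deleting a vertex would increase the average. -/
lemma exists_subset_averageDegree_le_two_mul_sum (hsymm : ∀ x y, K x y = K y x)
    (hdiag : ∀ x, 0 ≤ K x x) (Y : Finset X) :
    ∃ Z ⊆ Y, averageDegree K Y ≤ averageDegree K Z ∧
      ∀ x ∈ Z, averageDegree K Z ≤ 2 * ∑ y ∈ Z, K x y := by
  classical
  obtain ⟨Z, hZ, hmax⟩ := exists_max_image Y.powerset (averageDegree K) (powerset_nonempty Y)
  rw [mem_powerset] at hZ
  exact ⟨Z, hZ, hmax Y (mem_powerset_self Y), fun x hx =>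
    averageDegree_le_two_mul_sum hsymm hx (hdiag x)
      (hmax _ (mem_powerset.mpr ((erase_subset x Z).trans hZ)))⟩

lemma mul_card_sq_le_sum_sum_sq {Z : Finset X} {D : X → X → ℝ} {R : ℝ} (hR : 0 ≤ R)
    (hsparse : ∀ x ∈ Z, 2 * #{y ∈ Z | D x y < R} ≤ #Z) :
    R ^ 2 / 2 * (#Z : ℝ) ^ 2 ≤ ∑ x ∈ Z, ∑ y ∈ Z, D x y ^ 2 := by
  have row (x : X) (hx : x ∈ Z) : #Z / 2 * R ^ 2 ≤ ∑ y ∈ Z, D x y ^ 2 := by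
    have half_far : (#Z : ℝ) / 2 ≤ #{y ∈ Z | ¬D x y < R} := by
      have split : (#{y ∈ Z | D x y < R} + #{y ∈ Z | ¬D x y < R} : ℝ) = #Z := by
        exact_mod_cast card_filter_add_card_filter_not _
      have near : (2 * #{y ∈ Z | D x y < R} : ℝ) ≤ #Z := by exact_mod_cast hsparse x hx
      linarith
    calc #Z / 2 * R ^ 2 ≤ #{y ∈ Z | ¬D x y < R} * R ^ 2 := by gcongr
      _ ≤ ∑ y ∈ Z with ¬D x y < R, D x y ^ 2 := by
        rw [← nsmul_eq_mul]
        refine card_nsmul_le_sum _ _ _ fun y hy => ?_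
        have far := not_lt.mp (mem_filter.mp hy).2
        gcongr
      _ ≤ ∑ y ∈ Z, D x y ^ 2 :=
        sum_le_sum_of_subset_of_nonneg (filter_subset _ _) fun _ _ _ => sq_nonneg _
  calc R ^ 2 / 2 * (#Z : ℝ) ^ 2 = #Z • (#Z / 2 * R ^ 2) := by rw [nsmul_eq_mul]; ring
    _ ≤ _ := card_nsmul_le_sum _ _ _ row

end WeightedGraph

section Poincare

variable {X H : Type*} [NormedAddCommGroup H] [InnerProductSpace ℝ H] {K : X → X → ℝ}

lemma sum_mul_norm_sub_sq (hsymm : ∀ x y, K x y = K y x) (Z : Finset X) (g : X → H) :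
    ∑ x ∈ Z, ∑ y ∈ Z, K x y * ‖g x - g y‖ ^ 2 =
      2 * ∑ x ∈ Z, (∑ y ∈ Z, K x y) * ‖g x‖ ^ 2 -
        2 * ∑ x ∈ Z, ∑ y ∈ Z, K x y * inner ℝ (g x) (g y) := by
  have expand (x y : X) : K x y * ‖g x - g y‖ ^ 2 =
      K x y * ‖g x‖ ^ 2 + K y x * ‖g y‖ ^ 2 - 2 * (K x y * inner ℝ (g x) (g y)) := by
    rw [norm_sub_sq_real, hsymm y x]
    ring
  simp_rw [expand, sum_sub_distrib, sum_add_distrib, ← mul_sum, sum_mul]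
  rw [sum_comm (f := fun x y => K y x * ‖g y‖ ^ 2)]
  ring

lemma sum_norm_sub_sq_of_sum_eq_zero {Z : Finset X} {g : X → H} (hg : ∑ x ∈ Z, g x = 0) :
    ∑ x ∈ Z, ∑ y ∈ Z, ‖g x - g y‖ ^ 2 = 2 * #Z * ∑ x ∈ Z, ‖g x‖ ^ 2 := by
  have := sum_mul_norm_sub_sq (K := fun _ _ => 1) (fun _ _ => rfl) Z g
  simpa [← inner_sum, ← mul_sum, hg, mul_assoc] using this

lemma exists_sum_sub_eq_zero (Z : Finset X) (f : X → H) : ∃ c : H, ∑ x ∈ Z, (f x - c) = 0 := by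
  refine ⟨(#Z : ℝ)⁻¹ • ∑ x ∈ Z, f x, ?_⟩
  rcases Z.eq_empty_or_nonempty with rfl | hZ
  · simp
  · rw [sum_sub_distrib, sum_const, ← Nat.cast_smul_eq_nsmul ℝ,
      smul_inv_smul₀ (by exact_mod_cast hZ.card_ne_zero), sub_self]

lemma sum_norm_sub_sq_le_of_spectral_gap {δ μ : ℝ} (hsymm : ∀ x y, K x y = K y x) {Z : Finset X}
    (hdeg : ∀ x ∈ Z, δ ≤ ∑ y ∈ Z, K x y)
    (hgap : ∀ g : X → H, ∑ x ∈ Z, g x = 0 →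
      ∑ x ∈ Z, ∑ y ∈ Z, K x y * inner ℝ (g x) (g y) ≤ μ * ∑ x ∈ Z, ‖g x‖ ^ 2) (f : X → H) :
    (δ - μ) * ∑ x ∈ Z, ∑ y ∈ Z, ‖f x - f y‖ ^ 2 ≤
      #Z * ∑ x ∈ Z, ∑ y ∈ Z, K x y * ‖f x - f y‖ ^ 2 := by
  obtain ⟨c, hc⟩ := exists_sum_sub_eq_zero Z f
  have centered : (δ - μ) * (2 * ∑ x ∈ Z, ‖f x - c‖ ^ 2) ≤
      ∑ x ∈ Z, ∑ y ∈ Z, K x y * ‖f x - f y‖ ^ 2 := by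
    have degree : δ * ∑ x ∈ Z, ‖f x - c‖ ^ 2 ≤ ∑ x ∈ Z, (∑ y ∈ Z, K x y) * ‖f x - c‖ ^ 2 := by
      rw [mul_sum]
      gcongr with x hx
      exact hdeg x hx
    have identity := sum_mul_norm_sub_sq hsymm Z (fun x => f x - c)
    simp only [sub_sub_sub_cancel_right] at identity
    linarith [hgap _ hc]
  have pairs := sum_norm_sub_sq_of_sum_eq_zero hc
  simp only [sub_sub_sub_cancel_right] at pairs
  calc (δ - μ) * ∑ x ∈ Z, ∑ y ∈ Z, ‖f x - f y‖ ^ 2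
      = #Z * ((δ - μ) * (2 * ∑ x ∈ Z, ‖f x - c‖ ^ 2)) := by rw [pairs]; ring
    _ ≤ _ := by gcongr

end Poincare

section WordLength

variable {ι κ : Type*} [Fintype κ]

/-- The word length of `v` with respect to the generators `s`: the least number of generators that
sum to `v`, and `Fintype.card κ + 1` if `v` is not in their span. The cap makes
`wordLength s (x - y)` a finite metric whether or not `s` spans. -/
noncomputable def wordLength (s : κ → BinaryCube ι) (v : BinaryCube ι) : ℕ :=
  sInf (insert (Fintype.card κ + 1) {t | ∃ c : κ → ZMod 2, hammingNorm c = t ∧ ∑ i, c i • s i = v})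

variable (s : κ → BinaryCube ι)

lemma wordLength_le_card_add_one (v : BinaryCube ι) : wordLength s v ≤ Fintype.card κ + 1 :=
  Nat.sInf_le (Set.mem_insert _ _)

lemma wordLength_sum_smul_le (c : κ → ZMod 2) : wordLength s (∑ i, c i • s i) ≤ hammingNorm c :=
  Nat.sInf_le (Set.mem_insert_of_mem _ ⟨c, rfl, rfl⟩)

lemma wordLength_eq_card_add_one_or_exists (v : BinaryCube ι) :
    wordLength s v = Fintype.card κ + 1 ∨
      ∃ c : κ → ZMod 2, hammingNorm c = wordLength s v ∧ ∑ i, c i • s i = v :=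
  Nat.sInf_mem (Set.insert_nonempty _ _)

lemma wordLength_zero : wordLength s 0 = 0 :=
  Nat.le_zero.mp (by simpa using wordLength_sum_smul_le s 0)

lemma wordLength_pos {v : BinaryCube ι} (hv : v ≠ 0) : 0 < wordLength s v := by
  rcases wordLength_eq_card_add_one_or_exists s v with h | ⟨c, hc, rfl⟩
  · omega
  · rw [← hc, hammingNorm_pos_iff]
    rintro rfl
    simp at hv

lemma wordLength_generator_le (i : κ) : wordLength s (s i) ≤ 1 := by
  classical
  have norm_single : hammingNorm (Pi.single i 1 : κ → ZMod 2) = 1 := by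
    exact card_eq_one.mpr ⟨i, by ext; simp [Pi.single_apply]⟩
  simpa [Pi.single_apply, ite_smul, norm_single] using wordLength_sum_smul_le s (Pi.single i 1)

lemma hammingNorm_add_le {α : Type*} [AddZeroClass α] [DecidableEq α] (a b : κ → α) :
    hammingNorm (a + b) ≤ hammingNorm a + hammingNorm b := by
  classical
  refine (card_le_card fun i hi => ?_).trans (card_union_le {i | a i ≠ 0} {i | b i ≠ 0})
  simp only [mem_filter, mem_univ, true_and, mem_union, Pi.add_apply] at hi ⊢
  contrapose! hi
  rw [hi.1, hi.2, add_zero]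

lemma wordLength_add_le (u v : BinaryCube ι) :
    wordLength s (u + v) ≤ wordLength s u + wordLength s v := by
  have cap := wordLength_le_card_add_one s (u + v)
  rcases wordLength_eq_card_add_one_or_exists s u with hu | ⟨a, ha, hau⟩
  · omega
  rcases wordLength_eq_card_add_one_or_exists s v with hv | ⟨b, hb, hbv⟩
  · omega
  calc wordLength s (u + v) = wordLength s (∑ i, (a + b) i • s i) := by
        simp [add_smul, sum_add_distrib, hau, hbv]
    _ ≤ hammingNorm (a + b) := wordLength_sum_smul_le s _
    _ ≤ hammingNorm a + hammingNorm b := hammingNorm_add_le a b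
    _ = _ := by rw [ha, hb]

lemma isMetricOn_wordLength_sub {X : Type} {φ : X → BinaryCube ι} (hφ : φ.Injective) :
    IsMetricOn fun x y => (wordLength s (φ x - φ y) : ℝ) := by
  refine ⟨fun x => ?_, fun x y hxy => ?_, fun x y => ?_, fun x y z => ?_⟩ <;> beta_reduce
  · simp [wordLength_zero]
  · exact_mod_cast wordLength_pos s (sub_ne_zero.mpr (hφ.ne hxy))
  · rw [← neg_sub (φ y) (φ x), ZModModule.neg_eq_self]
  · rw [← sub_add_sub_cancel (φ x) (φ y) (φ z)]
    exact_mod_cast wordLength_add_le s _ _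

lemma wordLength_le_of_lazyWalk_ne_zero [Fintype ι] {t : ℕ} {v : BinaryCube ι}
    (hv : lazyWalk s t v ≠ 0) : wordLength s v ≤ t := by
  induction t generalizing v with
  | zero =>
    have : v = 0 := by by_contra h; simp [lazyWalk, h] at hv
    rw [this, wordLength_zero]
  | succ t ih =>
    obtain ⟨i, -, hi⟩ := exists_ne_zero_of_sum_ne_zero (left_ne_zero_of_mul hv)
    by_cases hstay : lazyWalk s t v = 0
    · have hmove : lazyWalk s t (v - s i) ≠ 0 := fun h => hi (by simp [hstay, h])
      calc wordLength s v = wordLength s (v - s i + s i) := by rw [sub_add_cancel]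
        _ ≤ wordLength s (v - s i) + wordLength s (s i) := wordLength_add_le s _ _
        _ ≤ t + 1 := add_le_add (ih hmove) (wordLength_generator_le s i)
    · exact (ih hstay).trans t.le_succ

end WordLength

section BallSize

variable {κ α : Type*} [Fintype κ] [Fintype α] [DecidableEq α] [Zero α]

lemma sum_pow_hammingNorm [DecidableEq κ] (x : ℝ) :
    ∑ c : κ → α, x ^ hammingNorm c = (1 + (Fintype.card α - 1) * x) ^ Fintype.card κ := by
  have factor (c : κ → α) : x ^ hammingNorm c = ∏ i, if c i ≠ 0 then x else 1 := by
    rw [prod_ite, prod_const, prod_const_one, mul_one, hammingNorm]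
  have letters : ∑ a : α, (if a ≠ 0 then x else 1) = 1 + (Fintype.card α - 1) * x := by
    rw [← add_sum_erase _ _ (mem_univ 0), sum_congr rfl fun a ha => if_pos (ne_of_mem_erase ha),
      if_neg (not_not.mpr rfl), sum_const, card_erase_of_mem (mem_univ _), nsmul_eq_mul, card_univ,
      Nat.cast_sub (Fintype.card_pos_iff.mpr ⟨0⟩), Nat.cast_one]
  simp_rw [factor]
  rw [← Fintype.prod_sum fun (_ : κ) (a : α) => if a ≠ 0 then x else 1, letters, prod_const,
    card_univ]

lemma card_hammingNorm_le_mul_pow_le [DecidableEq κ] {x : ℝ} (hx0 : 0 ≤ x) (hx1 : x ≤ 1) (r : ℕ) :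
    #{c : κ → α | hammingNorm c ≤ r} * x ^ r ≤
      (1 + (Fintype.card α - 1) * x) ^ Fintype.card κ := by
  rw [← sum_pow_hammingNorm, ← nsmul_eq_mul]
  calc #{c : κ → α | hammingNorm c ≤ r} • x ^ r
      ≤ ∑ c : κ → α with hammingNorm c ≤ r, x ^ hammingNorm c :=
        card_nsmul_le_sum _ _ _ fun c hc => pow_le_pow_of_le_one hx0 hx1 (mem_filter.mp hc).2
    _ ≤ ∑ c : κ → α, x ^ hammingNorm c :=
        sum_le_sum_of_subset_of_nonneg (filter_subset _ _) fun _ _ _ => by positivity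

lemma card_wordLength_le_le {ι : Type*} [Fintype ι] [DecidableEq ι] [DecidableEq κ]
    (s : κ → BinaryCube ι) {r : ℕ} (hr : r ≤ Fintype.card κ) :
    #{v | wordLength s v ≤ r} ≤ #{c : κ → ZMod 2 | hammingNorm c ≤ r} := by
  refine (card_le_card fun v hv => ?_).trans (card_image_le (f := fun c => ∑ i, c i • s i))
  have hvr : wordLength s v ≤ r := (mem_filter.mp hv).2
  rcases wordLength_eq_card_add_one_or_exists s v with h | ⟨c, hc, hcv⟩
  · omega
  · exact mem_image.mpr ⟨c, mem_filter.mpr ⟨mem_univ c, hc.trans_le hvr⟩, hcv⟩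

/-- The weight `1 / 64` in the generating function suits the radius `k / 24`, because
`(65 / 64) ^ 32 ≤ 2` and `64 ^ (4 * (k / 24)) ≤ 2 ^ k`. -/
lemma card_wordLength_le_div_sq_le {k : ℕ} (hκ : Fintype.card κ = 8 * k) {ι : Type*} [Fintype ι]
    [DecidableEq ι] (s : κ → BinaryCube ι) :
    (#{v | wordLength s v ≤ k / 24} : ℝ) ^ 2 ≤ 2 ^ k := by
  classical
  set r := k / 24
  set B : ℝ := (#{v | wordLength s v ≤ r} : ℝ)
  have card_le : B * (1 / 64) ^ r ≤ (65 / 64) ^ (8 * k) := by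
    have hB : B ≤ #{c : κ → ZMod 2 | hammingNorm c ≤ r} := by
      exact Nat.cast_le.mpr (card_wordLength_le_le s (by omega))
    calc B * (1 / 64) ^ r ≤ #{c : κ → ZMod 2 | hammingNorm c ≤ r} * (1 / 64) ^ r := by gcongr
      _ ≤ _ := card_hammingNorm_le_mul_pow_le (by norm_num) (by norm_num) r
      _ = _ := by rw [hκ, ZMod.card]; norm_num
  have card_le' : B ≤ (65 / 64) ^ (8 * k) * 64 ^ r := by
    rwa [one_div, inv_pow, ← div_eq_mul_inv, div_le_iff₀ (by positivity)] at card_le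
  have fourth_power : (B ^ 2) ^ 2 ≤ (2 ^ k) ^ 2 := by
    calc (B ^ 2) ^ 2 = B ^ 4 := by ring
      _ ≤ ((65 / 64) ^ (8 * k) * 64 ^ r) ^ 4 := by gcongr
      _ = ((65 / 64) ^ 32) ^ k * 2 ^ (24 * r) := by
        rw [show (64 : ℝ) ^ r = 2 ^ (6 * r) by rw [pow_mul]; norm_num, mul_pow]
        simp only [← pow_mul]
        congr 2 <;> ring
      _ ≤ 2 ^ k * 2 ^ k := by
        gcongr
        · norm_num
        · norm_num
        · omega
      _ = (2 ^ k) ^ 2 := (sq _).symm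
  exact le_of_sq_le_sq fourth_power (by positivity)

end BallSize

section Generators

lemma exists_sum_prod_le {G κ Φ : Type*} [Fintype G] [Nonempty G] [Fintype κ] (Ψ : Finset Φ)
    (F : Φ → G → ℝ) {a : ℝ} (hF : ∀ φ ∈ Ψ, ∑ v, F φ v = Fintype.card G * a) :
    ∃ s : κ → G, ∑ φ ∈ Ψ, ∏ i, F φ (s i) ≤ #Ψ * a ^ Fintype.card κ := by
  classical
  obtain ⟨s, -, hs⟩ := exists_le_of_sum_le (s := (univ : Finset (κ → G)))
    (f := fun s => ∑ φ ∈ Ψ, ∏ i, F φ (s i)) (g := fun _ => #Ψ * a ^ Fintype.card κ)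
    univ_nonempty <| le_of_eq <| by
      have total (φ : Φ) (hφ : φ ∈ Ψ) :
          ∑ s : κ → G, ∏ i, F φ (s i) = (Fintype.card G * a) ^ Fintype.card κ := by
        rw [← Fintype.prod_sum fun (_ : κ) => F φ, hF φ hφ, prod_const, card_univ]
      rw [sum_comm, sum_congr rfl total, sum_const, sum_const, card_univ, Fintype.card_fun,
        nsmul_eq_mul, nsmul_eq_mul, Nat.cast_pow, mul_pow]
      ring
  exact ⟨s, hs⟩

variable {ι κ : Type*} [Fintype ι] [Fintype κ]

lemma prod_two_add_walsh [Nonempty κ] (s : κ → BinaryCube ι) (u : BinaryCube ι) :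
    ∏ i, (2 + walsh u (s i)) = (3 : ℝ) ^ (Fintype.card κ * lazyWalkEigenvalue s u) := by
  have factor (i : κ) : 2 + walsh u (s i) = (3 : ℝ) ^ ((1 + walsh u (s i)) / 2) := by
    rcases walsh_eq_one_or_neg_one u (s i) with h | h <;> norm_num [h]
  rw [lazyWalkEigenvalue, mul_div_cancel₀ _ (by positivity), Real.rpow_sum_of_pos three_pos]
  exact prod_congr rfl fun i _ => factor i

/-- With `k = Fintype.card ι`, the product `∏ i, (2 + walsh u (s i))` has expectation `2 ^ (8 * k)`
over uniform `s`, and it suffices that `2 ^ k * 2 ^ (8 * k) ≤ 3 ^ (6 * k)`. -/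
lemma exists_lazyWalkEigenvalue_le (hκ : Fintype.card κ = 8 * Fintype.card ι) :
    ∃ s : κ → BinaryCube ι, ∀ u ≠ 0, lazyWalkEigenvalue s u ≤ 3 / 4 := by
  classical
  set k := Fintype.card ι
  obtain ⟨s, hs⟩ := exists_sum_prod_le (κ := κ) (univ.erase (0 : BinaryCube ι))
    (fun u v => 2 + walsh u v) (a := 2) fun u hu => by
      simp [sum_add_distrib, sum_walsh_eq_zero (ne_of_mem_erase hu)]
  refine ⟨s, fun u hu => ?_⟩
  have hk : 0 < k := Fintype.card_pos_iff.mpr ⟨(Function.ne_iff.mp hu).choose⟩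
  have : Nonempty κ := Fintype.card_pos_iff.mp (by omega)
  have hu_mem : u ∈ univ.erase (0 : BinaryCube ι) := mem_erase.mpr ⟨hu, mem_univ u⟩
  have prod_nonneg (w : BinaryCube ι) : 0 ≤ ∏ i, (2 + walsh w (s i)) := by
    rw [prod_two_add_walsh]
    positivity
  have rpow_le : (3 : ℝ) ^ (8 * k * lazyWalkEigenvalue s u) ≤ 3 ^ (6 * k : ℝ) := by
    calc (3 : ℝ) ^ (8 * k * lazyWalkEigenvalue s u) = ∏ i, (2 + walsh u (s i)) := by
          rw [prod_two_add_walsh, hκ]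
          push_cast
          rfl
      _ ≤ ∑ w ∈ univ.erase 0, ∏ i, (2 + walsh w (s i)) :=
          single_le_sum (fun w _ => prod_nonneg w) hu_mem
      _ ≤ #(univ.erase (0 : BinaryCube ι)) * 2 ^ Fintype.card κ := hs
      _ ≤ 2 ^ k * 2 ^ (8 * k) := by
          rw [hκ]
          gcongr
          exact_mod_cast (card_le_univ _).trans_eq card_binaryCube
      _ = (2 ^ 9) ^ k := by rw [← pow_add, ← pow_mul]; congr 1; omega
      _ ≤ (3 ^ 6) ^ k := by gcongr; norm_num
      _ = 3 ^ (6 * k : ℝ) := by rw [← pow_mul]; exact_mod_cast rfl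
  have exponent_le := (Real.rpow_le_rpow_left_iff (by norm_num)).mp rpow_le
  have : (0 : ℝ) < k := by exact_mod_cast hk
  nlinarith

end Generators

section SmallDistortion

variable {ι κ : Type*} [Fintype ι] [Fintype κ]

lemma sum_lazyWalk_mul_norm_sub_sq_le {H : Type*} [SeminormedAddCommGroup H]
    {s : κ → BinaryCube ι} {t : ℕ} {Z : Finset (BinaryCube ι)} {f : BinaryCube ι → H} {M : ℝ}
    (hM : ∀ x ∈ Z, ∀ y ∈ Z, wordLength s (x - y) ≤ t → ‖f x - f y‖ ^ 2 ≤ M) :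
    ∑ x ∈ Z, ∑ y ∈ Z, lazyWalk s t (x - y) * ‖f x - f y‖ ^ 2 ≤
      M * (averageDegree (fun x y => lazyWalk s t (x - y)) Z * #Z) := by
  rw [averageDegree_mul_card, mul_sum]
  refine sum_le_sum fun x hx => ?_
  rw [mul_sum]
  refine sum_le_sum fun y hy => ?_
  rcases eq_or_ne (lazyWalk s t (x - y)) 0 with h | h
  · simp [h]
  · rw [mul_comm M]
    exact mul_le_mul_of_nonneg_left (hM x hx y hy (wordLength_le_of_lazyWalk_ne_zero s h))
      (lazyWalk_nonneg s t _)

variable [Nonempty κ]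

lemma card_div_le_averageDegree_lazyWalk (s : κ → BinaryCube ι) (t : ℕ)
    (Y : Finset (BinaryCube ι)) :
    #Y / 2 ^ Fintype.card ι ≤ averageDegree (fun x y => lazyWalk s t (x - y)) Y := by
  rcases Y.eq_empty_or_nonempty with rfl | hY
  · simp [averageDegree]
  rw [averageDegree, le_div_iff₀ (by exact_mod_cast hY.card_pos), div_mul_eq_mul_div, ← sq]
  simpa using norm_sum_sq_div_le_sum_lazyWalk_mul_inner s t Y fun _ => (1 : ℝ)

variable {s : κ → BinaryCube ι} {q : ℝ}

lemma averageDegree_lazyWalk_le (hq : 0 ≤ q) (hs : ∀ u ≠ 0, lazyWalkEigenvalue s u ≤ q) (t : ℕ)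
    (Z : Finset (BinaryCube ι)) :
    averageDegree (fun x y => lazyWalk s t (x - y)) Z ≤ #Z / 2 ^ Fintype.card ι + q ^ t := by
  refine div_le_of_le_mul₀ (by positivity) (by positivity) ?_
  rw [add_mul, div_mul_eq_mul_div, ← sq]
  simpa using sum_lazyWalk_mul_inner_le hq hs t Z fun _ => (1 : ℝ)

variable {H : Type*} [NormedAddCommGroup H] [InnerProductSpace ℝ H]

lemma exists_subset_sum_norm_sub_sq_le (hq : 0 ≤ q) (hs : ∀ u ≠ 0, lazyWalkEigenvalue s u ≤ q)
    {t : ℕ} {Y : Finset (BinaryCube ι)} (hY : Y.Nonempty)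
    (hdense : 4 * (2 ^ Fintype.card ι * q ^ t) ≤ #Y) {f : BinaryCube ι → H} {M : ℝ}
    (hM : ∀ x ∈ Y, ∀ y ∈ Y, wordLength s (x - y) ≤ t → ‖f x - f y‖ ^ 2 ≤ M) :
    ∃ Z ⊆ Y, 3 / 4 * (#Y : ℝ) ≤ #Z ∧
      ∑ x ∈ Z, ∑ y ∈ Z, ‖f x - f y‖ ^ 2 ≤ 4 * M * #Z ^ 2 := by
  set K : BinaryCube ι → BinaryCube ι → ℝ := fun x y => lazyWalk s t (x - y)
  have hsymm (x y : BinaryCube ι) : K x y = K y x := by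
    simp only [K, ← neg_sub y x, lazyWalk_neg]
  obtain ⟨Z, hZY, hYZ, hdeg⟩ := exists_subset_averageDegree_le_two_mul_sum hsymm
    (fun x => lazyWalk_nonneg s t _) Y
  set δ := averageDegree K Z
  have hYpos : (0 : ℝ) < #Y := by exact_mod_cast hY.card_pos
  have degree_lower : #Y / 2 ^ Fintype.card ι ≤ δ :=
    (card_div_le_averageDegree_lazyWalk s t Y).trans hYZ
  have degree_upper : δ ≤ #Z / 2 ^ Fintype.card ι + q ^ t := averageDegree_lazyWalk_le hq hs t Z
  have gap_le : 4 * q ^ t ≤ #Y / 2 ^ Fintype.card ι := by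
    rw [le_div_iff₀ (by positivity)]
    linarith
  have degree_pos : 0 < δ := lt_of_lt_of_le (by positivity) degree_lower
  refine ⟨Z, hZY, ?_, ?_⟩
  · have : 3 / 4 * (#Y / 2 ^ Fintype.card ι : ℝ) ≤ #Z / 2 ^ Fintype.card ι := by linarith
    rwa [← mul_div_assoc, div_le_div_iff_of_pos_right (by positivity)] at this
  · have poincare := sum_norm_sub_sq_le_of_spectral_gap (δ := δ / 2) (μ := q ^ t) hsymm
      (fun x hx => by linarith [hdeg x hx])
      (fun g hg => by simpa [hg] using sum_lazyWalk_mul_inner_le hq hs t Z g) f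
    have energy := sum_lazyWalk_mul_norm_sub_sq_le fun x hx y hy => hM x (hZY hx) y (hZY hy)
    refine le_of_mul_le_mul_left ?_ (by positivity : 0 < δ / 4)
    calc δ / 4 * ∑ x ∈ Z, ∑ y ∈ Z, ‖f x - f y‖ ^ 2
        ≤ (δ / 2 - q ^ t) * ∑ x ∈ Z, ∑ y ∈ Z, ‖f x - f y‖ ^ 2 := by
          gcongr
          linarith
      _ ≤ #Z * ∑ x ∈ Z, ∑ y ∈ Z, K x y * ‖f x - f y‖ ^ 2 := poincare
      _ ≤ #Z * (M * (δ * #Z)) := by gcongr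
      _ = δ / 4 * (4 * M * #Z ^ 2) := by ring

end SmallDistortion

section Counting

lemma pow_floor_le_rpow_div {q x : ℝ} (hq0 : 0 < q) (hq1 : q ≤ 1) :
    q ^ ⌊x⌋₊ ≤ q ^ x / q := by
  calc q ^ ⌊x⌋₊ = q ^ (⌊x⌋₊ : ℝ) := (Real.rpow_natCast q _).symm
    _ ≤ q ^ (x - 1) := Real.rpow_le_rpow_of_exponent_ge hq0 hq1 (Nat.sub_one_lt_floor x).le
    _ = q ^ x / q := Real.rpow_sub_one hq0.ne' x

/-- `(3 / 4) ^ 4 ≤ 1 / 2` turns `k / (96 * α)` steps into the exponent `1 / 384`. -/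
lemma two_pow_mul_three_quarters_pow_le {α : ℝ} (hα : 0 ≤ α) (k : ℕ) :
    2 ^ k * (3 / 4 : ℝ) ^ ⌊k / (96 * α)⌋₊ ≤ 4 / 3 * ((2 : ℝ) ^ k) ^ (1 - 1 / 384 / α) := by
  have decay : (3 / 4 : ℝ) ^ (k / (96 * α)) ≤ ((2 : ℝ) ^ k) ^ (-(1 / 384 / α)) := by
    calc (3 / 4 : ℝ) ^ (k / (96 * α)) = ((3 / 4) ^ (4 : ℝ)) ^ (k * (1 / 384 / α)) := by
          rw [← Real.rpow_mul (by norm_num)]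
          congr 1
          ring
      _ ≤ (2⁻¹ : ℝ) ^ (k * (1 / 384 / α)) := by
          gcongr
          norm_num
      _ = ((2 : ℝ) ^ k) ^ (-(1 / 384 / α)) := by
          rw [Real.inv_rpow (by norm_num), ← Real.rpow_neg (by norm_num), ← mul_neg,
            Real.rpow_mul (by norm_num), Real.rpow_natCast]
  calc 2 ^ k * (3 / 4 : ℝ) ^ ⌊k / (96 * α)⌋₊
      ≤ 2 ^ k * (((2 : ℝ) ^ k) ^ (-(1 / 384 / α)) / (3 / 4)) := by
        gcongr
        exact (pow_floor_le_rpow_div (by norm_num) (by norm_num)).trans (by gcongr)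
    _ = 4 / 3 * ((2 : ℝ) ^ k) ^ (1 - 1 / 384 / α) := by
        rw [sub_eq_add_neg, Real.rpow_add (by positivity), Real.rpow_one]
        ring

lemma sqrt_le_rpow_one_sub_div {x c α : ℝ} (hx : 1 ≤ x) (hc : c ≤ 1 / 2) (hα : 1 ≤ α) :
    √x ≤ x ^ (1 - c / α) := by
  rw [Real.sqrt_eq_rpow]
  refine Real.rpow_le_rpow_of_exponent_le hx ?_
  have : c / α ≤ 1 / 2 := by
    rw [div_le_iff₀ (by positivity)]
    linarith
  linarith

variable {ι κ : Type*} [Fintype κ] {s : κ → BinaryCube ι}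

lemma card_norm_sub_lt_le [Fintype ι] [DecidableEq ι] {H : Type*} [SeminormedAddCommGroup H]
    {f : BinaryCube ι → H} {Z : Finset (BinaryCube ι)} {σ : ℝ} (hσ : 0 < σ)
    (hf : ∀ x ∈ Z, ∀ y ∈ Z, σ * wordLength s (x - y) ≤ ‖f x - f y‖) (k : ℕ)
    {x : BinaryCube ι} (hx : x ∈ Z) :
    #{y ∈ Z | ‖f x - f y‖ < σ * (k / 24)} ≤ #{v | wordLength s v ≤ k / 24} := by
  refine card_le_card_of_injOn (x - ·) (fun y hy => ?_) (sub_right_injective.injOn)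
  obtain ⟨hy, hnear⟩ := mem_filter.mp hy
  have short : (wordLength s (x - y) : ℝ) < k / 24 :=
    lt_of_mul_lt_mul_left ((hf x hx y hy).trans_lt hnear) hσ.le
  rw [lt_div_iff₀ (by norm_num)] at short
  refine mem_filter.mpr ⟨mem_univ _, (Nat.le_div_iff_mul_le (by norm_num)).mpr ?_⟩
  exact_mod_cast short.le

lemma mul_card_sq_le_sum_norm_sub_sq [Finite ι] {k : ℕ} (hκ : Fintype.card κ = 8 * k) {H : Type*}
    [SeminormedAddCommGroup H] {f : BinaryCube ι → H} {Z : Finset (BinaryCube ι)} {σ : ℝ}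
    (hσ : 0 < σ) (hf : ∀ x ∈ Z, ∀ y ∈ Z, σ * wordLength s (x - y) ≤ ‖f x - f y‖)
    (hZ : 2 * √(2 ^ k) ≤ #Z) :
    (σ * (k / 24)) ^ 2 / 2 * (#Z : ℝ) ^ 2 ≤ ∑ x ∈ Z, ∑ y ∈ Z, ‖f x - f y‖ ^ 2 := by
  classical
  have := Fintype.ofFinite ι
  refine mul_card_sq_le_sum_sum_sq (by positivity) fun x hx => ?_
  have ball_le : (#{v | wordLength s v ≤ k / 24} : ℝ) ≤ √(2 ^ k) :=
    Real.le_sqrt_of_sq_le (card_wordLength_le_div_sq_le hκ s)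
  have near_le : (#{y ∈ Z | ‖f x - f y‖ < σ * (k / 24)} : ℝ) ≤ #{v | wordLength s v ≤ k / 24} :=
    Nat.cast_le.mpr (card_norm_sub_lt_le hσ hf k hx)
  have : (2 * #{y ∈ Z | ‖f x - f y‖ < σ * (k / 24)} : ℝ) ≤ #Z := by linarith
  exact_mod_cast this

lemma card_le_of_wordLength_embedding {H : Type*} [NormedAddCommGroup H] [InnerProductSpace ℝ H]
    [Fintype ι] [Nonempty ι] (hκ : Fintype.card κ = 8 * Fintype.card ι)
    (hs : ∀ u ≠ 0, lazyWalkEigenvalue s u ≤ 3 / 4) {α : ℝ} (hα : 1 ≤ α)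
    {Y : Finset (BinaryCube ι)} {f : BinaryCube ι → H} {σ : ℝ} (hσ : 0 < σ)
    (hf : ∀ x ∈ Y, ∀ y ∈ Y, σ * wordLength s (x - y) ≤ ‖f x - f y‖ ∧
      ‖f x - f y‖ ≤ α * σ * wordLength s (x - y)) :
    (#Y : ℝ) ≤ 16 / 3 * ((2 : ℝ) ^ Fintype.card ι) ^ (1 - 1 / 384 / α) := by
  set k := Fintype.card ι
  by_contra! hlarge
  have hk : 0 < k := Fintype.card_pos
  have : Nonempty κ := Fintype.card_pos_iff.mp (by omega)
  set t := ⌊k / (96 * α)⌋₊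
  have walk_short : α * t ≤ k / 96 := by
    have : (t : ℝ) ≤ k / (96 * α) := Nat.floor_le (by positivity)
    rw [le_div_iff₀ (by positivity)] at this
    linarith
  have image_short (x) (hx : x ∈ Y) (y) (hy : y ∈ Y) (hxy : wordLength s (x - y) ≤ t) :
      ‖f x - f y‖ ^ 2 ≤ (σ * (k / 96)) ^ 2 := by
    gcongr
    calc ‖f x - f y‖ ≤ α * σ * wordLength s (x - y) := (hf x hx y hy).2
      _ ≤ α * σ * t := by gcongr
      _ = σ * (α * t) := by ring
      _ ≤ σ * (k / 96) := by gcongr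
  have hYpos : (0 : ℝ) < #Y := lt_of_le_of_lt (by positivity) hlarge
  obtain ⟨Z, hZY, hcard, hupper⟩ := exists_subset_sum_norm_sub_sq_le (by norm_num) hs
    (card_pos.mp (by exact_mod_cast hYpos))
    (by linarith [two_pow_mul_three_quarters_pow_le (by positivity : 0 ≤ α) k]) image_short
  have sqrt_le : √(2 ^ k) ≤ ((2 : ℝ) ^ k) ^ (1 - 1 / 384 / α) :=
    sqrt_le_rpow_one_sub_div (one_le_pow₀ one_le_two) (by norm_num) hα
  have hlower := mul_card_sq_le_sum_norm_sub_sq hκ hσ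
    (fun x hx y hy => (hf x (hZY hx) y (hZY hy)).1)
    (by linarith [Real.sqrt_nonneg ((2 : ℝ) ^ k)])
  have hZ : (0 : ℝ) < #Z := by linarith
  have : 0 < (σ * k) ^ 2 * (#Z : ℝ) ^ 2 := by positivity
  linarith

end Counting

lemma two_pow_log_add_one_le {n : ℕ} (hn : n ≠ 0) : 2 ^ (Nat.log 2 n + 1) ≤ 2 * n := by
  rw [pow_succ']
  exact Nat.mul_le_mul_left 2 (Nat.pow_log_le_self 2 hn)

lemma exists_injective_binaryCube (n : ℕ) :
    ∃ φ : Fin n → BinaryCube (Fin (Nat.log 2 n + 1)), φ.Injective := by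
  obtain ⟨φ⟩ := Function.Embedding.nonempty_of_card_le (α := Fin n)
    (β := BinaryCube (Fin (Nat.log 2 n + 1))) <| by
      simpa [card_binaryCube] using (Nat.lt_pow_succ_log_self one_lt_two n).le
  exact ⟨φ, φ.injective⟩

lemma card_le_of_wordLength_pullback_embedding {n : ℕ} (hn : n ≠ 0)
    {φ : Fin n → BinaryCube (Fin (Nat.log 2 n + 1))} (hφ : φ.Injective)
    {s : Fin (8 * (Nat.log 2 n + 1)) → BinaryCube (Fin (Nat.log 2 n + 1))}
    (hs : ∀ u ≠ 0, lazyWalkEigenvalue s u ≤ 3 / 4) {α : ℝ} (hα : 1 ≤ α)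
    {H : Type*} [NormedAddCommGroup H] [InnerProductSpace ℝ H] {Y : Finset (Fin n)}
    {f : Fin n → H} {σ : ℝ} (hσ : 0 < σ)
    (hf : ∀ x ∈ Y, ∀ y ∈ Y, σ * wordLength s (φ x - φ y) ≤ ‖f x - f y‖ ∧
      ‖f x - f y‖ ≤ α * σ * wordLength s (φ x - φ y)) :
    (#Y : ℝ) ≤ 32 / 3 * (n : ℝ) ^ (1 - 1 / 384 / α) := by
  have exponent_nonneg : 0 ≤ 1 - 1 / 384 / α := by
    rw [sub_nonneg, div_le_one (by positivity)]
    linarith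
  have exponent_le_one : 1 - 1 / 384 / α ≤ 1 := sub_le_self 1 (by positivity)
  have card_map := card_le_of_wordLength_embedding (Y := Y.map ⟨φ, hφ⟩)
    (f := Function.extend φ f 0) (by simp) hs hα hσ (by simpa [hφ.extend_apply] using hf)
  rw [Finset.card_map, Fintype.card_fin] at card_map
  calc (#Y : ℝ) ≤ 16 / 3 * ((2 : ℝ) ^ (Nat.log 2 n + 1)) ^ (1 - 1 / 384 / α) := card_map
    _ ≤ 16 / 3 * (2 * n : ℝ) ^ (1 - 1 / 384 / α) := by
        gcongr
        exact_mod_cast two_pow_log_add_one_le hn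
    _ = 16 / 3 * (2 ^ (1 - 1 / 384 / α) * (n : ℝ) ^ (1 - 1 / 384 / α)) := by
        rw [Real.mul_rpow zero_le_two n.cast_nonneg]
    _ ≤ 16 / 3 * (2 * (n : ℝ) ^ (1 - 1 / 384 / α)) := by
        gcongr
        exact Real.rpow_le_self_of_one_le one_le_two exponent_le_one
    _ = 32 / 3 * (n : ℝ) ^ (1 - 1 / 384 / α) := by ring

end MetricRamsey

open MetricRamsey in
theorem ramsey_upper_bound_l2_general :
    ∃ c C : ℝ, 0 < c ∧ 0 < C ∧
      ∀ n : ℕ, 1 ≤ n →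
        ∃ d : Fin n → Fin n → ℝ, IsMetricOn d ∧
          ∀ α : ℝ, 1 ≤ α →
            ∀ (H : Type*) [NormedAddCommGroup H] [InnerProductSpace ℝ H] (Y : Finset (Fin n)),
              (∃ f : Fin n → H, ∃ s : ℝ, 0 < s ∧
                ∀ x ∈ Y, ∀ y ∈ Y,
                  s * d x y ≤ ‖f x - f y‖ ∧ ‖f x - f y‖ ≤ α * s * d x y) →
              (#Y : ℝ) ≤ C * (n : ℝ) ^ (1 - c / α) := by
  refine ⟨1 / 384, 32 / 3, by norm_num, by norm_num, fun n hn => ?_⟩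
  obtain ⟨φ, hφ⟩ := exists_injective_binaryCube n
  obtain ⟨s, hs⟩ := exists_lazyWalkEigenvalue_le (ι := Fin (Nat.log 2 n + 1))
    (κ := Fin (8 * (Nat.log 2 n + 1))) (by simp)
  refine ⟨_, isMetricOn_wordLength_sub s hφ, fun α hα H _ _ Y ⟨f, σ, hσ, hf⟩ => ?_⟩
  exact card_le_of_wordLength_pullback_embedding (by omega) hφ hs hα hσ hf

/-- Near tightness of the metric Ramsey theorem: for every `α > 2` there is an
`n`-point metric space all of whose subsets that `α`-embed into `ℓ₂` have at most
`C·n^(1-c/α)` points. -/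
theorem ramsey_upper_bound_l2 :
    ∃ c C : ℝ, 0 < c ∧ 0 < C ∧
      ∀ (α : ℝ), 2 < α → ∀ n : ℕ, 1 ≤ n →
        ∃ d : Fin n → Fin n → ℝ, IsMetricOn d ∧
          ∀ Y : Finset (Fin n),
            (∃ f : Fin n → lp (fun _ : ℕ => ℝ) 2, ∃ s : ℝ, 0 < s ∧
              ∀ x ∈ Y, ∀ y ∈ Y,
                s * d x y ≤ ‖f x - f y‖ ∧ ‖f x - f y‖ ≤ α * s * d x y) →
            (Y.card : ℝ) ≤ C * (n : ℝ) ^ (1 - c / α) := by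
  obtain ⟨c, C, hc, hC, h⟩ := ramsey_upper_bound_l2_general
  refine ⟨c, C, hc, hC, fun α hα n hn => ?_⟩
  obtain ⟨d, hd, hcard⟩ := h n hn
  exact ⟨d, hd, hcard α (by linarith) _⟩
end

section
/- There exist universal constants c, C > 0 with the following property. Let X be a real normed space of finite dimension h ≥ 1 and let n ≥ 2 be an integer. (i) For every real α with 1 < α < 2, there exists a metric space M on n points such that every subset of M admitting an α-embedding into X has at most 2·log₂ n + 2h·log₂(C/(2−α)) points. (ii) For every real α ≥ 2, there exists a metric space M on n points such that every subset of M admitting an α-embedding into X has at most C·n^(1 − c/α)·h·log α points. -/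
/-!
Rescale an `α`-embedding of an `m`-point set `Y` to be non-contracting, translate it into a ball of
radius `R` and round it to an `ε / 2`-net of that ball. Since the net has at most `(1 + 4R/ε) ^ h`
points, only `(1 + 4R/ε) ^ (h * m)` rounded maps exist for each `Y`, so it suffices to have a random
metric for which any given map is the rounding of an embedding with very small probability.

For `α < 2` take the path metric of a uniformly random graph, truncated at `2`: distances `1` and
`2` remain distinguishable after rounding, so the rounded map determines all `m.choose 2` possible
edges inside `Y`.

For `α ≥ 2` take the path metric of the graph generated by `D` random permutations, truncated just
above `2α`. Balls of radius `2α` are small, so each point of `Y` has a rounded image far from that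
of most of `Y`, and none of the permutations may send it to one of those far points.
-/

open Finset Metric Module
open scoped NNReal

section Nets

variable {E : Type*} [NormedAddCommGroup E] [NormedSpace ℝ E] [FiniteDimensional ℝ E]

open MeasureTheory in
lemma card_le_of_isSeparated_of_subset_closedBall {ε : ℝ≥0} (hε : 0 < ε) {R : ℝ} (hR : 0 ≤ R)
    {x : E} {s : Finset E} (hs : (s : Set E) ⊆ closedBall x R)
    (hsep : IsSeparated ε (s : Set E)) :
    (#s : ℝ) ≤ (1 + 2 * R / ε) ^ finrank ℝ E := by
  borelize E
  let μ : Measure E := Measure.addHaar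
  have hε' : (0 : ℝ) < ε := hε
  have disjoint_balls : (s : Set E).PairwiseDisjoint fun c ↦ ball c (ε / 2 : ℝ) := by
    intro c hc d hd hcd
    apply ball_disjoint_ball
    have hlt : (ε : ENNReal) < edist c d := hsep hc hd hcd
    rw [edist_nndist, ENNReal.coe_lt_coe, ← NNReal.coe_lt_coe, coe_nndist] at hlt
    linarith
  have balls_subset : (⋃ c ∈ s, ball c (ε / 2 : ℝ)) ⊆ ball x (R + ε / 2) :=
    Set.iUnion₂_subset fun c hc ↦ ball_subset_ball' (by linarith [mem_closedBall.1 (hs hc)])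
  have volume_le : μ.real (⋃ c ∈ s, ball c (ε / 2 : ℝ)) ≤ μ.real (ball x (R + ε / 2)) :=
    measureReal_mono balls_subset measure_ball_lt_top.ne
  rw [measureReal_biUnion_finset disjoint_balls (fun _ _ ↦ measurableSet_ball)
    (fun _ _ ↦ measure_ball_lt_top.ne)] at volume_le
  have volume_ball (c : E) {t : ℝ} (ht : 0 < t) :
      μ.real (ball c t) = t ^ finrank ℝ E * μ.real (ball 0 1) := by
    simp [measureReal_def, μ.addHaar_ball_of_pos c ht, ht.le]
  simp only [volume_ball _ (half_pos hε'), volume_ball _ (by positivity : 0 < R + ε / 2),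
    sum_const, nsmul_eq_mul, ← mul_assoc] at volume_le
  have unit_ball_pos : 0 < μ.real (ball (0 : E) 1) :=
    ENNReal.toReal_pos (measure_ball_pos μ 0 one_pos).ne' measure_ball_lt_top.ne
  have ratio : 1 + 2 * R / ε = (R + ε / 2) / (ε / 2) := by field_simp; ring
  rw [ratio, div_pow, le_div_iff₀ (by positivity)]
  exact le_of_mul_le_mul_right volume_le unit_ball_pos

lemma packingNumber_closedBall_ne_top {ε : ℝ≥0} (hε : 0 < ε) (x : E) (R : ℝ) :
    packingNumber ε (closedBall x R) ≠ ⊤ := by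
  obtain ⟨N, -, hN, hcover⟩ := exists_finite_isCover_of_isCompact (half_pos hε).ne'
    (isCompact_closedBall x R)
  have h := packingNumber_two_mul_le_externalCoveringNumber (ε / 2) (closedBall x R)
  rw [mul_div_cancel₀ ε two_ne_zero] at h
  exact ne_top_of_le_ne_top hN.encard_lt_top.ne (h.trans (iInf₂_le N hcover))

lemma exists_finset_isCover_closedBall {ε : ℝ≥0} (hε : 0 < ε) {R : ℝ} (hR : 0 ≤ R) (x : E) :
    ∃ S : Finset E, (#S : ℝ) ≤ (1 + 2 * R / ε) ^ finrank ℝ E ∧ IsCover ε (closedBall x R) S := by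
  have hpack := packingNumber_closedBall_ne_top hε x R
  have hfin : (maximalSeparatedSet ε (closedBall x R)).Finite :=
    Set.encard_ne_top_iff.1 (encard_maximalSeparatedSet hpack ▸ hpack)
  refine ⟨hfin.toFinset, card_le_of_isSeparated_of_subset_closedBall hε hR (x := x) ?_ ?_, ?_⟩ <;>
    rw [hfin.coe_toFinset]
  · exact maximalSeparatedSet_subset
  · exact isSeparated_maximalSeparatedSet
  · exact isCover_maximalSeparatedSet hpack

end Nets

section Counting

lemma exists_forall_notMem_of_card_mul_lt {κ Ω : Type*} [Fintype κ] [Fintype Ω]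
    (bad : κ → Finset Ω) {K : ℝ} (hbad : ∀ i, (#(bad i) : ℝ) ≤ K)
    (hK : Fintype.card κ * K < Fintype.card Ω) : ∃ ω, ∀ i, ω ∉ bad i := by
  classical
  by_contra! hcover
  have hle : Fintype.card Ω ≤ ∑ i, #(bad i) := by
    rw [← card_univ]
    refine (card_le_card fun ω _ ↦ ?_).trans card_biUnion_le
    simpa using hcover ω
  refine hK.not_ge ?_
  calc (Fintype.card Ω : ℝ) ≤ ∑ i, (#(bad i) : ℝ) := mod_cast hle
    _ ≤ ∑ _i : κ, K := sum_le_sum fun i _ ↦ hbad i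
    _ = Fintype.card κ * K := by simp

lemma card_sigma_powersetCard_fun (ι S : Type*) [Fintype ι] [Fintype S] [DecidableEq ι] (m : ℕ) :
    Fintype.card (Σ Y : {Y : Finset ι // #Y = m}, (Y.1 → S)) =
      (Fintype.card ι).choose m * Fintype.card S ^ m := by
  have hfiber (Y : {Y : Finset ι // #Y = m}) :
      Fintype.card (Y.1 → S) = Fintype.card S ^ m := by
    rw [Fintype.card_fun, Fintype.card_coe, Y.2]
  simp_rw [Fintype.card_sigma, hfiber, sum_const, smul_eq_mul, card_univ, Fintype.card_finset_len]

lemma card_mul_two_pow_le_of_inter_eq {β : Type*} [Fintype β] [DecidableEq β]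
    {𝒜 : Finset (Finset β)} {P : Finset β} (h : ∀ s ∈ 𝒜, ∀ t ∈ 𝒜, s ∩ P = t ∩ P) :
    #𝒜 * 2 ^ #P ≤ 2 ^ Fintype.card β := by
  have hcard : #𝒜 ≤ #Pᶜ.powerset := by
    refine card_le_card_of_injOn (· \ P) (fun s _ ↦ ?_) fun s hs t ht hst ↦ ?_
    · simp
    · rw [← sdiff_union_inter s P, ← sdiff_union_inter t P, h s hs t ht]
      exact congrArg (· ∪ t ∩ P) hst
  calc #𝒜 * 2 ^ #P ≤ 2 ^ #Pᶜ * 2 ^ #P := by grw [hcard, card_powerset]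
    _ = 2 ^ Fintype.card β := by rw [← pow_add, card_compl_add_card]

variable {ι : Type*} [Fintype ι] [DecidableEq ι]

lemma card_perm_eqOn (A : Finset ι) (τ : Equiv.Perm ι) :
    #{σ : Equiv.Perm ι | ∀ x ∈ A, σ x = τ x} = (Fintype.card ι - #A).factorial := by
  have e : {σ : Equiv.Perm ι // ∀ x ∈ A, σ x = τ x} ≃
      {σ : Equiv.Perm ι // ∀ x, ¬x ∉ A → σ x = x} :=
    (Equiv.mulLeft τ⁻¹).subtypeEquiv fun σ ↦ by simp [Equiv.symm_apply_eq]
  rw [← Fintype.card_subtype, Fintype.card_congr e,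
    ← Fintype.card_congr (Equiv.Perm.subtypeEquivSubtypePerm (· ∉ A)), Fintype.card_perm]
  simp

lemma card_perm_forall_notMem_le {A : Finset ι} {F : ι → Finset ι} {k : ℕ}
    (hF : ∀ x ∈ A, k ≤ #(F x)) :
    #{σ : Equiv.Perm ι | ∀ x ∈ A, σ x ∉ F x} ≤
      (Fintype.card ι - #A).factorial * (Fintype.card ι - k) ^ #A := by
  set 𝒮 : Finset (Equiv.Perm ι) := {σ | ∀ x ∈ A, σ x ∉ F x}
  let restrictions : Finset (A → ι) := Fintype.piFinset fun x : A ↦ (F x)ᶜ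
  have card_restrictions : #restrictions ≤ (Fintype.card ι - k) ^ #A := by
    rw [Fintype.card_piFinset, ← Fintype.card_coe A]
    refine prod_le_pow_card _ _ _ fun x _ ↦ ?_
    rw [card_compl]
    exact Nat.sub_le_sub_left (hF x x.2) _
  refine (card_le_mul_card_image_of_maps_to (f := fun σ (x : A) ↦ σ x) (t := restrictions) ?_ _
    fun g _ ↦ ?_).trans (Nat.mul_le_mul_left _ card_restrictions)
  · intro σ hσ
    simp only [restrictions, Fintype.mem_piFinset, mem_compl]
    exact fun x ↦ (mem_filter.1 hσ).2 x x.2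
  · obtain hempty | ⟨τ, hτ⟩ := {σ ∈ 𝒮 | (fun x : A ↦ σ x) = g}.eq_empty_or_nonempty
    · simp [hempty]
    · rw [← card_perm_eqOn A τ]
      refine card_le_card fun σ hσ ↦ ?_
      have hστ := (mem_filter.1 hσ).2.trans (mem_filter.1 hτ).2.symm
      exact mem_filter.2 ⟨mem_univ σ, fun x hx ↦ congrFun hστ ⟨x, hx⟩⟩

lemma factorial_sub_mul_pow_le_factorial_mul_exp {n a : ℕ} (h : 2 * a < n) :
    (((n - a).factorial * (n - 2 * a) ^ a : ℕ) : ℝ) ≤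
      n.factorial * Real.exp (-(a ^ 2 / n)) := by
  have hn : (0 : ℝ) < n := mod_cast (by omega : 0 < n)
  have h2a : (2 : ℝ) * a < n := mod_cast h
  have hfactorial : ((n - a).factorial : ℝ) * (n - a) ^ a ≤ n.factorial := by
    have := Nat.factorial_mul_pow_sub_le_factorial (Nat.sub_le n a)
    rw [Nat.sub_sub_self (by omega)] at this
    rw [← Nat.cast_sub (by omega)]
    exact_mod_cast this
  have hbase : (n : ℝ) - 2 * a ≤ (n - a) * Real.exp (-(a / n)) :=
    calc (n : ℝ) - 2 * a ≤ n - 2 * a + a ^ 2 / n := le_add_of_nonneg_right (by positivity)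
      _ = (n - a) * (-(a / n) + 1) := by field_simp; ring
      _ ≤ (n - a) * Real.exp (-(a / n)) :=
        mul_le_mul_of_nonneg_left (Real.add_one_le_exp _) (by linarith)
  push_cast [Nat.cast_sub h.le]
  calc ((n - a).factorial : ℝ) * (n - 2 * a) ^ a
      ≤ (n - a).factorial * ((n - a) * Real.exp (-(a / n))) ^ a := by
        gcongr
    _ = (n - a).factorial * (n - a) ^ a * Real.exp (-(a ^ 2 / n)) := by
        rw [mul_pow, ← Real.exp_nat_mul, ← mul_assoc]
        congr 2
        ring
    _ ≤ n.factorial * Real.exp (-(a ^ 2 / n)) := by gcongr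

lemma card_fun_perm_forall_notMem_le (κ : Type*) [Fintype κ] [DecidableEq κ] {A : Finset ι}
    {F : ι → Finset ι} (hF : ∀ x ∈ A, 2 * #A ≤ #(F x)) (hA : 2 * #A < Fintype.card ι) :
    (#{ω : κ → Equiv.Perm ι | ∀ i, ∀ x ∈ A, ω i x ∉ F x} : ℝ) ≤
      ((Fintype.card ι).factorial * Real.exp (-(#A ^ 2 / Fintype.card ι))) ^ Fintype.card κ := by
  have hpi : ({ω : κ → Equiv.Perm ι | ∀ i, ∀ x ∈ A, ω i x ∉ F x} : Finset _) =
      Fintype.piFinset fun _ : κ ↦ {σ : Equiv.Perm ι | ∀ x ∈ A, σ x ∉ F x} := by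
    ext ω
    simp
  rw [hpi, Fintype.card_piFinset, prod_const, card_univ, Nat.cast_pow]
  gcongr
  exact (mod_cast card_perm_forall_notMem_le hF :
    (#{σ : Equiv.Perm ι | ∀ x ∈ A, σ x ∉ F x} : ℝ) ≤ _).trans
      (factorial_sub_mul_pow_le_factorial_mul_exp hA)

end Counting

section GraphMetrics

variable {V : Type*}

lemma ball_add_two_subset_biUnion_ball (G : SimpleGraph V) (c : V) (r : ℕ) :
    G.ball c (r + 2 : ℕ) ⊆ ⋃ z ∈ insert c (G.neighborSet c), G.ball z (r + 1 : ℕ) := by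
  intro y hy
  rw [SimpleGraph.mem_ball, SimpleGraph.edist_comm] at hy
  obtain ⟨p, hp⟩ := SimpleGraph.exists_walk_of_edist_ne_top (ne_top_of_lt hy)
  rw [← hp, Nat.cast_lt] at hy
  cases p with
  | nil => exact Set.mem_biUnion (Set.mem_insert c _) (SimpleGraph.mem_ball_self (by simp))
  | cons hadj q =>
    refine Set.mem_biUnion (Set.mem_insert_of_mem c hadj) ?_
    rw [SimpleGraph.mem_ball, SimpleGraph.edist_comm]
    refine q.edist_le.trans_lt (Nat.cast_lt.2 ?_)
    rw [SimpleGraph.Walk.length_cons] at hy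
    omega

lemma ncard_ball_le_pow [Finite V] {G : SimpleGraph V} {Δ : ℕ}
    (hΔ : ∀ x, (G.neighborSet x).ncard ≤ Δ) (c : V) (r : ℕ) :
    (G.ball c (r + 1 : ℕ)).ncard ≤ (Δ + 1) ^ r := by
  induction r generalizing c with
  | zero => simp
  | succ r ih =>
    set N : Set V := insert c (G.neighborSet c)
    have hN : N.Finite := N.toFinite
    calc (G.ball c (r + 2 : ℕ)).ncard
        ≤ (⋃ z ∈ N, G.ball z (r + 1 : ℕ)).ncard :=
          Set.ncard_le_ncard (ball_add_two_subset_biUnion_ball G c r)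
      _ ≤ ∑ z ∈ hN.toFinset, (G.ball z (r + 1 : ℕ)).ncard := by
          simpa only [Set.Finite.mem_toFinset] using
            hN.toFinset.set_ncard_biUnion_le fun z ↦ G.ball z (r + 1 : ℕ)
      _ ≤ #hN.toFinset * (Δ + 1) ^ r := sum_le_card_nsmul _ _ _ fun z _ ↦ ih z
      _ ≤ (Δ + 1) ^ (r + 1) := by
          rw [pow_succ', ← Set.ncard_eq_toFinset_card N hN]
          gcongr
          exact (Set.ncard_insert_le c _).trans (Nat.add_le_add_right (hΔ c) 1)

/-- The graph metric of `G` truncated at `T`, so that vertices in different components are at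
distance `T`. -/
noncomputable def truncDist (G : SimpleGraph V) (T : ℕ) (x y : V) : ℝ :=
  (min (G.edist x y) T).toNat

lemma min_edist_natCast_ne_top (G : SimpleGraph V) (T : ℕ) (x y : V) :
    min (G.edist x y) T ≠ ⊤ :=
  ne_top_of_le_ne_top (ENat.natCast_ne_top T) (min_le_right _ _)

lemma truncDist_nonneg (G : SimpleGraph V) (T : ℕ) (x y : V) : 0 ≤ truncDist G T x y :=
  Nat.cast_nonneg _

lemma truncDist_le (G : SimpleGraph V) (T : ℕ) (x y : V) : truncDist G T x y ≤ T :=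
  Nat.cast_le.2 (ENat.toNat_le_of_le_natCast (min_le_right _ _))

lemma truncDist_le_one_of_adj {G : SimpleGraph V} {x y : V} (h : G.Adj x y) (T : ℕ) :
    truncDist G T x y ≤ 1 := by
  have hmin : min (G.edist x y) T ≤ (1 : ℕ) :=
    (min_le_left _ _).trans (SimpleGraph.edist_eq_one_iff_adj.2 h).le
  simpa only [truncDist, Nat.cast_one] using
    Nat.cast_le (α := ℝ).2 (ENat.toNat_le_of_le_natCast hmin)

lemma truncDist_lt_iff {G : SimpleGraph V} {T : ℕ} {x y : V} :
    truncDist G T x y < T ↔ G.edist x y < T := by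
  rw [truncDist, Nat.cast_lt, ← ENat.natCast_lt_natCast,
    ENat.natCast_toNat (min_edist_natCast_ne_top G T x y)]
  simp

lemma isMetricOn_truncDist {V : Type} (G : SimpleGraph V) {T : ℕ} (hT : 0 < T) :
    IsMetricOn (truncDist G T) := by
  refine ⟨fun x ↦ by simp [truncDist], fun x y hxy ↦ ?_, fun x y ↦ ?_, fun x y z ↦ ?_⟩
  · have hpos : 0 < min (G.edist x y) T := lt_min (G.edist_pos_of_ne hxy) (mod_cast hT)
    exact Nat.cast_pos.2 (ENat.toNat_pos hpos.ne' (min_edist_natCast_ne_top G T x y))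
  · rw [truncDist, truncDist, SimpleGraph.edist_comm]
  · have htriangle : min (G.edist x z) T ≤ min (G.edist x y) T + min (G.edist y z) T := by
      grw [G.edist_triangle (v := y)]
      obtain h | h := le_total (T : ℕ∞) (G.edist x y)
      · exact (min_le_right _ _).trans (by simp [h])
      obtain h' | h' := le_total (T : ℕ∞) (G.edist y z)
      · exact (min_le_right _ _).trans (by simp [h'])
      · exact (min_le_left _ _).trans (by simp [h, h'])
    have hfin := min_edist_natCast_ne_top G T
    rw [truncDist, truncDist, truncDist, ← Nat.cast_add, Nat.cast_le,
      ← ENat.toNat_add (hfin x y) (hfin y z)]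
    exact ENat.toNat_le_toNat htriangle (by simp [hfin])

/-- The Schreier graph of a family of permutations: distinct vertices are adjacent if some
permutation of the family sends one to the other. -/
def permGraph {κ : Type*} (ω : κ → Equiv.Perm V) : SimpleGraph V :=
  SimpleGraph.fromRel fun x y ↦ ∃ i, ω i x = y

lemma permGraph_adj_apply {κ : Type*} {ω : κ → Equiv.Perm V} {i : κ} {x : V} (h : x ≠ ω i x) :
    (permGraph ω).Adj x (ω i x) :=
  (SimpleGraph.fromRel_adj _ _ _).2 ⟨h, Or.inl ⟨i, rfl⟩⟩

lemma ncard_neighborSet_permGraph_le {κ : Type*} [Fintype κ] (ω : κ → Equiv.Perm V) (x : V) :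
    ((permGraph ω).neighborSet x).ncard ≤ 2 * Fintype.card κ := by
  have hsubset : (permGraph ω).neighborSet x ⊆
      Set.range (fun i ↦ ω i x) ∪ Set.range fun i ↦ (ω i).symm x := by
    intro y hy
    rw [SimpleGraph.mem_neighborSet, permGraph, SimpleGraph.fromRel_adj] at hy
    obtain ⟨-, ⟨i, hi⟩ | ⟨i, hi⟩⟩ := hy
    · exact Or.inl ⟨i, hi⟩
    · exact Or.inr ⟨i, (Equiv.symm_apply_eq _).2 hi.symm⟩
  have hrange (f : κ → V) : (Set.range f).ncard ≤ Fintype.card κ := by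
    rw [← Set.image_univ, ← Nat.card_eq_fintype_card, ← Set.ncard_univ]
    exact Set.ncard_image_le
  calc ((permGraph ω).neighborSet x).ncard
      ≤ (Set.range (fun i ↦ ω i x) ∪ Set.range fun i ↦ (ω i).symm x).ncard :=
        Set.ncard_le_ncard hsubset
    _ ≤ Fintype.card κ + Fintype.card κ :=
        (Set.ncard_union_le _ _).trans (add_le_add (hrange _) (hrange _))
    _ = 2 * Fintype.card κ := (two_mul _).symm

end GraphMetrics

section Embeddings

variable (X : Type*) [NormedAddCommGroup X]

/-- The subset `Y` of `(ι, d)` admits an `α`-embedding into `X`. The map is taken on all of `ι`,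
but only its values on `Y` matter. -/
def EmbedsWithDistortion {ι : Type*} (α : ℝ) (d : ι → ι → ℝ) (Y : Finset ι) : Prop :=
  ∃ f : ι → X, ∃ s : ℝ, 0 < s ∧
    ∀ x ∈ Y, ∀ y ∈ Y, s * d x y ≤ ‖f x - f y‖ ∧ ‖f x - f y‖ ≤ α * s * d x y

/-- Some metric on `n` points has no subset of more than `B` points that `α`-embeds into `X`;
that is, the Ramsey function of `X` at distortion `α` is at most `B` at `n`. -/
def HasRamseyBound (α : ℝ) (n : ℕ) (B : ℝ) : Prop :=
  ∃ d : Fin n → Fin n → ℝ, IsMetricOn d ∧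
    ∀ Y : Finset (Fin n), EmbedsWithDistortion X α d Y → (#Y : ℝ) ≤ B

variable {X} {ι : Type*}

/-- The values of `φ` on `Y` distort `d` by a factor in `[1, α]`, up to an additive error `ε`. -/
def IsApproxEmbeddingOn (α ε : ℝ) (d : ι → ι → ℝ) (φ : ι → X) (Y : Finset ι) : Prop :=
  ∀ x ∈ Y, ∀ y ∈ Y, d x y ≤ ‖φ x - φ y‖ + ε ∧ ‖φ x - φ y‖ ≤ α * d x y + ε

lemma EmbedsWithDistortion.mono {α : ℝ} {d : ι → ι → ℝ} {Y Z : Finset ι} (hYZ : Y ⊆ Z)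
    (h : EmbedsWithDistortion X α d Z) : EmbedsWithDistortion X α d Y := by
  obtain ⟨f, s, hs, hf⟩ := h
  exact ⟨f, s, hs, fun x hx y hy ↦ hf x (hYZ hx) y (hYZ hy)⟩

lemma HasRamseyBound.mono {α : ℝ} {n : ℕ} {B B' : ℝ} (hB : B ≤ B')
    (h : HasRamseyBound X α n B) : HasRamseyBound X α n B' := by
  obtain ⟨d, hd, hY⟩ := h
  exact ⟨d, hd, fun Y hemb ↦ (hY Y hemb).trans hB⟩

lemma hasRamseyBound_self (X : Type*) [NormedAddCommGroup X] (α : ℝ) (n : ℕ) :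
    HasRamseyBound X α n n :=
  ⟨truncDist ⊥ 1, isMetricOn_truncDist ⊥ one_pos, fun Y _ ↦ mod_cast card_finset_fin_le Y⟩

lemma IsApproxEmbeddingOn.of_norm_sub_le {α ε : ℝ} {d : ι → ι → ℝ} {g φ : ι → X} {Y : Finset ι}
    (hg : IsApproxEmbeddingOn α 0 d g Y) (hφ : ∀ x ∈ Y, ‖g x - φ x‖ ≤ ε / 2) :
    IsApproxEmbeddingOn α ε d φ Y := by
  intro x hx y hy
  have hclose : |‖g x - g y‖ - ‖φ x - φ y‖| ≤ ε :=
    calc |‖g x - g y‖ - ‖φ x - φ y‖| ≤ ‖(g x - g y) - (φ x - φ y)‖ := abs_norm_sub_norm_le _ _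
      _ = ‖(g x - φ x) - (g y - φ y)‖ := by rw [sub_sub_sub_comm]
      _ ≤ ε / 2 + ε / 2 := (norm_sub_le _ _).trans (add_le_add (hφ x hx) (hφ y hy))
      _ = ε := add_halves ε
  obtain ⟨hlower, hupper⟩ := hg x hx y hy
  constructor <;> linarith [abs_le.1 hclose]

variable [NormedSpace ℝ X]

lemma EmbedsWithDistortion.exists_isApproxEmbeddingOn_zero {α R : ℝ} {d : ι → ι → ℝ} {Y : Finset ι}
    (hY : Y.Nonempty) (hd : ∀ x y, α * d x y ≤ R) (h : EmbedsWithDistortion X α d Y) :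
    ∃ g : ι → X, (∀ x ∈ Y, g x ∈ closedBall 0 R) ∧ IsApproxEmbeddingOn α 0 d g Y := by
  obtain ⟨f, s, hs, hf⟩ := h
  obtain ⟨x₀, hx₀⟩ := hY
  have norm_le {x y : ι} (hx : x ∈ Y) (hy : y ∈ Y) : s⁻¹ * ‖f x - f y‖ ≤ α * d x y := by
    rw [inv_mul_le_iff₀ hs]
    linarith [(hf x hx y hy).2]
  refine ⟨fun x ↦ s⁻¹ • (f x - f x₀), fun x hx ↦ ?_, fun x hx y hy ↦ ?_⟩
  · rw [mem_closedBall_zero_iff, norm_smul, Real.norm_of_nonneg (by positivity)]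
    exact (norm_le hx hx₀).trans (hd x x₀)
  · rw [← smul_sub, sub_sub_sub_cancel_right, norm_smul, Real.norm_of_nonneg (by positivity),
      add_zero, add_zero]
    exact ⟨(le_inv_mul_iff₀ hs).2 (hf x hx y hy).1, norm_le hx hy⟩

lemma EmbedsWithDistortion.exists_isApproxEmbeddingOn_of_isCover {α R : ℝ} {ε : ℝ≥0} {d : ι → ι → ℝ}
    {S : Finset X} (hS : IsCover (ε / 2) (closedBall 0 R) (S : Set X)) {Y : Finset ι}
    (hY : Y.Nonempty) (hd : ∀ x y, α * d x y ≤ R) (h : EmbedsWithDistortion X α d Y) :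
    ∃ ψ : Y → S,
      IsApproxEmbeddingOn α ε d (Function.extend Subtype.val (fun y ↦ (ψ y : X)) 0) Y := by
  obtain ⟨g, hgR, hg⟩ := h.exists_isApproxEmbeddingOn_zero hY hd
  have hround (y : Y) : ∃ z : S, ‖g y - z‖ ≤ ε / 2 := by
    obtain ⟨z, hzS, hz⟩ := Set.mem_iUnion₂.1 (hS.subset_iUnion_closedBall (hgR y y.2))
    exact ⟨⟨z, hzS⟩, by simpa [dist_eq_norm] using hz⟩
  choose ψ hψ using hround
  refine ⟨ψ, hg.of_norm_sub_le fun x hx ↦ ?_⟩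
  rw [Subtype.val_injective.extend_apply (fun y ↦ (ψ y : X)) 0 ⟨x, hx⟩]
  exact hψ ⟨x, hx⟩

open scoped Classical in
lemma hasRamseyBound_of_card_isApproxEmbeddingOn_le [FiniteDimensional ℝ X] {Ω : Type*}
    [Fintype Ω] {n k : ℕ} {α R K ε : ℝ} (hR : 0 ≤ R) (hK₀ : 0 ≤ K) (hε : 0 < ε)
    {d : Ω → Fin n → Fin n → ℝ}
    (hmetric : ∀ ω, IsMetricOn (d ω)) (hd : ∀ ω x y, α * d ω x y ≤ R)
    (hK : ∀ Y : Finset (Fin n), #Y = k + 1 → ∀ φ : Fin n → X,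
      (#{ω | IsApproxEmbeddingOn α ε (d ω) φ Y} : ℝ) ≤ K)
    (hcard : n.choose (k + 1) * ((1 + 4 * R / ε) ^ finrank ℝ X) ^ (k + 1) * K < Fintype.card Ω) :
    HasRamseyBound X α n k := by
  lift ε to ℝ≥0 using hε.le
  obtain ⟨S, hScard, hS⟩ :=
    exists_finset_isCover_closedBall (half_pos (NNReal.coe_pos.1 hε)) hR (0 : X)
  have hradius : 1 + 2 * R / (ε / 2 : ℝ≥0) = 1 + 4 * R / ε := by push_cast; field_simp; ring
  let bad (p : Σ Y : {Y : Finset (Fin n) // #Y = k + 1}, (Y.1 → S)) : Finset Ω :=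
    {ω | IsApproxEmbeddingOn α ε (d ω) (Function.extend Subtype.val (fun y ↦ (p.2 y : X)) 0) p.1.1}
  obtain ⟨ω, hω⟩ := exists_forall_notMem_of_card_mul_lt bad (fun p ↦ hK p.1.1 p.1.2 _) <| by
    rw [card_sigma_powersetCard_fun, Fintype.card_fin, Fintype.card_coe]
    push_cast
    refine lt_of_le_of_lt ?_ hcard
    grw [hScard, hradius]
  refine ⟨d ω, hmetric ω, fun Y hY ↦ ?_⟩
  by_contra! hlt
  obtain ⟨Z, hZY, hZ⟩ := exists_subset_card_eq (Nat.succ_le_of_lt (Nat.cast_lt.1 hlt))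
  obtain ⟨ψ, hψ⟩ := (hY.mono hZY).exists_isApproxEmbeddingOn_of_isCover hS
    (card_pos.1 (hZ ▸ k.succ_pos)) (hd ω)
  exact hω ⟨⟨Z, hZ⟩, ψ⟩ (mem_filter.2 ⟨mem_univ ω, hψ⟩)

end Embeddings

section SmallDistortion

lemma truncDist_lt_two_iff_adj {V : Type*} {G : SimpleGraph V} {x y : V} (hxy : x ≠ y) :
    truncDist G 2 x y < 2 ↔ G.Adj x y := by
  refine ⟨fun h ↦ ?_, fun h ↦ (truncDist_le_one_of_adj h 2).trans_lt one_lt_two⟩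
  have hlt : G.edist x y < (2 : ℕ) := truncDist_lt_iff.1 (mod_cast h)
  have hpos := G.edist_pos_of_ne hxy
  rw [← SimpleGraph.edist_eq_one_iff_adj]
  lift G.edist x y to ℕ using ne_top_of_lt hlt with e
  norm_cast at hlt hpos ⊢
  omega

variable {X : Type*} [NormedAddCommGroup X]

lemma IsApproxEmbeddingOn.adj_iff_norm_sub_le {V : Type*} {G : SimpleGraph V} {α ε : ℝ}
    {φ : V → X} {Y : Finset V} (h : IsApproxEmbeddingOn α ε (truncDist G 2) φ Y) (hα : 0 ≤ α)
    (hε : α + 2 * ε < 2) {x y : V} (hx : x ∈ Y) (hy : y ∈ Y) (hxy : x ≠ y) :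
    G.Adj x y ↔ ‖φ x - φ y‖ ≤ α + ε := by
  obtain ⟨hlower, hupper⟩ := h x hx y hy
  refine ⟨fun hadj ↦ ?_, fun hle ↦ (truncDist_lt_two_iff_adj hxy).1 (by linarith)⟩
  have := mul_le_of_le_one_right hα (truncDist_le_one_of_adj hadj 2)
  linarith

open scoped Classical in
lemma card_edgeSet_isApproxEmbeddingOn_le {V : Type*} [Fintype V] {α ε : ℝ} (hα : 0 ≤ α)
    (hε : α + 2 * ε < 2) (φ : V → X) (Y : Finset V) :
    #{ω : Finset (Sym2 V) | IsApproxEmbeddingOn α ε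
        (truncDist (SimpleGraph.fromEdgeSet (ω : Set (Sym2 V))) 2) φ Y} * 2 ^ (#Y).choose 2 ≤
      2 ^ Fintype.card (Sym2 V) := by
  rw [← Sym2.card_image_offDiag]
  refine card_mul_two_pow_le_of_inter_eq fun ω hω ω' hω' ↦ ?_
  ext e
  simp only [mem_inter, and_congr_left_iff, mem_image, mem_offDiag]
  rintro ⟨⟨x, y⟩, ⟨hx, hy, hxy⟩, rfl⟩
  have hadj := ((mem_filter.1 hω).2.adj_iff_norm_sub_le hα hε hx hy hxy).trans
    ((mem_filter.1 hω').2.adj_iff_norm_sub_le hα hε hx hy hxy).symm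
  simpa [SimpleGraph.fromEdgeSet_adj, hxy] using hadj

lemma choose_mul_pow_lt_two_pow_choose_two {n k : ℕ} {q : ℝ} (hq : 0 ≤ q)
    (h : (n * q) ^ 2 < 2 ^ k) : n.choose (k + 1) * q ^ (k + 1) < 2 ^ (k + 1).choose 2 := by
  have hchoose : (k + 1).choose 2 * 2 = k * (k + 1) := by
    rw [Nat.choose_two_right, Nat.add_sub_cancel, mul_comm k,
      Nat.div_mul_cancel (mul_comm k (k + 1) ▸ Nat.even_mul_succ_self k).two_dvd]
  calc (n.choose (k + 1) : ℝ) * q ^ (k + 1) ≤ n ^ (k + 1) * q ^ (k + 1) := by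
        gcongr
        exact_mod_cast Nat.choose_le_pow n (k + 1)
    _ = (n * q) ^ (k + 1) := (mul_pow _ _ _).symm
    _ < 2 ^ (k + 1).choose 2 := by
        refine lt_of_pow_lt_pow_left₀ 2 (by positivity) ?_
        rw [pow_right_comm, ← pow_mul 2, hchoose, pow_mul]
        exact pow_lt_pow_left₀ h (by positivity) k.succ_ne_zero

variable [NormedSpace ℝ X] [FiniteDimensional ℝ X]

lemma hasRamseyBound_of_sq_lt_two_pow {α : ℝ} (hα : 0 ≤ α) (hα2 : α < 2) {n k : ℕ}
    (h : (n * (1 + 48 / (2 - α)) ^ finrank ℝ X) ^ 2 < 2 ^ k) : HasRamseyBound X α n k := by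
  have hgap : 0 < 2 - α := sub_pos.2 hα2
  have hε : α + 2 * ((2 - α) / 3) < 2 := by linarith
  have hradius : 1 + 48 / (2 - α) = 1 + 4 * 4 / ((2 - α) / 3) := by field_simp; norm_num
  let d (ω : Finset (Sym2 (Fin n))) : Fin n → Fin n → ℝ := truncDist (.fromEdgeSet ω) 2
  refine hasRamseyBound_of_card_isApproxEmbeddingOn_le (d := d) (R := 4)
    (K := 2 ^ Fintype.card (Sym2 (Fin n)) / 2 ^ (k + 1).choose 2) (by norm_num) (by positivity)
    (by positivity : 0 < (2 - α) / 3) (fun ω ↦ isMetricOn_truncDist _ two_pos)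
    (fun ω x y ↦ ?_) (fun Y hY φ ↦ ?_) ?_
  · have hle : d ω x y ≤ 2 := truncDist_le _ 2 x y
    exact (mul_le_mul hα2.le hle (truncDist_nonneg _ _ _ _) zero_le_two).trans (by norm_num)
  · rw [le_div_iff₀ (by positivity), ← hY]
    exact_mod_cast card_edgeSet_isApproxEmbeddingOn_le hα hε φ Y
  · rw [← hradius, mul_div_left_comm, Fintype.card_finset, Nat.cast_pow, Nat.cast_two]
    refine mul_lt_of_lt_one_right (by positivity) ((div_lt_one (by positivity)).2 ?_)
    exact choose_mul_pow_lt_two_pow_choose_two (by positivity) h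

lemma sq_lt_two_pow_floor_logb {n h : ℕ} (hn : n ≠ 0) (hh : h ≠ 0) {q Q : ℝ} (hq : 0 < q)
    (hQ : 2 * q ≤ Q) :
    (n * q ^ h) ^ 2 < 2 ^ ⌊2 * Real.logb 2 n + 2 * h * Real.logb 2 Q⌋₊ := by
  have hh' : (1 : ℝ) ≤ h := mod_cast Nat.one_le_iff_ne_zero.2 hh
  have hlogQ : Real.logb 2 q + 1 ≤ Real.logb 2 Q :=
    calc Real.logb 2 q + 1 = Real.logb 2 (2 * q) := by
          rw [Real.logb_mul two_ne_zero hq.ne', Real.logb_self_eq_one one_lt_two, add_comm]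
      _ ≤ Real.logb 2 Q := Real.logb_le_logb_of_le one_lt_two (by positivity) hQ
  rw [← Real.logb_lt_logb_iff one_lt_two (by positivity) (by positivity), Real.logb_pow,
    Real.logb_pow, Real.logb_self_eq_one one_lt_two, Real.logb_mul (by positivity) (by positivity),
    Real.logb_pow, mul_one]
  have hfloor := Nat.lt_floor_add_one (2 * Real.logb 2 n + 2 * h * Real.logb 2 Q)
  have := mul_le_mul_of_nonneg_left hlogQ (by positivity : (0 : ℝ) ≤ h)
  push_cast
  linarith

lemma hasRamseyBound_logb {α C : ℝ} (hC : 98 ≤ C) (hα : 1 ≤ α) (hα2 : α < 2) {n : ℕ} (hn : n ≠ 0)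
    (hX : finrank ℝ X ≠ 0) :
    HasRamseyBound X α n
      (2 * Real.logb 2 n + 2 * finrank ℝ X * Real.logb 2 (C / (2 - α))) := by
  have hgap : 0 < 2 - α := sub_pos.2 hα2
  have hlogn : 0 ≤ Real.logb 2 n :=
    Real.logb_nonneg one_lt_two (mod_cast Nat.one_le_iff_ne_zero.2 hn)
  have hlogC : 0 ≤ Real.logb 2 (C / (2 - α)) :=
    Real.logb_nonneg one_lt_two ((one_le_div hgap).2 (by linarith))
  refine (hasRamseyBound_of_sq_lt_two_pow (by linarith) hα2 ?_).mono (Nat.floor_le (by positivity))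
  refine sq_lt_two_pow_floor_logb hn hX (by positivity) ?_
  rw [le_div_iff₀ hgap, mul_assoc, add_mul, div_mul_cancel₀ _ hgap.ne']
  linarith

end SmallDistortion

section Estimates

lemma choose_le_exp_one_mul_div_pow (n : ℕ) {m : ℕ} (hm : 0 < m) :
    (n.choose m : ℝ) ≤ (Real.exp 1 * (n / m)) ^ m := by
  have hstirling : (m : ℝ) ^ m / m.factorial ≤ Real.exp 1 ^ m := by
    simpa [← Real.exp_nat_mul] using Real.pow_div_factorial_le_exp m m.cast_nonneg m
  calc (n.choose m : ℝ) ≤ n ^ m / m.factorial := Nat.choose_le_pow_div m n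
    _ = m ^ m / m.factorial * (n / m) ^ m := by rw [div_pow]; field_simp
    _ ≤ Real.exp 1 ^ m * (n / m) ^ m := by gcongr
    _ = (Real.exp 1 * (n / m)) ^ m := (mul_pow _ _ _).symm

lemma exp_one_mul_le_exp {x u : ℝ} (hx : x ≤ u) : Real.exp 1 * x ≤ Real.exp u :=
  calc Real.exp 1 * x ≤ Real.exp 1 * Real.exp (u - 1) := by
        gcongr
        linarith [Real.add_one_le_exp (u - 1)]
    _ = Real.exp u := by rw [← Real.exp_add, add_sub_cancel]

lemma choose_mul_pow_mul_exp_lt_one {n m a D : ℕ} {u w q : ℝ} (hu : 1 ≤ u) (hw : 1 / 2 ≤ w)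
    (hn : 0 < n) (hma : m ≤ 8 * a) (hq : 0 ≤ q) (hqw : q ≤ Real.exp (6 * w)) (hD : u ^ 2 ≤ D)
    (hm : 1024 * w * n < m * u) :
    n.choose m * q ^ m * Real.exp (-(a ^ 2 / n)) ^ D < 1 := by
  have hn' : (0 : ℝ) < n := mod_cast hn
  have hm_pos : (0 : ℝ) < m := by
    by_contra! hm0
    nlinarith
  have hm' : 0 < m := mod_cast hm_pos
  have hchoose : (n.choose m : ℝ) ≤ Real.exp u ^ m := by
    refine (choose_le_exp_one_mul_div_pow n hm').trans ?_
    gcongr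
    exact exp_one_mul_le_exp ((div_le_iff₀ hm_pos).2 (by nlinarith))
  have hexp : Real.exp (-(a ^ 2 / n)) ^ D ≤ Real.exp (-(u ^ 2 * m / (64 * n))) ^ m := by
    have ha : (m / 8 : ℝ) ≤ a := by
      rw [div_le_iff₀ (by norm_num)]
      exact_mod_cast mul_comm 8 a ▸ hma
    rw [← Real.exp_nat_mul, ← Real.exp_nat_mul, Real.exp_le_exp, mul_neg, mul_neg, neg_le_neg_iff]
    calc (m * (u ^ 2 * m / (64 * n)) : ℝ) = u ^ 2 * ((m / 8) ^ 2 / n) := by field_simp; norm_num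
      _ ≤ (D * (a ^ 2 / n) : ℝ) := by gcongr
  have hexponent : u + 6 * w < u ^ 2 * m / (64 * n) := by
    rw [lt_div_iff₀ (by positivity)]
    calc (u + 6 * w) * (64 * n) ≤ 8 * (u * w) * (64 * n) := by gcongr; nlinarith
      _ ≤ u * (1024 * w * n) := by nlinarith [show 0 ≤ u * w * n by positivity]
      _ < u * (m * u) := by gcongr
      _ = u ^ 2 * m := by ring
  calc (n.choose m : ℝ) * q ^ m * Real.exp (-(a ^ 2 / n)) ^ D
      ≤ Real.exp u ^ m * Real.exp (6 * w) ^ m * Real.exp (-(u ^ 2 * m / (64 * n))) ^ m := by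
        gcongr
    _ = Real.exp (u + 6 * w - u ^ 2 * m / (64 * n)) ^ m := by
        rw [← mul_pow, ← mul_pow, ← Real.exp_add, ← Real.exp_add, sub_eq_add_neg]
    _ < 1 := pow_lt_one₀ (Real.exp_pos _).le (Real.exp_lt_one_iff.2 (by linarith)) hm'.ne'

lemma two_mul_add_one_pow_le_rpow {n D r : ℕ} {α : ℝ} (hn : n ≠ 0) (hα : 1 ≤ α)
    (hu : 3 ≤ (n : ℝ) ^ ((1 / 10) / α)) (hD : (D : ℝ) ≤ ((n : ℝ) ^ ((1 / 10) / α)) ^ 2 + 1)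
    (hr : (r : ℝ) ≤ 2 * α) :
    (2 * D + 1 : ℝ) ^ r ≤ (n : ℝ) ^ (1 - (1 / 10) / α) := by
  have hn1 : (1 : ℝ) ≤ n := mod_cast Nat.one_le_iff_ne_zero.2 hn
  set u : ℝ := (n : ℝ) ^ ((1 / 10) / α)
  have hα' : (1 / 10) / α ≤ 1 / 10 := div_le_self (by norm_num) hα
  calc (2 * D + 1 : ℝ) ^ r ≤ (u ^ 3) ^ r := by
        gcongr
        nlinarith
    _ = u ^ (3 * r : ℝ) := by rw [← pow_mul, ← Real.rpow_natCast]; norm_cast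
    _ ≤ u ^ (6 * α) := Real.rpow_le_rpow_of_exponent_le (by linarith) (by linarith)
    _ = (n : ℝ) ^ (6 / 10 : ℝ) := by
        rw [← Real.rpow_mul n.cast_nonneg]
        congr 1
        field_simp
    _ ≤ (n : ℝ) ^ (1 - (1 / 10) / α) :=
        Real.rpow_le_rpow_of_exponent_le hn1 (by linarith)

lemma pow_le_exp_mul_log {q α : ℝ} (h : ℕ) (hα : 2 ≤ α) (hq : 0 ≤ q) (hqα : q ≤ 25 * α) :
    q ^ h ≤ Real.exp (6 * (h * Real.log α)) := by
  have hα5 : (2 : ℝ) ^ 5 ≤ α ^ 5 := pow_le_pow_left₀ zero_le_two hα 5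
  have hα6 : q ≤ α ^ 6 := by nlinarith
  calc q ^ h ≤ (α ^ 6) ^ h := by gcongr
    _ = Real.exp (6 * (h * Real.log α)) := by
        rw [mul_left_comm, Real.exp_nat_mul, ← Real.log_rpow (by linarith),
          Real.exp_log (by positivity)]
        norm_cast

lemma half_le_natCast_mul_log {h : ℕ} (hh : h ≠ 0) {α : ℝ} (hα : 2 ≤ α) :
    1 / 2 ≤ h * Real.log α := by
  have hlog : Real.log 2 ≤ Real.log α := Real.log_le_log two_pos hα
  have hh1 : (1 : ℝ) ≤ h := mod_cast Nat.one_le_iff_ne_zero.2 hh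
  nlinarith [Real.log_two_gt_d9]

end Estimates

section LargeDistortion

variable {V X : Type*} [NormedAddCommGroup X]

open scoped Classical in
/-- The points of `Y` whose image under `φ` is at distance more than `t` from the image of `x`. -/
noncomputable def farPoints (φ : V → X) (t : ℝ) (Y : Finset V) (x : V) : Finset V :=
  {y ∈ Y | t < ‖φ x - φ y‖}

lemma IsApproxEmbeddingOn.card_le_card_farPoints_add [Finite V] {G : SimpleGraph V} {Δ r : ℕ}
    (hΔ : ∀ x, (G.neighborSet x).ncard ≤ Δ) {α ε t : ℝ} (ht : t + ε < r + 1) {φ : V → X}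
    {Y : Finset V} (h : IsApproxEmbeddingOn α ε (truncDist G (r + 1)) φ Y) {x : V} (hx : x ∈ Y) :
    #Y ≤ #(farPoints φ t Y x) + (Δ + 1) ^ r := by
  have hsubset : (Y : Set V) ⊆ farPoints φ t Y x ∪ G.ball x (r + 1 : ℕ) := by
    intro y hy
    by_cases hfar : t < ‖φ x - φ y‖
    · exact Or.inl (mem_coe.2 (mem_filter.2 ⟨hy, hfar⟩))
    · refine Or.inr ?_
      rw [SimpleGraph.mem_ball, SimpleGraph.edist_comm, ← truncDist_lt_iff]
      push_cast
      linarith [(h x hx y hy).1]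
  calc #Y = (Y : Set V).ncard := (Set.ncard_coe_finset Y).symm
    _ ≤ (farPoints φ t Y x : Set V).ncard + (G.ball x (r + 1 : ℕ)).ncard :=
        (Set.ncard_le_ncard hsubset).trans (Set.ncard_union_le _ _)
    _ ≤ #(farPoints φ t Y x) + (Δ + 1) ^ r := by
        grw [Set.ncard_coe_finset, ncard_ball_le_pow hΔ]

variable {κ : Type*}

lemma IsApproxEmbeddingOn.apply_notMem_farPoints {ω : κ → Equiv.Perm V} {T : ℕ} {α ε : ℝ}
    (hα : 0 ≤ α) (hε : 0 ≤ ε) {φ : V → X} {Y : Finset V}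
    (h : IsApproxEmbeddingOn α ε (truncDist (permGraph ω) T) φ Y) {x : V} (hx : x ∈ Y) (i : κ) :
    ω i x ∉ farPoints φ (α + ε) Y x := by
  intro hmem
  obtain ⟨hy, hfar⟩ := mem_filter.1 hmem
  obtain hfix | hmove := eq_or_ne x (ω i x)
  · rw [← hfix, sub_self, norm_zero] at hfar
    linarith
  · have := mul_le_of_le_one_right hα (truncDist_le_one_of_adj (permGraph_adj_apply hmove) T)
    linarith [(h x hx _ hy).2]

open scoped Classical in
lemma card_perm_isApproxEmbeddingOn_le [Fintype V] [DecidableEq V] [Fintype κ] [DecidableEq κ]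
    {r a : ℕ} {α ε : ℝ} (hα : 0 ≤ α) (hε : 0 ≤ ε) (hr : α + 2 * ε < r + 1) (φ : V → X)
    {Y : Finset V} (hY : 2 * a + (2 * Fintype.card κ + 1) ^ r ≤ #Y) :
    (#{ω : κ → Equiv.Perm V |
        IsApproxEmbeddingOn α ε (truncDist (permGraph ω) (r + 1)) φ Y} : ℝ) ≤
      ((Fintype.card V).factorial * Real.exp (-(a ^ 2 / Fintype.card V))) ^ Fintype.card κ := by
  set bad : Finset (κ → Equiv.Perm V) :=
    {ω | IsApproxEmbeddingOn α ε (truncDist (permGraph ω) (r + 1)) φ Y}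
  -- The sets of far points depend on `φ` only, so one bad `ω₀` bounds them below for all `ω`.
  obtain hempty | ⟨ω₀, hω₀⟩ := bad.eq_empty_or_nonempty
  · rw [hempty, card_empty, Nat.cast_zero]
    positivity
  have hball : 0 < (2 * Fintype.card κ + 1) ^ r := by positivity
  obtain ⟨A, hAY, rfl⟩ := exists_subset_card_eq (show a ≤ #Y by omega)
  have hfar (x : V) (hx : x ∈ A) : 2 * #A ≤ #(farPoints φ (α + ε) Y x) := by
    have := (mem_filter.1 hω₀).2.card_le_card_farPoints_add (t := α + ε)
      (ncard_neighborSet_permGraph_le ω₀) (by linarith) (hAY hx)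
    omega
  refine le_trans ?_ (card_fun_perm_forall_notMem_le κ hfar (by have := card_le_univ Y; omega))
  refine mod_cast card_le_card fun ω hω ↦ mem_filter.2 ⟨mem_univ ω, fun i x hx ↦ ?_⟩
  exact (mem_filter.1 hω).2.apply_notMem_farPoints hα hε (hAY hx) i

variable [NormedSpace ℝ X] [FiniteDimensional ℝ X]

lemma hasRamseyBound_of_choose_mul_exp_lt_one {n k r a D : ℕ} {α : ℝ} (hα : 0 < α)
    (hr : 2 * α < r + 1) (hk : 2 * a + (2 * D + 1) ^ r ≤ k + 1)
    (h : n.choose (k + 1) * ((1 + 8 * (r + 1)) ^ finrank ℝ X) ^ (k + 1) *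
      Real.exp (-(a ^ 2 / n)) ^ D < 1) :
    HasRamseyBound X α n k := by
  let d (ω : Fin D → Equiv.Perm (Fin n)) : Fin n → Fin n → ℝ := truncDist (permGraph ω) (r + 1)
  refine hasRamseyBound_of_card_isApproxEmbeddingOn_le (d := d) (R := α * (r + 1))
    (K := (n.factorial * Real.exp (-(a ^ 2 / n))) ^ D) (by positivity) (by positivity)
    (half_pos hα) (fun ω ↦ isMetricOn_truncDist _ r.succ_pos) (fun ω x y ↦ ?_)
    (fun Y hY φ ↦ ?_) ?_
  · gcongr
    exact (truncDist_le _ _ x y).trans_eq (Nat.cast_succ r)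
  · have hcard := card_perm_isApproxEmbeddingOn_le (κ := Fin D) (r := r) (a := a) hα.le
      (half_pos hα).le (by linarith) φ (Y := Y) (by rwa [Fintype.card_fin, hY])
    rwa [Fintype.card_fin, Fintype.card_fin] at hcard
  · have hradius : 1 + 4 * (α * (r + 1)) / (α / 2) = 1 + 8 * (r + 1) := by field_simp; ring
    rw [hradius, mul_pow, mul_left_comm, Fintype.card_fun, Fintype.card_perm, Fintype.card_fin,
      Fintype.card_fin, Nat.cast_pow]
    exact mul_lt_of_lt_one_right (by positivity) h

lemma hasRamseyBound_of_rpow_mul_log_lt {α : ℝ} (hα : 2 ≤ α) {n k : ℕ} (hn : n ≠ 0)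
    (hX : finrank ℝ X ≠ 0) (hu : 3 ≤ (n : ℝ) ^ ((1 / 10) / α))
    (hk : 1024 * (n : ℝ) ^ (1 - (1 / 10) / α) * (finrank ℝ X * Real.log α) < k + 1) :
    HasRamseyBound X α n k := by
  have hlog := half_le_natCast_mul_log hX hα
  have hball := two_mul_add_one_pow_le_rpow (r := ⌊2 * α⌋₊) hn (by linarith) hu
    (Nat.ceil_lt_add_one (by positivity)).le (Nat.floor_le (by linarith))
  rw [Real.rpow_sub (by positivity), Real.rpow_one] at hk hball
  set u : ℝ := (n : ℝ) ^ ((1 / 10) / α)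
  set w : ℝ := finrank ℝ X * Real.log α
  have hu0 : 0 < u := by positivity
  have hone : (1 : ℝ) ≤ (2 * ⌈u ^ 2⌉₊ + 1 : ℝ) ^ ⌊2 * α⌋₊ := one_le_pow₀ (by simp)
  have hkv : 512 * (n / u) < k + 1 := by
    refine lt_of_le_of_lt ?_ hk
    nlinarith [show 0 ≤ n / u by positivity]
  have hkball : 2 * (2 * ⌈u ^ 2⌉₊ + 1) ^ ⌊2 * α⌋₊ ≤ k + 1 := by
    suffices (2 * (2 * ⌈u ^ 2⌉₊ + 1) ^ ⌊2 * α⌋₊ : ℝ) ≤ k + 1 from mod_cast this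
    linarith
  have hk4 : 4 ≤ k + 1 := by
    suffices (4 : ℝ) ≤ k + 1 from mod_cast this
    linarith
  refine hasRamseyBound_of_choose_mul_exp_lt_one (r := ⌊2 * α⌋₊) (a := (k + 1) / 4)
    (D := ⌈u ^ 2⌉₊) (by linarith) (Nat.lt_floor_add_one _) (by omega) ?_
  refine choose_mul_pow_mul_exp_lt_one (u := u) (w := w) (by linarith) hlog (by omega) (by omega)
    (by positivity) (pow_le_exp_mul_log _ hα (by positivity) ?_) (Nat.le_ceil _) ?_
  · linarith [Nat.floor_le (show 0 ≤ 2 * α by linarith)]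
  · rw [Nat.cast_succ, ← div_lt_iff₀ hu0]
    exact hk.trans_eq' (by ring)

lemma hasRamseyBound_rpow_mul_log {α : ℝ} (hα : 2 ≤ α) {n : ℕ} (hn : n ≠ 0)
    (hX : finrank ℝ X ≠ 0) :
    HasRamseyBound X α n (1024 * (n : ℝ) ^ (1 - (1 / 10) / α) * finrank ℝ X * Real.log α) := by
  have hlog := half_le_natCast_mul_log hX hα
  have hn0 : (0 : ℝ) < n := by positivity
  rw [mul_assoc _ (finrank ℝ X : ℝ)]
  set M : ℝ := 1024 * (n : ℝ) ^ (1 - (1 / 10) / α) * (finrank ℝ X * Real.log α) with hM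
  obtain hnM | hMn := le_or_gt (n : ℝ) M
  · exact (hasRamseyBound_self X α n).mono hnM
  · have hu : 3 ≤ (n : ℝ) ^ ((1 / 10) / α) := by
      rw [hM, Real.rpow_sub hn0, Real.rpow_one, mul_div_assoc', div_mul_eq_mul_div,
        div_lt_iff₀ (by positivity)] at hMn
      nlinarith
    exact (hasRamseyBound_of_rpow_mul_log_lt hα hn hX hu (Nat.lt_floor_add_one M)).mono
      (Nat.floor_le (by positivity))

end LargeDistortion

/-- Upper bounds on the Ramsey function of a finite dimensional normed space `X`:
(i) for `1 < α < 2` there is an `n`-point metric space whose subsets `α`-embeddable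
into `X` have at most `2·log₂ n + 2h·log₂(C/(2-α))` points; (ii) for `α ≥ 2` there is
an `n`-point metric space whose subsets `α`-embeddable into `X` have at most
`C·n^(1-c/α)·h·log α` points. -/
theorem ramsey_upper_bound_finite_dim :
    ∃ c C : ℝ, 0 < c ∧ 0 < C ∧
      ∀ (X : Type) [NormedAddCommGroup X] [NormedSpace ℝ X] [FiniteDimensional ℝ X]
        (h n : ℕ), Module.finrank ℝ X = h → 1 ≤ h → 2 ≤ n →
        ((∀ α : ℝ, 1 < α → α < 2 →
            ∃ d : Fin n → Fin n → ℝ, IsMetricOn d ∧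
              ∀ Y : Finset (Fin n),
                (∃ f : Fin n → X, ∃ s : ℝ, 0 < s ∧
                  ∀ x ∈ Y, ∀ y ∈ Y,
                    s * d x y ≤ ‖f x - f y‖ ∧ ‖f x - f y‖ ≤ α * s * d x y) →
                (Y.card : ℝ) ≤ 2 * Real.logb 2 n + 2 * h * Real.logb 2 (C / (2 - α))) ∧
         (∀ α : ℝ, 2 ≤ α →
            ∃ d : Fin n → Fin n → ℝ, IsMetricOn d ∧
              ∀ Y : Finset (Fin n),
                (∃ f : Fin n → X, ∃ s : ℝ, 0 < s ∧
                  ∀ x ∈ Y, ∀ y ∈ Y,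
                    s * d x y ≤ ‖f x - f y‖ ∧ ‖f x - f y‖ ≤ α * s * d x y) →
                (Y.card : ℝ) ≤ C * (n : ℝ) ^ (1 - c / α) * h * Real.log α)) := by
  refine ⟨1 / 10, 1024, by norm_num, by norm_num, fun X _ _ _ h n hX hh hn ↦ ?_⟩
  have hn0 : n ≠ 0 := by omega
  have hX0 : finrank ℝ X ≠ 0 := by omega
  subst hX
  exact ⟨fun α hα hα2 ↦ hasRamseyBound_logb (by norm_num) hα.le hα2 hn0 hX0,
    fun α hα ↦ hasRamseyBound_rpow_mul_log hα hn0 hX0⟩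
end

section
/- There exist universal constants c, C > 0 with the following property. Let G = (V,E) be a finite connected d-regular simple graph with d ≥ 3, and suppose G has absolute multiplicative spectral gap γ for some 0 < γ < 1. Then for every real p ≥ 1 and every real α ≥ 1, every subset B ⊆ V such that (B, d_G) admits an α-embedding into ℓ_p satisfies |B| ≤ C·d·|V|^(1 − c·log(1/γ)/(p·α·log d)). -/
/-- A `d`-regular graph `G` has absolute multiplicative spectral gap `γ`:
`‖Av‖₂ ≤ γ·d·‖v‖₂` for every vector `v` orthogonal to the all-ones vector. -/
def HasAbsSpectralGap {V : Type} [Fintype V] [DecidableEq V]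
    (G : SimpleGraph V) [DecidableRel G.Adj] (d : ℕ) (γ : ℝ) : Prop :=
  ∀ v : V → ℝ, (∑ u, v u) = 0 →
    ∑ u, ((G.adjMatrix ℝ).mulVec v u) ^ 2 ≤ (γ * d) ^ 2 * ∑ u, (v u) ^ 2

/-!
The `t`-step random walk on `G` satisfies the expander mixing lemma with error `γ ^ t`. Choose `t`
so that `γ ^ t` is just below a constant multiple of the density of `B`. Mixing then allows one to
discard at most half of `B`, first the vertices of large degree and then a maximal sparse cut, so
that the walk restricted to the remaining set `B'` has bounded degree and Cheeger constant
comparable to the density of `B`.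

By the coarea formula, applied to `p`-th powers of truncations at a median, such a Cheeger bound
implies an `ℓ_p` Poincaré inequality with constant `O(p) ^ p`. A step of the walk moves an image
point by at most `α s t`, whereas balls in `G` grow at most like powers of `d`, so most pairs in
`B'` are at distance about `log_d |B|` or more; hence `|B| ≤ d ^ O(p α t)`. The choice of `t` gives
`|B| ≤ O(d) |V| γ ^ t`, and eliminating `t` between the two bounds yields the exponent.
-/

open Finset Matrix MeasureTheory

section WeightedGraph

variable {V : Type*}

/-- The total weight of `S × T`, a matrix `W` being read as a weighted directed graph on `V`. -/
def cutWeight (W : Matrix V V ℝ) (S T : Finset V) : ℝ :=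
  ∑ u ∈ S, ∑ v ∈ T, W u v

/-- The weighted graph induced by `W` on `B` has Cheeger constant at least `κ`: every subset of at
most half of `B` sends out, within `B`, at least `κ` times its cardinality. -/
def HasEdgeExpansion [DecidableEq V] (W : Matrix V V ℝ) (B : Finset V) (κ : ℝ) : Prop :=
  ∀ S ⊆ B, 2 * #S ≤ #B → κ * #S ≤ cutWeight W S (B \ S)

theorem exists_card_filter_lt_le_half {α : Type*} [LinearOrder α] [Nonempty α] (B : Finset V)
    (h : V → α) : ∃ m, 2 * #{u ∈ B | m < h u} ≤ #B ∧ 2 * #{u ∈ B | h u < m} ≤ #B := by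
  classical
  rcases B.eq_empty_or_nonempty with rfl | hB
  · simp
  set upper : Finset V := {w ∈ B | 2 * #{u ∈ B | h w < h u} ≤ #B}
  have upper_nonempty : upper.Nonempty := by
    obtain ⟨w, hw, hmax⟩ := exists_max_image B h hB
    refine ⟨w, mem_filter.2 ⟨hw, ?_⟩⟩
    simp [filter_false_of_mem fun u hu ↦ not_lt.2 (hmax u hu)]
  obtain ⟨w, hw, hmin⟩ := exists_min_image upper h upper_nonempty
  refine ⟨h w, (mem_filter.1 hw).2, ?_⟩
  rcases (B.filter (h · < h w)).eq_empty_or_nonempty with hempty | hne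
  · simp [hempty]
  obtain ⟨z, hz, hzmax⟩ := exists_max_image _ h hne
  obtain ⟨hzB, hzw⟩ := mem_filter.1 hz
  have hz_notMem : z ∉ upper := fun hzu ↦ (hmin z hzu).not_gt hzw
  have hz_card : #B < 2 * #{u ∈ B | h z < h u} := by
    simpa [upper, hzB] using hz_notMem
  have hdisj : Disjoint {u ∈ B | h z < h u} {u ∈ B | h u < h w} :=
    disjoint_left.2 fun a ha ha' ↦ (mem_filter.1 ha).2.not_ge (hzmax a ha')
  have hcard : #{u ∈ B | h z < h u} + #{u ∈ B | h u < h w} ≤ #B := by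
    rw [← card_union_of_disjoint hdisj]
    exact card_le_card (union_subset (filter_subset _ _) (filter_subset _ _))
  lia

theorem integral_indicator_Ico_one (a b : ℝ) :
    ∫ s, (Set.Ico a b).indicator (1 : ℝ → ℝ) s = max (b - a) 0 := by
  rw [integral_indicator_one measurableSet_Ico, Real.volume_real_Ico]

theorem integrable_indicator_Ico_one (a b : ℝ) :
    Integrable ((Set.Ico a b).indicator (1 : ℝ → ℝ)) :=
  (integrable_indicator_iff measurableSet_Ico).2 (integrableOn_const measure_Ico_lt_top.ne)

section

variable [DecidableEq V] {W : Matrix V V ℝ} {B : Finset V} {κ : ℝ}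

theorem HasEdgeExpansion.mul_sum_indicator_le (hexp : HasEdgeExpansion W B κ)
    (hW : ∀ u v, 0 ≤ W u v) {g : V → ℝ} (hsupp : 2 * #{u ∈ B | 0 < g u} ≤ #B) (s : ℝ) :
    κ * ∑ u ∈ B, (Set.Ico 0 (g u)).indicator (1 : ℝ → ℝ) s ≤
      ∑ u ∈ B, ∑ v ∈ B, W u v * (Set.Ico (g v) (g u)).indicator (1 : ℝ → ℝ) s := by
  rcases lt_or_ge s 0 with hs | hs
  · simp only [Set.indicator, Set.mem_Ico, hs.not_ge, false_and, if_false, sum_const_zero, mul_zero]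
    exact sum_nonneg fun u _ ↦ sum_nonneg fun v _ ↦
      mul_nonneg (hW u v) (by split_ifs <;> simp)
  have hcard : ∑ u ∈ B, (Set.Ico 0 (g u)).indicator (1 : ℝ → ℝ) s = #{u ∈ B | s < g u} := by
    simp [Set.indicator, hs]
  have hcut : ∑ u ∈ B, ∑ v ∈ B, W u v * (Set.Ico (g v) (g u)).indicator (1 : ℝ → ℝ) s =
      cutWeight W {u ∈ B | s < g u} (B \ {u ∈ B | s < g u}) := by
    simp only [cutWeight, ← filter_not, sum_filter]
    refine sum_congr rfl fun u _ ↦ ?_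
    split_ifs with hu <;> simp [Set.indicator, hu]
  rw [hcard, hcut]
  refine hexp _ (filter_subset _ _) (le_trans ?_ hsupp)
  gcongr

theorem HasEdgeExpansion.mul_sum_le_sum_posPart (hexp : HasEdgeExpansion W B κ)
    (hW : ∀ u v, 0 ≤ W u v) {g : V → ℝ} (hg : ∀ u ∈ B, 0 ≤ g u)
    (hsupp : 2 * #{u ∈ B | 0 < g u} ≤ #B) :
    κ * ∑ u ∈ B, g u ≤ ∑ u ∈ B, ∑ v ∈ B, W u v * max (g u - g v) 0 := by
  have hint (u v : V) := (integrable_indicator_Ico_one (g v) (g u)).const_mul (W u v)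
  have hint' (u : V) := integrable_indicator_Ico_one 0 (g u)
  calc κ * ∑ u ∈ B, g u
      = ∫ s, κ * ∑ u ∈ B, (Set.Ico 0 (g u)).indicator (1 : ℝ → ℝ) s := by
        rw [integral_const_mul, integral_finsetSum _ fun u _ ↦ hint' u]
        congr 1
        refine sum_congr rfl fun u hu ↦ ?_
        rw [integral_indicator_Ico_one, sub_zero, max_eq_left (hg u hu)]
    _ ≤ ∫ s, ∑ u ∈ B, ∑ v ∈ B, W u v * (Set.Ico (g v) (g u)).indicator (1 : ℝ → ℝ) s :=
        integral_mono ((integrable_finsetSum _ fun u _ ↦ hint' u).const_mul κ)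
          (integrable_finsetSum _ fun u _ ↦ integrable_finsetSum _ fun v _ ↦ hint u v)
          fun s ↦ hexp.mul_sum_indicator_le hW hsupp s
    _ = ∑ u ∈ B, ∑ v ∈ B, W u v * max (g u - g v) 0 := by
        rw [integral_finsetSum _ fun u _ ↦ integrable_finsetSum _ fun v _ ↦ hint u v]
        refine sum_congr rfl fun u _ ↦ ?_
        rw [integral_finsetSum _ fun v _ ↦ hint u v]
        simp only [integral_const_mul, integral_indicator_Ico_one]

end

-- Either `|x - y|` is comparable to `x`, or Bernoulli's inequality bounds `1 - (y / x) ^ p`.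
theorem rpow_sub_rpow_le {p K x y : ℝ} (hp : 1 ≤ p) (hK : 0 < K) (hx : 0 ≤ x) (hy : 0 ≤ y) :
    x ^ p - y ^ p ≤ (K * p) ^ p * |x - y| ^ p + x ^ p / K := by
  have hxp := Real.rpow_nonneg hx p
  have hyp := Real.rpow_nonneg hy p
  rw [← Real.mul_rpow (by positivity) (abs_nonneg _)]
  have hdiff : 0 ≤ (K * p * |x - y|) ^ p := by positivity
  rcases le_total x (K * p * |x - y|) with hfar | hnear
  · have : x ^ p ≤ (K * p * |x - y|) ^ p := by gcongr
    have : 0 ≤ x ^ p / K := by positivity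
    linarith
  rcases hx.eq_or_lt with rfl | hx
  · simp only [Real.zero_rpow (by positivity : p ≠ 0), zero_div]
    linarith
  have hbernoulli : 1 + p * (y / x - 1) ≤ y ^ p / x ^ p := by
    rw [← Real.div_rpow hy hx.le]
    have := one_add_mul_self_le_rpow_one_add (s := y / x - 1)
      (by linarith [div_nonneg hy hx.le]) hp
    rwa [add_sub_cancel] at this
  have hratio : p * (1 - y / x) ≤ 1 / K := by
    rw [one_sub_div hx.ne', ← mul_div_assoc, div_le_div_iff₀ hx hK]
    calc p * (x - y) * K ≤ p * |x - y| * K := by gcongr; exact le_abs_self _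
      _ = K * p * |x - y| := by ring
      _ ≤ 1 * x := by rwa [one_mul]
  have hmul : x ^ p * (1 - y ^ p / x ^ p) ≤ x ^ p * (1 / K) := by gcongr; linarith
  rw [mul_sub, mul_div_cancel₀ _ (Real.rpow_pos_of_pos hx p).ne', mul_one_div, mul_one] at hmul
  linarith

theorem abs_rpow_eq_posPart_add_negPart {p : ℝ} (hp : p ≠ 0) (x : ℝ) :
    |x| ^ p = max x 0 ^ p + max (-x) 0 ^ p := by
  rcases le_total 0 x with hx | hx <;>
    simp [hx, abs_of_nonneg, abs_of_nonpos, Real.zero_rpow hp]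

theorem sum_sum_abs_sub_rpow_le {p : ℝ} (hp : 1 ≤ p) (B : Finset V) (h : V → ℝ)
    (m : ℝ) :
    ∑ u ∈ B, ∑ v ∈ B, |h u - h v| ^ p ≤ 2 ^ p * #B * ∑ u ∈ B, |h u - m| ^ p := by
  have hpair (u v : V) :
      |h u - h v| ^ p ≤ 2 ^ p * (1 / 2 * |h u - m| ^ p + 1 / 2 * |h v - m| ^ p) := by
    calc |h u - h v| ^ p ≤ (2 * (1 / 2 * |h u - m| + 1 / 2 * |h v - m|)) ^ p := by
          gcongr
          linarith [abs_sub_le (h u) m (h v), abs_sub_comm m (h v)]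
      _ = 2 ^ p * (1 / 2 * |h u - m| + 1 / 2 * |h v - m|) ^ p :=
          Real.mul_rpow zero_le_two (by positivity)
      _ ≤ 2 ^ p * (1 / 2 * |h u - m| ^ p + 1 / 2 * |h v - m| ^ p) := by
          gcongr
          exact (convexOn_rpow hp).2 (abs_nonneg (h u - m)) (abs_nonneg (h v - m))
            (by norm_num) (by norm_num) (by norm_num)
  calc ∑ u ∈ B, ∑ v ∈ B, |h u - h v| ^ p
      ≤ ∑ u ∈ B, ∑ v ∈ B, 2 ^ p * (1 / 2 * |h u - m| ^ p + 1 / 2 * |h v - m| ^ p) :=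
        sum_le_sum fun u _ ↦ sum_le_sum fun v _ ↦ hpair u v
    _ = 2 ^ p * #B * ∑ u ∈ B, |h u - m| ^ p := by
        simp only [← mul_sum, sum_add_distrib, sum_const, nsmul_eq_mul]
        ring

section

variable {W : Matrix V V ℝ} {B : Finset V} {E : Type*} [SeminormedAddCommGroup E] {p : ℝ}

theorem sum_mul_norm_rpow_le_of_near {D : ℝ} (hW : ∀ u v, 0 ≤ W u v)
    (hdeg : ∀ u ∈ B, ∑ v ∈ B, W u v ≤ D) (f : V → E) {r : ℝ} (hr : 0 ≤ r) (hp : 0 ≤ p)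
    (hnear : ∀ u ∈ B, ∀ v ∈ B, W u v ≠ 0 → ‖f u - f v‖ ≤ r) :
    ∑ u ∈ B, ∑ v ∈ B, W u v * ‖f u - f v‖ ^ p ≤ #B * (D * r ^ p) := by
  rw [← nsmul_eq_mul]
  refine sum_le_card_nsmul _ _ _ fun u hu ↦ ?_
  calc ∑ v ∈ B, W u v * ‖f u - f v‖ ^ p ≤ ∑ v ∈ B, W u v * r ^ p := by
        refine sum_le_sum fun v hv ↦ ?_
        rcases eq_or_ne (W u v) 0 with h0 | h0
        · simp [h0]
        · have := hW u v
          have := hnear u hu v hv h0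
          gcongr
    _ = (∑ v ∈ B, W u v) * r ^ p := (sum_mul ..).symm
    _ ≤ D * r ^ p := by gcongr; exact hdeg u hu

theorem card_mul_le_sum_norm_rpow_of_far (f : V → E) {R : ℝ} (hR : 0 ≤ R) (hp : 0 ≤ p)
    (hfar : ∀ u ∈ B, #B ≤ 2 * #{v ∈ B | R ≤ ‖f u - f v‖}) :
    #B * (#B / 2 * R ^ p) ≤ ∑ u ∈ B, ∑ v ∈ B, ‖f u - f v‖ ^ p := by
  rw [← nsmul_eq_mul]
  refine card_nsmul_le_sum _ _ _ fun u hu ↦ ?_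
  have hhalf : (#B / 2 : ℝ) ≤ #{v ∈ B | R ≤ ‖f u - f v‖} := by
    rw [div_le_iff₀' two_pos]
    exact_mod_cast hfar u hu
  calc #B / 2 * R ^ p ≤ #{v ∈ B | R ≤ ‖f u - f v‖} * R ^ p := by gcongr
    _ ≤ ∑ v ∈ B with R ≤ ‖f u - f v‖, ‖f u - f v‖ ^ p := by
        rw [← nsmul_eq_mul]
        refine card_nsmul_le_sum _ _ _ fun v hv ↦ ?_
        have := (mem_filter.1 hv).2
        gcongr
    _ ≤ ∑ v ∈ B, ‖f u - f v‖ ^ p :=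
        sum_le_sum_of_subset_of_nonneg (filter_subset _ _) fun v _ _ ↦ by positivity

end

section

variable [DecidableEq V] {W : Matrix V V ℝ} {B : Finset V} {κ K p : ℝ}

theorem HasEdgeExpansion.mul_sum_rpow_le (hexp : HasEdgeExpansion W B κ) (hW : ∀ u v, 0 ≤ W u v)
    (hK : 0 < K) (hdeg : ∀ u ∈ B, ∑ v ∈ B, W u v ≤ K * κ) (hp : 1 ≤ p) {g : V → ℝ}
    (hg : ∀ u ∈ B, 0 ≤ g u) (hsupp : 2 * #{u ∈ B | 0 < g u} ≤ #B) :
    κ * ∑ u ∈ B, g u ^ p ≤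
      2 * ((2 * K * p) ^ p * ∑ u ∈ B, ∑ v ∈ B, W u v * |g u - g v| ^ p) := by
  have hgp (u : V) (hu : u ∈ B) : 0 ≤ g u ^ p := Real.rpow_nonneg (hg u hu) p
  have hsupp' : 2 * #{u ∈ B | 0 < g u ^ p} ≤ #B := by
    have hiff (u : V) (hu : u ∈ B) : 0 < g u ^ p ↔ 0 < g u := by
      rw [(hgp u hu).lt_iff_ne', (hg u hu).lt_iff_ne', Real.rpow_ne_zero (hg u hu) (by positivity)]
    rwa [filter_congr hiff]
  have hdiff : ∑ u ∈ B, ∑ v ∈ B, W u v * max (g u ^ p - g v ^ p) 0 ≤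
      ∑ u ∈ B, ∑ v ∈ B, W u v * ((2 * K * p) ^ p * |g u - g v| ^ p + g u ^ p / (2 * K)) := by
    gcongr with u hu v hv
    · exact hW u v
    · have := hgp u hu
      exact max_le (rpow_sub_rpow_le hp (by positivity) (hg u hu) (hg v hv)) (by positivity)
  have hsplit : ∑ u ∈ B, ∑ v ∈ B,
        W u v * ((2 * K * p) ^ p * |g u - g v| ^ p + g u ^ p / (2 * K)) =
      (2 * K * p) ^ p * ∑ u ∈ B, ∑ v ∈ B, W u v * |g u - g v| ^ p +
        ∑ u ∈ B, (∑ v ∈ B, W u v) * (g u ^ p / (2 * K)) := by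
    simp only [mul_add, sum_add_distrib, mul_sum, sum_mul, mul_left_comm]
  have hdeg_sum : ∑ u ∈ B, (∑ v ∈ B, W u v) * (g u ^ p / (2 * K)) ≤ κ / 2 * ∑ u ∈ B, g u ^ p := by
    rw [mul_sum]
    refine sum_le_sum fun u hu ↦ ?_
    calc (∑ v ∈ B, W u v) * (g u ^ p / (2 * K)) ≤ K * κ * (g u ^ p / (2 * K)) :=
          mul_le_mul_of_nonneg_right (hdeg u hu) (div_nonneg (hgp u hu) (by positivity))
      _ = κ / 2 * g u ^ p := by field_simp
  linarith [hexp.mul_sum_le_sum_posPart hW hgp hsupp']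

theorem HasEdgeExpansion.exists_mul_sum_abs_sub_rpow_le (hexp : HasEdgeExpansion W B κ)
    (hW : ∀ u v, 0 ≤ W u v) (hK : 0 < K) (hdeg : ∀ u ∈ B, ∑ v ∈ B, W u v ≤ K * κ) (hp : 1 ≤ p)
    (h : V → ℝ) : ∃ m, κ * ∑ u ∈ B, |h u - m| ^ p ≤
      4 * ((2 * K * p) ^ p * ∑ u ∈ B, ∑ v ∈ B, W u v * |h u - h v| ^ p) := by
  obtain ⟨m, hm_upper, hm_lower⟩ := exists_card_filter_lt_le_half B h
  have htruncate {g : V → ℝ} (hg : ∀ u v, |g u - g v| ≤ |h u - h v|)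
      (hsupp : 2 * #{u ∈ B | 0 < g u} ≤ #B) (hg_nonneg : ∀ u, 0 ≤ g u) :
      κ * ∑ u ∈ B, g u ^ p ≤
        2 * ((2 * K * p) ^ p * ∑ u ∈ B, ∑ v ∈ B, W u v * |h u - h v| ^ p) := by
    refine (hexp.mul_sum_rpow_le hW hK hdeg hp (fun u _ ↦ hg_nonneg u) hsupp).trans ?_
    refine mul_le_mul_of_nonneg_left (mul_le_mul_of_nonneg_left
      (sum_le_sum fun u _ ↦ sum_le_sum fun v _ ↦ ?_) (by positivity)) zero_le_two
    exact mul_le_mul_of_nonneg_left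
      (Real.rpow_le_rpow (abs_nonneg _) (hg u v) (by positivity)) (hW u v)
  have hpos := htruncate (g := fun u ↦ max (h u - m) 0)
    (fun u v ↦ (abs_max_sub_max_le_abs _ _ _).trans_eq (by rw [sub_sub_sub_cancel_right]))
    (by simpa using hm_upper) fun u ↦ le_max_right _ _
  have hneg := htruncate (g := fun u ↦ max (-(h u - m)) 0)
    (fun u v ↦ (abs_max_sub_max_le_abs _ _ _).trans_eq
      (by rw [neg_sub_neg, sub_sub_sub_cancel_right, abs_sub_comm]))
    (by simpa using hm_lower) fun u ↦ le_max_right _ _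
  refine ⟨m, ?_⟩
  simp only [abs_rpow_eq_posPart_add_negPart (by positivity : p ≠ 0) (h _ - m), sum_add_distrib]
  linarith

theorem HasEdgeExpansion.poincare_real (hexp : HasEdgeExpansion W B κ) (hW : ∀ u v, 0 ≤ W u v)
    (hκ : 0 ≤ κ) (hK : 0 < K) (hdeg : ∀ u ∈ B, ∑ v ∈ B, W u v ≤ K * κ) (hp : 1 ≤ p) (h : V → ℝ) :
    κ * ∑ u ∈ B, ∑ v ∈ B, |h u - h v| ^ p ≤
      4 * #B * (4 * K * p) ^ p * ∑ u ∈ B, ∑ v ∈ B, W u v * |h u - h v| ^ p := by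
  obtain ⟨m, hm⟩ := hexp.exists_mul_sum_abs_sub_rpow_le hW hK hdeg hp h
  set energy := ∑ u ∈ B, ∑ v ∈ B, W u v * |h u - h v| ^ p
  calc κ * ∑ u ∈ B, ∑ v ∈ B, |h u - h v| ^ p
      ≤ κ * (2 ^ p * #B * ∑ u ∈ B, |h u - m| ^ p) := by
        gcongr
        exact sum_sum_abs_sub_rpow_le hp B h m
    _ = 2 ^ p * #B * (κ * ∑ u ∈ B, |h u - m| ^ p) := by ring
    _ ≤ 2 ^ p * #B * (4 * ((2 * K * p) ^ p * energy)) := by gcongr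
    _ = 4 * #B * (2 * (2 * K * p)) ^ p * energy := by
        rw [Real.mul_rpow zero_le_two (by positivity)]
        ring
    _ = 4 * #B * (4 * K * p) ^ p * energy := by ring_nf

variable {ι : Type*}

theorem HasEdgeExpansion.poincare_lp (hexp : HasEdgeExpansion W B κ) (hW : ∀ u v, 0 ≤ W u v)
    (hκ : 0 ≤ κ) (hK : 0 < K) (hdeg : ∀ u ∈ B, ∑ v ∈ B, W u v ≤ K * κ) (hp : 1 ≤ p)
    (f : V → lp (fun _ : ι ↦ ℝ) (ENNReal.ofReal p)) :
    κ * ∑ u ∈ B, ∑ v ∈ B, ‖f u - f v‖ ^ p ≤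
      4 * #B * (4 * K * p) ^ p * ∑ u ∈ B, ∑ v ∈ B, W u v * ‖f u - f v‖ ^ p := by
  have hp_toReal : (ENNReal.ofReal p).toReal = p := ENNReal.toReal_ofReal (by positivity)
  have hnorm (u v : V) : HasSum (fun i ↦ |f u i - f v i| ^ p) (‖f u - f v‖ ^ p) := by
    have := lp.hasSum_norm (p := ENNReal.ofReal p) (by rw [hp_toReal]; positivity) (f u - f v)
    simpa [hp_toReal] using this
  exact hasSum_le (fun i ↦ hexp.poincare_real hW hκ hK hdeg hp (f · i))
    ((hasSum_sum fun u _ ↦ hasSum_sum fun v _ ↦ hnorm u v).mul_left _)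
    ((hasSum_sum fun u _ ↦ hasSum_sum fun v _ ↦ (hnorm u v).mul_left _).mul_left _)

theorem HasEdgeExpansion.le_of_near_of_far (hexp : HasEdgeExpansion W B κ) (hB : B.Nonempty)
    (hW : ∀ u v, 0 ≤ W u v) (hκ : 0 < κ) (hK : 1 ≤ K)
    (hdeg : ∀ u ∈ B, ∑ v ∈ B, W u v ≤ K * κ) (hp : 1 ≤ p)
    (f : V → lp (fun _ : ι ↦ ℝ) (ENNReal.ofReal p)) {r R : ℝ} (hr : 0 ≤ r) (hR : 0 ≤ R)
    (hnear : ∀ u ∈ B, ∀ v ∈ B, W u v ≠ 0 → ‖f u - f v‖ ≤ r)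
    (hfar : ∀ u ∈ B, #B ≤ 2 * #{v ∈ B | R ≤ ‖f u - f v‖}) : R ≤ 32 * K ^ 2 * p * r := by
  have : Fact (1 ≤ ENNReal.ofReal p) := ⟨ENNReal.one_le_ofReal.2 hp⟩
  have hcompare : κ * #B * #B / 2 * R ^ p ≤
      κ * #B * #B / 2 * (8 * K * ((4 * K * p) ^ p * r ^ p)) := by
    calc κ * #B * #B / 2 * R ^ p = κ * (#B * (#B / 2 * R ^ p)) := by ring
      _ ≤ κ * ∑ u ∈ B, ∑ v ∈ B, ‖f u - f v‖ ^ p := by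
          gcongr
          exact card_mul_le_sum_norm_rpow_of_far f hR (by positivity) hfar
      _ ≤ 4 * #B * (4 * K * p) ^ p * ∑ u ∈ B, ∑ v ∈ B, W u v * ‖f u - f v‖ ^ p :=
          hexp.poincare_lp hW hκ.le (by positivity) hdeg hp f
      _ ≤ 4 * #B * (4 * K * p) ^ p * (#B * (K * κ * r ^ p)) := by
          gcongr
          exact sum_mul_norm_rpow_le_of_near hW hdeg f hr (by positivity) hnear
      _ = κ * #B * #B / 2 * (8 * K * ((4 * K * p) ^ p * r ^ p)) := by ring
  have hpow : R ^ p ≤ (32 * K ^ 2 * p * r) ^ p := by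
    have : (0 : ℝ) < #B := mod_cast hB.card_pos
    calc R ^ p ≤ 8 * K * ((4 * K * p) ^ p * r ^ p) :=
          le_of_mul_le_mul_left hcompare (by positivity)
      _ ≤ (8 * K) ^ p * ((4 * K * p) ^ p * r ^ p) := by
          gcongr
          exact Real.self_le_rpow_of_one_le (by linarith) hp
      _ = (32 * K ^ 2 * p * r) ^ p := by
          rw [← Real.mul_rpow (by positivity) hr,
            ← Real.mul_rpow (by positivity) (by positivity)]
          ring_nf
  exact (Real.rpow_le_rpow_iff hR (by positivity) (by positivity)).1 hpow

end

section Pruning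

variable {W : Matrix V V ℝ}

theorem exists_subset_hasEdgeExpansion_sdiff [DecidableEq V] (hW : ∀ u v, 0 ≤ W u v)
    {B : Finset V} {κ : ℝ}
    (hgap : ∀ R ⊆ B, 4 * #R ≤ 3 * #B → cutWeight W R (B \ R) ≤ κ * #R → 2 * #R ≤ #B) :
    ∃ R ⊆ B, 4 * #R ≤ 3 * #B ∧ cutWeight W R (B \ R) ≤ κ * #R ∧ HasEdgeExpansion W (B \ R) κ := by
  set sparse : Finset (Finset V) :=
    {R ∈ B.powerset | 4 * #R ≤ 3 * #B ∧ cutWeight W R (B \ R) ≤ κ * #R}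
  have sparse_nonempty : sparse.Nonempty :=
    ⟨∅, mem_filter.2 ⟨empty_mem_powerset B, by simp, by simp [cutWeight]⟩⟩
  obtain ⟨R, hR, hmax⟩ := exists_max_image sparse card sparse_nonempty
  obtain ⟨hRB, hcard, hcut⟩ : R ⊆ B ∧ 4 * #R ≤ 3 * #B ∧ cutWeight W R (B \ R) ≤ κ * #R := by
    simpa [sparse] using hR
  refine ⟨R, hRB, hcard, hcut, fun S hS hhalf ↦ ?_⟩
  by_contra! hlt
  have hS_pos : 0 < #S := by
    refine card_pos.2 (nonempty_iff_ne_empty.2 ?_)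
    rintro rfl
    simp [cutWeight] at hlt
  have hdisj : Disjoint R S := (subset_sdiff.1 hS).2.symm
  have hcard_union : #(R ∪ S) = #R + #S := card_union_of_disjoint hdisj
  have hcut_union : cutWeight W (R ∪ S) (B \ (R ∪ S)) ≤ κ * #(R ∪ S) :=
    calc cutWeight W (R ∪ S) (B \ (R ∪ S))
        = cutWeight W R (B \ (R ∪ S)) + cutWeight W S ((B \ R) \ S) := by
          rw [sdiff_sdiff, sup_eq_union]; exact sum_union hdisj
      _ ≤ cutWeight W R (B \ R) + cutWeight W S ((B \ R) \ S) := by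
          gcongr ?_ + _
          exact sum_le_sum fun u _ ↦ sum_le_sum_of_subset_of_nonneg
            (sdiff_subset_sdiff le_rfl subset_union_left) fun v _ _ ↦ hW u v
      _ ≤ κ * #R + κ * #S := add_le_add hcut hlt.le
      _ = κ * #(R ∪ S) := by rw [hcard_union]; push_cast; ring
  have hmem : R ∪ S ∈ sparse := by
    refine mem_filter.2 ⟨mem_powerset.2 (union_subset hRB (hS.trans sdiff_subset)), ?_, hcut_union⟩
    have := card_sdiff_of_subset hRB
    have := hgap R hRB hcard hcut
    lia
  have := hmax _ hmem
  lia

variable [Fintype V]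

/-- The conclusion of the expander mixing lemma with error `ε`, for a matrix `W` whose rows have
sum `1`: the weight of `S × T` is within `ε √(#S #T)` of its average value `#S #T / #V`. -/
def IsMixing (W : Matrix V V ℝ) (ε : ℝ) : Prop :=
  ∀ S T : Finset V, |cutWeight W S T - #S * T.dens| ≤ ε * √(#S * #T)

variable {ε : ℝ} {B : Finset V}

theorem IsMixing.sq_mul_card_le (hmix : IsMixing W ε) {S T : Finset V} {a c : ℝ} (ha : 0 < a)
    (hc : 0 ≤ c) (hε : 0 ≤ ε) (hca : c * ε ≤ a)
    (hdev : a * #S ≤ |cutWeight W S T - #S * T.dens|) : c ^ 2 * #S ≤ #T := by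
  rcases S.eq_empty_or_nonempty with rfl | hS
  · simp
  have : (0 : ℝ) < #S := mod_cast hS.card_pos
  have hsq : (a * #S) ^ 2 ≤ ε ^ 2 * (#S * #T) := by
    calc (a * #S) ^ 2 ≤ (ε * √(#S * #T)) ^ 2 :=
          pow_le_pow_left₀ (by positivity) (hdev.trans (hmix S T)) 2
      _ = ε ^ 2 * (#S * #T) := by rw [mul_pow, Real.sq_sqrt (by positivity)]
  refine le_of_mul_le_mul_left ?_ (by positivity : 0 < a ^ 2 * #S)
  calc a ^ 2 * #S * (c ^ 2 * #S) = c ^ 2 * (a * #S) ^ 2 := by ring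
    _ ≤ c ^ 2 * (ε ^ 2 * (#S * #T)) := by gcongr
    _ = (c * ε) ^ 2 * (#S * #T) := by ring
    _ ≤ a ^ 2 * (#S * #T) := by gcongr
    _ = a ^ 2 * #S * #T := by ring

theorem IsMixing.card_filter_lt_row_sum_le (hmix : IsMixing W ε) (hε : 0 ≤ ε) (hB : B.Nonempty)
    (hdens : 32 * ε ≤ B.dens) : 1024 * #{u ∈ B | 2 * (B.dens : ℝ) < ∑ v ∈ B, W u v} ≤ #B := by
  have hdens_pos : (0 : ℝ) < B.dens := mod_cast hB.dens_pos
  set T : Finset V := {u ∈ B | 2 * (B.dens : ℝ) < ∑ v ∈ B, W u v}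
  have hT : #T * (2 * (B.dens : ℝ)) ≤ cutWeight W T B := by
    rw [← nsmul_eq_mul]
    exact card_nsmul_le_sum _ _ _ fun u hu ↦ (mem_filter.1 hu).2.le
  have hT_card := hmix.sq_mul_card_le (S := T) (T := B) hdens_pos (c := 32) (by norm_num) hε hdens
    (le_abs.2 (.inl (by linarith)))
  norm_num at hT_card
  exact_mod_cast hT_card

theorem IsMixing.nine_mul_card_le_of_cutWeight_sdiff_le [DecidableEq V] (hmix : IsMixing W ε)
    (hε : 0 ≤ ε) (hB : B.Nonempty) (hdens : 32 * ε ≤ B.dens) {B₁ R : Finset V}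
    (hB₁_card : 1023 * #B ≤ 1024 * #B₁) (hR : R ⊆ B₁) (hR_card : 4 * #R ≤ 3 * #B₁)
    (hcut : cutWeight W R (B₁ \ R) ≤ B.dens / 8 * #R) : 9 * #R ≤ #(B₁ \ R) := by
  have hdens_pos : (0 : ℝ) < B.dens := mod_cast hB.dens_pos
  have hsdiff_dens : 9 / 40 * (B.dens : ℝ) ≤ (B₁ \ R).dens := by
    have hcard : 9 * #B ≤ 40 * #(B₁ \ R) := by
      have := card_sdiff_of_subset hR
      lia
    have : 9 / 40 * (#B : ℝ) ≤ #(B₁ \ R) := by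
      rify at hcard
      linarith
    rw [nnratCast_dens, nnratCast_dens, ← mul_div_assoc]
    gcongr
  have hdev : #R * (9 / 40 * (B.dens : ℝ)) ≤ #R * (B₁ \ R).dens := by gcongr
  have hR_small := hmix.sq_mul_card_le (S := R) (T := B₁ \ R) (a := B.dens / 10) (c := 3)
    (by positivity) (by norm_num) hε (by linarith) (le_abs.2 (.inr (by linarith)))
  norm_num at hR_small
  exact_mod_cast hR_small

theorem IsMixing.exists_subset_hasEdgeExpansion [DecidableEq V] (hmix : IsMixing W ε)
    (hε : 0 ≤ ε) (hW : ∀ u v, 0 ≤ W u v) (hB : B.Nonempty) (hdens : 32 * ε ≤ B.dens) :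
    ∃ B' ⊆ B, #B ≤ 2 * #B' ∧ (∀ u ∈ B', ∑ v ∈ B', W u v ≤ 2 * B.dens) ∧
      HasEdgeExpansion W B' (B.dens / 8) := by
  set B₁ : Finset V := {u ∈ B | ¬ 2 * (B.dens : ℝ) < ∑ v ∈ B, W u v}
  have hB₁ : B₁ ⊆ B := filter_subset _ _
  have hB₁_card : 1023 * #B ≤ 1024 * #B₁ := by
    have := hmix.card_filter_lt_row_sum_le hε hB hdens
    have := card_filter_add_card_filter_not (s := B) fun u ↦ 2 * (B.dens : ℝ) < ∑ v ∈ B, W u v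
    lia
  have hsparse (R : Finset V) (hR : R ⊆ B₁) (hR_card : 4 * #R ≤ 3 * #B₁)
      (hcut : cutWeight W R (B₁ \ R) ≤ B.dens / 8 * #R) : 9 * #R ≤ #(B₁ \ R) :=
    hmix.nine_mul_card_le_of_cutWeight_sdiff_le hε hB hdens hB₁_card hR hR_card hcut
  obtain ⟨R, hR, hR_card, hcut, hexp⟩ := exists_subset_hasEdgeExpansion_sdiff hW
    (B := B₁) (κ := B.dens / 8) fun R hR hR_card hcut ↦ by
      have := hsparse R hR hR_card hcut
      have := card_sdiff_of_subset hR
      lia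
  have hsub : B₁ \ R ⊆ B := sdiff_subset.trans hB₁
  refine ⟨B₁ \ R, hsub, ?_, fun u hu ↦ ?_, hexp⟩
  · have := hsparse R hR hR_card hcut
    have := card_sdiff_of_subset hR
    lia
  · calc ∑ v ∈ B₁ \ R, W u v ≤ ∑ v ∈ B, W u v :=
          sum_le_sum_of_subset_of_nonneg hsub fun v _ _ ↦ hW u v
      _ ≤ 2 * B.dens := not_lt.1 (mem_filter.1 (mem_sdiff.1 hu).1).2

end Pruning

end WeightedGraph

section MeanZero

variable {V : Type*} [Fintype V]

/-- `P` shrinks the `ℓ²` norm of mean-zero vectors by the factor `γ`; for the transition matrix of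
a random walk this is the absolute spectral gap. -/
def ContractsMeanZero (P : Matrix V V ℝ) (γ : ℝ) : Prop :=
  ∀ v : V → ℝ, ∑ u, v u = 0 → ∑ u, (P *ᵥ v) u ^ 2 ≤ γ ^ 2 * ∑ u, v u ^ 2

variable [DecidableEq V] {P : Matrix V V ℝ} {γ : ℝ}

theorem ContractsMeanZero.pow (hP : P ∈ doublyStochastic ℝ V) (hγ : ContractsMeanZero P γ)
    (t : ℕ) : ContractsMeanZero (P ^ t) (γ ^ t) := by
  induction t with
  | zero => simp [ContractsMeanZero]
  | succ t ih =>
    intro v hv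
    have hPv : ∑ u, (P *ᵥ v) u = 0 := by rw [sum_mulVec_of_mem_doublyStochastic hP, hv]
    calc ∑ u, (P ^ (t + 1) *ᵥ v) u ^ 2 = ∑ u, (P ^ t *ᵥ (P *ᵥ v)) u ^ 2 := by
          rw [pow_succ, mulVec_mulVec]
      _ ≤ (γ ^ t) ^ 2 * ∑ u, (P *ᵥ v) u ^ 2 := ih _ hPv
      _ ≤ (γ ^ t) ^ 2 * (γ ^ 2 * ∑ u, v u ^ 2) := by gcongr; exact hγ v hv
      _ = (γ ^ (t + 1)) ^ 2 * ∑ u, v u ^ 2 := by ring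

theorem ContractsMeanZero.isMixing (hP : P ∈ doublyStochastic ℝ V) (hγ : ContractsMeanZero P γ)
    (hγ_nonneg : 0 ≤ γ) : IsMixing P γ := by
  intro S T
  rcases isEmpty_or_nonempty V with hV | hV
  · simp [cutWeight, S.eq_empty_of_isEmpty]
  set a : ℝ := (T.dens : ℝ) with ha
  set v : V → ℝ := fun u ↦ (if u ∈ T then 1 else 0) - a
  have hv_sum : ∑ u, v u = 0 := by
    simp [v, ha, nnratCast_dens, mul_div_cancel₀]
  have hv_sq : ∑ u, v u ^ 2 ≤ #T := by
    have (u : V) : v u ^ 2 = (if u ∈ T then (1 : ℝ) else 0) - 2 * a * v u - a ^ 2 := by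
      simp only [v]
      split_ifs <;> ring
    simp only [this, sum_sub_distrib, ← mul_sum, hv_sum, mul_zero, sub_zero, sum_ite_mem,
      univ_inter, sum_const, nsmul_eq_mul, mul_one, tsub_le_iff_right, le_add_iff_nonneg_right]
    positivity
  have hrow (u : V) : (P *ᵥ v) u = ∑ w ∈ T, P u w - a := by
    simp [v, mulVec, dotProduct, mul_sub, ← sum_mul, sum_row_of_mem_doublyStochastic hP]
  have hdev : cutWeight P S T - #S * a = ∑ u ∈ S, (P *ᵥ v) u := by
    simp [hrow, cutWeight]
  rw [hdev, ← Real.sqrt_sq hγ_nonneg, ← Real.sqrt_mul (sq_nonneg γ)]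
  refine Real.abs_le_sqrt ?_
  calc (∑ u ∈ S, (P *ᵥ v) u) ^ 2 ≤ #S * ∑ u ∈ S, (P *ᵥ v) u ^ 2 := sq_sum_le_card_mul_sum_sq
    _ ≤ #S * ∑ u, (P *ᵥ v) u ^ 2 := by
        gcongr
        exact subset_univ S
    _ ≤ #S * (γ ^ 2 * #T) := by
        gcongr
        exact (hγ v hv_sum).trans (by gcongr)
    _ = γ ^ 2 * (#S * #T) := by ring

end MeanZero

section RegularGraph

variable {V : Type*} {G : SimpleGraph V} [DecidableRel G.Adj] {d : ℕ}

/-- The transition matrix of the simple random walk on a `d`-regular graph `G`. -/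
noncomputable def walkMatrix (G : SimpleGraph V) [DecidableRel G.Adj] (d : ℕ) : Matrix V V ℝ :=
  (d : ℝ)⁻¹ • G.adjMatrix ℝ

variable [Fintype V]

theorem walkMatrix_mem_doublyStochastic [DecidableEq V] (hreg : G.IsRegularOfDegree d)
    (hd : d ≠ 0) : walkMatrix G d ∈ doublyStochastic ℝ V := by
  have hrow (u : V) : ∑ v, walkMatrix G d u v = 1 := by
    simp only [walkMatrix, Matrix.smul_apply, smul_eq_mul, ← mul_sum, SimpleGraph.adjMatrix_apply,
      ← SimpleGraph.degree_eq_sum_if_adj, hreg.degree_eq]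
    exact inv_mul_cancel₀ (Nat.cast_ne_zero.2 hd)
  have hsymm (u v : V) : walkMatrix G d u v = walkMatrix G d v u := by
    simp [walkMatrix, SimpleGraph.adjMatrix_apply, G.adj_comm]
  refine mem_doublyStochastic_iff_sum.2 ⟨fun u v ↦ ?_, hrow, fun v ↦ ?_⟩
  · rw [walkMatrix, Matrix.smul_apply, SimpleGraph.adjMatrix_apply]
    positivity
  · simpa only [hsymm _ v] using hrow v

theorem dist_le_of_walkMatrix_pow_ne_zero [DecidableEq V] {t : ℕ} {u v : V}
    (huv : (walkMatrix G d ^ t) u v ≠ 0) : G.dist u v ≤ t := by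
  rw [walkMatrix, smul_pow, Matrix.smul_apply, SimpleGraph.adjMatrix_pow_apply_eq_card_walk] at huv
  obtain ⟨w, hw⟩ : Nonempty {w : G.Walk u v | w.length = t} :=
    Fintype.card_pos_iff.1 <| Nat.pos_of_ne_zero fun h ↦ huv <| by
      rw [h, Nat.cast_zero, smul_zero]
  exact (SimpleGraph.dist_le w).trans_eq hw

theorem card_filter_dist_lt_lt_pow (hconn : G.Connected) (hdeg : ∀ v, G.degree v ≤ d) (hd : 2 ≤ d)
    (N : ℕ) (u : V) : #{v | G.dist u v < N} < d ^ N := by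
  classical
  induction N generalizing u with
  | zero => simp
  | succ N ih =>
    have hcover : ({v | G.dist u v < N + 1} : Finset V) ⊆
        {u} ∪ (G.neighborFinset u).biUnion fun w ↦ {v | G.dist w v < N} := by
      intro v hv
      obtain ⟨walk, hwalk⟩ := hconn.exists_walk_length_eq_dist u v
      cases walk with
      | nil => simp
      | @cons _ w _ hadj tail =>
        have := SimpleGraph.dist_le tail
        rw [SimpleGraph.Walk.length_cons] at hwalk
        simp only [mem_filter_univ] at hv
        simp only [mem_union, mem_biUnion, SimpleGraph.mem_neighborFinset, mem_filter_univ]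
        exact .inr ⟨w, hadj, by lia⟩
    calc #{v | G.dist u v < N + 1} ≤ 1 + d * (d ^ N - 1) := by
          refine (card_le_card hcover).trans ((card_union_le _ _).trans ?_)
          rw [card_singleton]
          gcongr
          refine (card_biUnion_le_card_mul _ _ _ fun w _ ↦ Nat.le_sub_one_of_lt (ih w)).trans ?_
          gcongr
          exact hdeg u
      _ = 1 + (d ^ (N + 1) - d) := by rw [Nat.mul_sub, mul_one, pow_succ']
      _ < d ^ (N + 1) := by
          have := Nat.le_self_pow (Nat.succ_ne_zero N) d
          lia

end RegularGraph

section SpectralGap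

variable {V : Type} [Fintype V] [DecidableEq V] {G : SimpleGraph V} [DecidableRel G.Adj] {d : ℕ}
  {γ : ℝ}

theorem HasAbsSpectralGap.contractsMeanZero_walkMatrix (hgap : HasAbsSpectralGap G d γ)
    (hd : d ≠ 0) : ContractsMeanZero (walkMatrix G d) γ := by
  intro v hv
  calc ∑ u, (walkMatrix G d *ᵥ v) u ^ 2 = ((d : ℝ)⁻¹) ^ 2 * ∑ u, (G.adjMatrix ℝ *ᵥ v) u ^ 2 := by
        simp only [walkMatrix, smul_mulVec, Pi.smul_apply, smul_eq_mul, mul_pow, mul_sum]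
    _ ≤ ((d : ℝ)⁻¹) ^ 2 * ((γ * d) ^ 2 * ∑ u, v u ^ 2) := by gcongr; exact hgap v hv
    _ = γ ^ 2 * ∑ u, v u ^ 2 := by field_simp

theorem HasAbsSpectralGap.isMixing_walkMatrix_pow (hgap : HasAbsSpectralGap G d γ)
    (hreg : G.IsRegularOfDegree d) (hd : d ≠ 0) (hγ : 0 ≤ γ) (t : ℕ) :
    IsMixing (walkMatrix G d ^ t) (γ ^ t) :=
  have hP := walkMatrix_mem_doublyStochastic hreg hd
  ((hgap.contractsMeanZero_walkMatrix hd).pow hP t).isMixing (pow_mem hP t) (pow_nonneg hγ t)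

theorem HasAbsSpectralGap.one_le_mul (hgap : HasAbsSpectralGap G d γ) (hγ : 0 ≤ γ) {u w : V}
    (huw : G.Adj u w) : 1 ≤ γ * d := by
  set v : V → ℝ := Pi.single u 1 - Pi.single w 1
  have hu : v u = 1 := by simp [v, huw.ne]
  have hw : v w = -1 := by simp [v, huw.ne']
  have hv_sq : ∑ x, v x ^ 2 = 2 := by
    rw [← sum_subset (subset_univ {u, w}), sum_pair huw.ne, hu, hw]
    · norm_num
    · intro x _ hx
      simp only [mem_insert, mem_singleton, not_or] at hx
      simp [v, hx.1, hx.2]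
  have hAv_sq : 2 ≤ ∑ x, (G.adjMatrix ℝ *ᵥ v) x ^ 2 := by
    have hAu : (G.adjMatrix ℝ *ᵥ v) u = -1 := by simp [v, huw]
    have hAw : (G.adjMatrix ℝ *ᵥ v) w = 1 := by simp [v, huw.symm]
    calc (2 : ℝ) = ∑ x ∈ {u, w}, (G.adjMatrix ℝ *ᵥ v) x ^ 2 := by
          rw [sum_pair huw.ne, hAu, hAw]
          norm_num
      _ ≤ ∑ x, (G.adjMatrix ℝ *ᵥ v) x ^ 2 := sum_le_univ_sum_of_nonneg fun x ↦ sq_nonneg _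
  have := hgap v (by simp [v])
  rw [hv_sq] at this
  exact (one_le_sq_iff₀ (by positivity)).1 (by linarith)

variable {ι : Type*} {p α s : ℝ} {B : Finset V}

theorem HasAbsSpectralGap.le_of_embedding (hgap : HasAbsSpectralGap G d γ) (hconn : G.Connected)
    (hreg : G.IsRegularOfDegree d) (hd : 2 ≤ d) (hγ : 0 ≤ γ) (hp : 1 ≤ p) (hα : 0 ≤ α) (hs : 0 < s)
    (f : V → lp (fun _ : ι ↦ ℝ) (ENNReal.ofReal p))
    (hf : ∀ u ∈ B, ∀ v ∈ B, s * G.dist u v ≤ ‖f u - f v‖ ∧ ‖f u - f v‖ ≤ α * s * G.dist u v)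
    {t N : ℕ} (ht : 32 * γ ^ t ≤ B.dens) (hN : 4 * d ^ N ≤ #B) : N ≤ 8192 * (p * α * t) := by
  have hd₀ : d ≠ 0 := by positivity
  have hB : B.Nonempty := card_pos.1 (lt_of_lt_of_le (by positivity) hN)
  have : (0 : ℝ) < B.dens := mod_cast hB.dens_pos
  have hW (u v : V) : 0 ≤ (walkMatrix G d ^ t) u v :=
    nonneg_of_mem_doublyStochastic (pow_mem (walkMatrix_mem_doublyStochastic hreg hd₀) t)
  obtain ⟨B', hB', hcard, hdeg, hexp⟩ :=
    (hgap.isMixing_walkMatrix_pow hreg hd₀ hγ t).exists_subset_hasEdgeExpansion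
      (by positivity) hW hB ht
  have hB'_nonempty : B'.Nonempty := card_pos.1 (by have := hB.card_pos; lia)
  have hnear (u : V) (hu : u ∈ B') (v : V) (hv : v ∈ B')
      (huv : (walkMatrix G d ^ t) u v ≠ 0) : ‖f u - f v‖ ≤ α * s * t := by
    refine (hf u (hB' hu) v (hB' hv)).2.trans ?_
    gcongr
    exact dist_le_of_walkMatrix_pow_ne_zero huv
  have hfar (u : V) (hu : u ∈ B') : #B' ≤ 2 * #{v ∈ B' | s * N ≤ ‖f u - f v‖} := by
    have hball : #{v ∈ B' | ¬ s * N ≤ ‖f u - f v‖} < d ^ N := by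
      refine (card_le_card fun v hv ↦ ?_).trans_lt
        (card_filter_dist_lt_lt_pow hconn (fun v ↦ (hreg v).le) hd N u)
      obtain ⟨hv, hlt⟩ := mem_filter.1 hv
      refine (mem_filter_univ v).2 (lt_of_not_ge fun hle ↦ hlt ?_)
      refine le_trans ?_ (hf u (hB' hu) v (hB' hv)).1
      gcongr
    have := card_filter_add_card_filter_not (s := B') fun v ↦ s * N ≤ ‖f u - f v‖
    lia
  have hle : s * N ≤ s * (8192 * (p * α * t)) :=
    calc s * N ≤ 32 * 16 ^ 2 * p * (α * s * t) :=
          hexp.le_of_near_of_far hB'_nonempty hW (by positivity) (by norm_num)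
            (fun u hu ↦ (hdeg u hu).trans_eq (by ring)) hp f (by positivity) (by positivity)
            hnear hfar
      _ = s * (8192 * (p * α * t)) := by ring
  exact le_of_mul_le_mul_left hle hs

theorem HasAbsSpectralGap.card_le_rpow_of_embedding (hgap : HasAbsSpectralGap G d γ)
    (hconn : G.Connected) (hreg : G.IsRegularOfDegree d) (hd : 2 ≤ d) (hγ : 0 ≤ γ) (hp : 1 ≤ p)
    (hα : 0 ≤ α) (hs : 0 < s) (f : V → lp (fun _ : ι ↦ ℝ) (ENNReal.ofReal p))
    (hf : ∀ u ∈ B, ∀ v ∈ B, s * G.dist u v ≤ ‖f u - f v‖ ∧ ‖f u - f v‖ ≤ α * s * G.dist u v)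
    {t : ℕ} (ht : 32 * γ ^ t ≤ B.dens) : #B ≤ 4 * d * (d : ℝ) ^ (8192 * (p * α * t)) := by
  set M := 8192 * (p * α * t)
  have hM : 0 ≤ M := by positivity
  have hd₁ : (1 : ℝ) ≤ d := by exact_mod_cast one_le_two.trans hd
  have hlt : #B < 4 * d ^ (⌊M⌋₊ + 1) := by
    by_contra! hN
    have := hgap.le_of_embedding hconn hreg hd hγ hp hα hs f hf ht hN
    push_cast at this
    exact (Nat.lt_floor_add_one M).not_ge this
  calc (#B : ℝ) ≤ 4 * d ^ (⌊M⌋₊ + 1) := by exact_mod_cast hlt.le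
    _ = 4 * d * (d : ℝ) ^ (⌊M⌋₊ : ℝ) := by rw [Real.rpow_natCast]; ring
    _ ≤ 4 * d * (d : ℝ) ^ M := by
        gcongr
        exact Nat.floor_le hM

end SpectralGap

-- The two bounds on `log (b / A)`, one decreasing and one increasing in `t`, are combined with
-- weights that eliminate `t`.
theorem le_mul_rpow_of_le_of_le {b A n γ d M q t : ℝ} (hb : 0 < b) (hA : 0 < A) (hn : 1 ≤ n)
    (hd : 1 < d) (hγ : 0 < γ) (hγ₁ : γ < 1) (hγd : 1 ≤ γ * d) (hM : 0 < M) (hq : 1 ≤ q)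
    (hmix : b ≤ A * (n * γ ^ t)) (hgrow : b ≤ A * d ^ (M * q * t)) :
    b ≤ A * n ^ (1 - 1 / (M + 1) * Real.log (1 / γ) / (q * Real.log d)) := by
  have hd₀ : 0 < d := by positivity
  have hn₀ : 0 < n := by positivity
  rw [one_div γ, Real.log_inv]
  set ℓ := Real.log d
  set L := -Real.log γ
  have hℓ : 0 < ℓ := Real.log_pos hd
  have hL : 0 < L := neg_pos.2 (Real.log_neg hγ hγ₁)
  have hLℓ : L ≤ ℓ := by
    have := Real.log_nonneg hγd
    rw [Real.log_mul hγ.ne' hd₀.ne'] at this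
    linarith
  have hlogn : 0 ≤ Real.log n := Real.log_nonneg hn
  set X := Real.log (b / A)
  have hX_mix : X ≤ Real.log n - t * L := by
    have := Real.log_le_log (div_pos hb hA) ((div_le_iff₀' hA).2 hmix)
    rw [Real.log_mul hn₀.ne' (Real.rpow_pos_of_pos hγ t).ne', Real.log_rpow hγ] at this
    linarith
  have hX_grow : X ≤ M * q * t * ℓ := by
    have := Real.log_le_log (div_pos hb hA) ((div_le_iff₀' hA).2 hgrow)
    rwa [Real.log_rpow hd₀] at this
  have hX : (M * q * ℓ + L) * X ≤ M * q * ℓ * Real.log n := by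
    have := mul_le_mul_of_nonneg_left hX_mix (by positivity : 0 ≤ M * q * ℓ)
    have := mul_le_mul_of_nonneg_left hX_grow hL.le
    linarith
  have hexponent : 1 / (M + 1) * L / (q * ℓ) ≤ L / (M * q * ℓ + L) := by
    rw [one_div_mul_eq_div, div_div]
    have : L ≤ q * ℓ := hLℓ.trans (le_mul_of_one_le_left hℓ.le hq)
    gcongr
    linarith
  rw [← div_le_iff₀' hA, ← Real.log_le_log_iff (div_pos hb hA) (by positivity),
    Real.log_rpow hn₀]
  calc X ≤ (1 - L / (M * q * ℓ + L)) * Real.log n := by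
        rw [one_sub_div (by positivity), add_sub_cancel_right, div_mul_eq_mul_div,
          le_div_iff₀' (by positivity)]
        exact hX
    _ ≤ (1 - 1 / (M + 1) * L / (q * ℓ)) * Real.log n := by gcongr

theorem exists_pow_le_dens_and_card_le {V : Type*} [Fintype V] {B : Finset V} (hB : B.Nonempty)
    {γ d : ℝ} (hγ : 0 < γ) (hγ₁ : γ < 1) (hγd : 1 ≤ γ * d) :
    ∃ t : ℕ, 32 * γ ^ t ≤ B.dens ∧ #B ≤ 32 * d * (Fintype.card V * γ ^ t) := by
  have hn : (0 : ℝ) < Fintype.card V := mod_cast Fintype.card_pos_iff.2 hB.to_type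
  have : (0 : ℝ) < B.dens := mod_cast hB.dens_pos
  have hdens_le : (B.dens : ℝ) ≤ 1 := mod_cast B.dens_le_one
  obtain ⟨k, hk_lt, hk_le⟩ :=
    exists_nat_pow_near_of_lt_one (x := (B.dens / 32 : ℝ)) (by positivity) (by linarith) hγ hγ₁
  refine ⟨k + 1, by linarith, ?_⟩
  calc (#B : ℝ) = 32 * (Fintype.card V * (B.dens / 32)) := by
        rw [nnratCast_dens]
        field_simp
    _ ≤ 32 * (Fintype.card V * (γ ^ k * (γ * d))) := by
        gcongr
        exact hk_le.trans (le_mul_of_one_le_right (by positivity) hγd)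
    _ = 32 * d * (Fintype.card V * γ ^ (k + 1)) := by ring

theorem expander_ramsey_upper_general {V : Type} [Fintype V] [DecidableEq V] {G : SimpleGraph V}
    [DecidableRel G.Adj] {d : ℕ} {γ : ℝ} (hconn : G.Connected) (hd : 2 ≤ d)
    (hreg : G.IsRegularOfDegree d) (hγ : 0 < γ) (hγ₁ : γ < 1) (hgap : HasAbsSpectralGap G d γ)
    {p α : ℝ} (hp : 1 ≤ p) (hα : 1 ≤ α) {ι : Type*} {B : Finset V}
    (hB : ∃ f : V → lp (fun _ : ι ↦ ℝ) (ENNReal.ofReal p), ∃ s : ℝ, 0 < s ∧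
      ∀ u ∈ B, ∀ v ∈ B, s * G.dist u v ≤ ‖f u - f v‖ ∧ ‖f u - f v‖ ≤ α * s * G.dist u v) :
    (#B : ℝ) ≤ 32 * d * (Fintype.card V : ℝ) ^
      (1 - 1 / 8193 * Real.log (1 / γ) / (p * α * Real.log d)) := by
  obtain ⟨f, s, hs, hf⟩ := hB
  rcases B.eq_empty_or_nonempty with rfl | ⟨u, hu⟩
  · simp only [card_empty, Nat.cast_zero]
    positivity
  have hB_pos : (0 : ℝ) < #B := mod_cast card_pos.2 ⟨u, hu⟩
  have hn : (1 : ℝ) ≤ Fintype.card V := mod_cast Fintype.card_pos_iff.2 ⟨u⟩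
  obtain ⟨w, huw⟩ : ∃ w, G.Adj u w := (G.degree_pos_iff_exists_adj u).1 (by rw [hreg u]; lia)
  have hγd : 1 ≤ γ * d := hgap.one_le_mul hγ.le huw
  obtain ⟨t, ht, hmix⟩ := exists_pow_le_dens_and_card_le ⟨u, hu⟩ hγ hγ₁ hγd
  have hgrow : (#B : ℝ) ≤ 32 * d * (d : ℝ) ^ (8192 * (p * α) * t) :=
    calc (#B : ℝ) ≤ 4 * d * (d : ℝ) ^ (8192 * (p * α * t)) :=
          hgap.card_le_rpow_of_embedding hconn hreg hd hγ.le hp (by positivity) hs f hf ht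
      _ ≤ 32 * d * (d : ℝ) ^ (8192 * (p * α) * t) := by
          rw [mul_assoc 8192]
          gcongr
          norm_num
  rw [show (8193 : ℝ) = 8192 + 1 by norm_num]
  exact le_mul_rpow_of_le_of_le hB_pos (by positivity) hn (mod_cast hd) hγ hγ₁ hγd (by norm_num)
    (one_le_mul_of_one_le_of_one_le hp hα) (by rwa [Real.rpow_natCast]) hgrow

/-- The metric Ramsey problem for expanders, upper bound: any subset of a `d`-regular
expander with spectral gap `γ` that `α`-embeds into `ℓ_p` has at most
`C·d·|V|^(1 - c·log(1/γ)/(p·α·log d))` points. -/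
theorem expander_ramsey_upper :
    ∃ c C : ℝ, 0 < c ∧ 0 < C ∧
      ∀ (V : Type) [Fintype V] [DecidableEq V] (G : SimpleGraph V) [DecidableRel G.Adj]
        (d : ℕ) (γ : ℝ),
        G.Connected → 3 ≤ d → G.IsRegularOfDegree d → 0 < γ → γ < 1 →
        HasAbsSpectralGap G d γ →
        ∀ (p α : ℝ), 1 ≤ p → 1 ≤ α →
          ∀ B : Finset V,
            (∃ f : V → lp (fun _ : ℕ => ℝ) (ENNReal.ofReal p), ∃ s : ℝ, 0 < s ∧
              ∀ u ∈ B, ∀ v ∈ B,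
                s * (G.dist u v : ℝ) ≤ ‖f u - f v‖ ∧
                  ‖f u - f v‖ ≤ α * s * (G.dist u v : ℝ)) →
            (B.card : ℝ) ≤ C * d * (Fintype.card V : ℝ) ^
              (1 - c * Real.log (1 / γ) / (p * α * Real.log d)) := by
  exact ⟨1 / 8193, 32, by norm_num, by norm_num,
    fun _ _ _ _ _ _ _ hconn hd hreg hγ hγ₁ hgap _ _ hp hα _ hB ↦
      expander_ramsey_upper_general hconn (by lia) hreg hγ hγ₁ hgap hp hα hB⟩
end
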